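/- Let C(x,y) = y₁·F₁(x) + Σ_{j=1}^{m} x_j q_j(y) + R(y) (i.e. F_i = 0 for 2 ≤ i ≤ h), where F₁ is a nonsingular indefinite integral quadratic form of rank r ≥ 5. Assume C has h-invariant h(C) ≥ 6, C is irreducible over ℚ, and for every prime p the equation C = 0 has a nonsingular p-adic zero. Then there exist c > 0, K > 0 and Y₀ such that for every Y ≥ Y₀ there is a finite set 𝒞_h(Y) ⊆ ℤ^h with ‖y‖_∞ ≤ K·Y for all y ∈ 𝒞_h(Y) and Σ_{y ∈ 𝒞_h(Y)} 𝔖(F_y) ≥ c·Y^h/ log Y. -/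

import Mathlib

open Matrix MvPolynomial

/-- The complete exponential sum `S_q(F) = Σ*_{a mod q} Σ_{b mod q} e(a·F(b)/q)` attached to
an integer-valued function `F` on `ℤ^m`. -/
noncomputable def expSum (m : ℕ) (F : (Fin m → ℤ) → ℤ) (q : ℕ) : ℂ :=
  ∑ a ∈ (Finset.range q).filter fun a => Nat.gcd a q = 1,
    ∑ b : Fin m → Fin q,
      Complex.exp (2 * (Real.pi : ℂ) * Complex.I * (a : ℂ) *
        ((F fun j => ((b j : ℕ) : ℤ)) : ℂ) / (q : ℂ))

/-- The singular series `𝔖(F) = Σ_{q ≥ 1} q^{-m} S_q(F)`. -/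
noncomputable def singSeries (m : ℕ) (F : (Fin m → ℤ) → ℤ) : ℂ :=
  ∑' q : ℕ, (q : ℂ) ^ (-(m : ℤ)) * expSum m F q

open Matrix MvPolynomial

namespace Cub

section char
variable {k : Type*} [CommRing k] [Fintype k] [DecidableEq k]
  {ι : Type*} [Fintype ι] [DecidableEq ι]

lemma sum_char_lin (ψ : AddChar k ℂ) (hψ : ψ.IsPrimitive) (c : ι → k) :
    ∑ b : ι → k, ψ (∑ j, b j * c j) =
      if c = 0 then (Fintype.card k : ℂ) ^ (Fintype.card ι) else 0 := by
  have h1 : ∀ b : ι → k, ψ (∑ j, b j * c j) = ∏ j, ψ (b j * c j) := fun b => by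
    induction (Finset.univ : Finset ι) using Finset.induction_on with
    | empty => simp
    | insert a s ha ih => rw [Finset.sum_insert ha, Finset.prod_insert ha,
        AddChar.map_add_eq_mul, ih]
  simp_rw [h1]
  have h2 : ∑ b : ι → k, ∏ j, ψ (b j * c j) = ∏ j, ∑ x : k, ψ (x * c j) := by
    rw [Finset.prod_univ_sum]; simp
  rw [h2]
  simp_rw [AddChar.sum_mulShift _ hψ]
  split_ifs with h
  · subst h; simp
  · obtain ⟨j, hj⟩ := Function.ne_iff.1 h
    refine Finset.prod_eq_zero (Finset.mem_univ j) ?_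
    simp at hj
    simp [hj]

lemma norm_sq_le_diff (ψ : AddChar k ℂ) (F : (ι → k) → k) :
    ‖∑ b, ψ (F b)‖ ^ 2 ≤ ∑ u : ι → k, ‖∑ b, ψ (F (b + u) - F b)‖ := by
  classical
  have h : (∑ b, ψ (F b)) * (starRingEnd ℂ) (∑ b, ψ (F b)) =
      ∑ u : ι → k, ∑ b, ψ (F (b + u) - F b) := by
    rw [map_sum, Finset.sum_mul_sum, Finset.sum_comm]
    rw [Finset.sum_comm (s := Finset.univ (α := ι → k))]
    rw [Finset.sum_comm]
    rw [Finset.sum_comm (s := Finset.univ (α := ι → k)) (f := fun u b => ψ (F (b + u) - F b))]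
    refine Finset.sum_congr rfl fun b _ => ?_
    rw [← Equiv.sum_comp (Equiv.addLeft b)]
    refine Finset.sum_congr rfl fun u _ => ?_
    rw [sub_eq_add_neg, AddChar.map_add_eq_mul, AddChar.map_neg_eq_conj]
    try rfl
  have h2 : ‖∑ b, ψ (F b)‖ ^ 2 = ‖∑ u : ι → k, ∑ b, ψ (F (b + u) - F b)‖ := by
    rw [← h, norm_mul, RCLike.norm_conj, sq]
  rw [h2]
  exact norm_sum_le _ _

lemma weyl_quad (ψ : AddChar k ℂ) (hψ : ψ.IsPrimitive) (F : (ι → k) → k)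
    (H : (ι → k) → ι → k) (c : (ι → k) → k)
    (hF : ∀ b u, F (b + u) - F b = ∑ j, b j * H u j + c u) :
    ‖∑ b, ψ (F b)‖ ^ 2 ≤ (Fintype.card k : ℝ) ^ (Fintype.card ι) *
      (Finset.univ.filter fun u => H u = 0).card := by
  refine (norm_sq_le_diff ψ F).trans ?_
  have : ∀ u : ι → k, ‖∑ b, ψ (F (b + u) - F b)‖ =
      if H u = 0 then (Fintype.card k : ℝ) ^ (Fintype.card ι) else 0 := by
    intro u
    simp_rw [hF, AddChar.map_add_eq_mul]
    rw [← Finset.sum_mul, sum_char_lin ψ hψ, norm_mul, AddChar.norm_apply]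
    split_ifs <;> simp
  simp_rw [this]
  rw [← Finset.sum_filter, Finset.sum_const, nsmul_eq_mul, mul_comm]

end char
end Cub

open Matrix MvPolynomial

namespace Cub

/-- An inhomogeneous integral quadratic polynomial evaluated in a commutative ring. -/
def qf {k : Type*} [CommRing k] {m : ℕ} (M : Matrix (Fin m) (Fin m) ℤ) (l : Fin m → ℤ) (c : ℤ)
    (x : Fin m → k) : k :=
  (∑ a, ∑ b, (M a b : k) * x a * x b) + ∑ j, (l j : k) * x j + (c : k)

variable {m : ℕ} (M : Matrix (Fin m) (Fin m) ℤ) (l : Fin m → ℤ) (c : ℤ)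

lemma qf_map {k k' : Type*} [CommRing k] [CommRing k'] (φ : k →+* k') (x : Fin m → k) :
    φ (qf M l c x) = qf M l c (fun j => φ (x j)) := by
  simp [qf, map_sum]

lemma qf_diff {k : Type*} [CommRing k] (b u : Fin m → k) :
    qf M l c (b + u) - qf M l c b =
      ∑ j, b j * (∑ i, ((M + Mᵀ) j i : k) * u i) + (qf M l c u - c) := by
  have h : ∀ (i j : Fin m), ((M + Mᵀ) j i : k) = (M j i : k) + (M i j : k) := by
    intro i j; simp
  simp only [qf, h, Pi.add_apply, Finset.mul_sum, add_mul, mul_add, Finset.sum_add_distrib]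
  have : ∑ x, ∑ i, b x * ((M i x : k) * u i) = ∑ x, ∑ i, (M x i : k) * u x * b i := by
    rw [Finset.sum_comm]
    exact Finset.sum_congr rfl fun i _ => Finset.sum_congr rfl fun j _ => by ring
  rw [this]
  have : ∑ x, ∑ i, b x * ((M x i : k) * u i) = ∑ x, ∑ i, (M x i : k) * b x * u i := 
    Finset.sum_congr rfl fun i _ => Finset.sum_congr rfl fun j _ => by ring
  rw [this]
  ring

/-- number of zeros modulo `q` -/
noncomputable def cnt (q : ℕ) : ℕ := Nat.card {b : Fin m → ZMod q // qf M l c b = 0}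

/-- normalised exponential sum -/
noncomputable def fS (q : ℕ) : ℂ := (q : ℂ) ^ (-(m : ℤ)) * expSum m (fun x => qf M l c x) q

/-- inner exponential sum -/
noncomputable def Tq (q : ℕ) [NeZero q] (a : ZMod q) : ℂ :=
  ∑ b : Fin m → ZMod q, ZMod.stdAddChar (a * qf M l c b)

lemma qf_cast (q : ℕ) (x : Fin m → ℤ) :
    qf M l c (fun j => ((x j : ℤ) : ZMod q)) = ((qf M l c x : ℤ) : ZMod q) := by
  have := qf_map M l c (Int.castRingHom (ZMod q)) x
  simpa using this.symm

lemma expSum_eq (q : ℕ) [NeZero q] : expSum m (fun x => qf M l c x) q =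
    ∑ a ∈ (Finset.range q).filter fun a => Nat.gcd a q = 1, Tq M l c q (a : ZMod q) := by
  unfold expSum Tq
  refine Finset.sum_congr rfl fun a _ => ?_
  refine Fintype.sum_bijective (fun (b : Fin m → Fin q) j => (((b j : ℕ) : ℤ) : ZMod q)) ?_ _ _ ?_
  · rw [Fintype.bijective_iff_injective_and_card]
    constructor
    · intro b b' h
      funext j
      have := congrFun h j
      simp only [Int.cast_natCast] at this
      rw [ZMod.natCast_eq_natCast_iff'] at this
      rw [Nat.mod_eq_of_lt (b j).2, Nat.mod_eq_of_lt (b' j).2] at this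
      exact Fin.ext this
    · simp [ZMod.card]
  · intro b
    rw [qf_cast]
    have : ((a : ZMod q) * ((qf M l c fun j => ((b j : ℕ) : ℤ) : ℤ) : ZMod q)) =
      (((a : ℤ) * (qf M l c fun j => ((b j : ℕ) : ℤ)) : ℤ) : ZMod q) := by push_cast; rfl
    rw [this, ZMod.stdAddChar_coe]
    congr 1
    push_cast
    ring

lemma sum_fiber {G H : Type*} [AddCommGroup G] [AddCommGroup H] [Fintype G] [Fintype H]
    (π : G →+ H) (hπ : Function.Surjective π) (F : H → ℂ) :
    (Fintype.card H : ℂ) * ∑ g, F (π g) = (Fintype.card G : ℂ) * ∑ h, F h := by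
  classical
  have key : ∀ h : H, (Finset.univ.filter fun g => π g = h).card =
      (Finset.univ.filter fun g => π g = 0).card := fun h =>
    AddMonoidHom.card_fiber_eq_of_mem_range π (hπ h) (hπ 0)
  have e : ∀ F : H → ℂ, ∑ g, F (π g) = (Finset.univ.filter fun g => π g = 0).card * ∑ h, F h := by
    intro F
    rw [← Finset.sum_fiberwise (s := Finset.univ) (g := π), Finset.mul_sum]
    refine Finset.sum_congr rfl fun h _ => ?_
    rw [← key h, ← nsmul_eq_mul, ← Finset.sum_const]
    refine Finset.sum_congr rfl fun g hg => ?_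
    rw [(Finset.mem_filter.1 hg).2]
  have h1 := e (fun _ => 1)
  simp at h1
  rw [e F, h1]; ring

lemma Tq_scale (d k a : ℕ) [NeZero d] [NeZero k] :
    Tq M l c (d * k) ((a * k : ℕ) : ZMod (d * k)) = (k : ℂ) ^ m * Tq M l c d (a : ZMod d) := by
  let π : ZMod (d * k) →+* ZMod d := ZMod.castHom (Dvd.intro k rfl) (ZMod d)
  let PI : (Fin m → ZMod (d * k)) →+ (Fin m → ZMod d) :=
    { toFun := fun b j => π (b j)
      map_zero' := by ext; simp
      map_add' := by intro x y; ext; simp }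
  have hs : Function.Surjective PI := by
    intro b
    have : ∀ j, ∃ x, π x = b j := fun j => ZMod.castHom_surjective (Dvd.intro k rfl) (b j)
    choose x hx using this
    exact ⟨x, funext hx⟩
  have h := sum_fiber PI hs (fun b => ZMod.stdAddChar ((a : ZMod d) * qf M l c b))
  have hpt : ∀ b : Fin m → ZMod (d * k),
      ZMod.stdAddChar ((a : ZMod d) * qf M l c (PI b)) =
      ZMod.stdAddChar (((a * k : ℕ) : ZMod (d * k)) * qf M l c b) := by
    intro b
    obtain ⟨n, hn⟩ := ZMod.intCast_surjective (qf M l c b)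
    have h1 : qf M l c (PI b) = ((n : ℤ) : ZMod d) := by
      have := qf_map M l c π b
      rw [← hn] at this
      rw [map_intCast] at this
      exact this.symm
    rw [h1, ← hn]
    have e1 : ((a : ZMod d) * (n : ZMod d)) = (((a : ℤ) * n : ℤ) : ZMod d) := by push_cast; rfl
    have e2 : (((a * k : ℕ) : ZMod (d * k)) * (n : ZMod (d * k))) =
      (((a : ℤ) * k * n : ℤ) : ZMod (d * k)) := by push_cast; rfl
    rw [e1, e2, ZMod.stdAddChar_coe, ZMod.stdAddChar_coe]
    congr 1
    have hd : (d : ℂ) ≠ 0 := Nat.cast_ne_zero.2 (NeZero.ne d)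
    have hk : (k : ℂ) ≠ 0 := Nat.cast_ne_zero.2 (NeZero.ne k)
    push_cast
    field_simp
  simp_rw [hpt] at h
  simp only [Fintype.card_fun, ZMod.card, Fintype.card_fin] at h
  have hd : (d : ℂ) ^ m ≠ 0 := pow_ne_zero _ (Nat.cast_ne_zero.2 (NeZero.ne d))
  push_cast at h
  rw [mul_pow, mul_assoc] at h
  have := mul_left_cancel₀ hd h
  unfold Tq
  push_cast
  exact this

lemma sum_Tq (q : ℕ) [NeZero q] : ∑ a ∈ Finset.range q, Tq M l c q (a : ZMod q) =
    (q : ℂ) * cnt M l c q := by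
  classical
  have h1 : ∑ a ∈ Finset.range q, Tq M l c q (a : ZMod q) = ∑ a : ZMod q, Tq M l c q a := by
    refine Finset.sum_bij (fun a _ => (a : ZMod q)) (by simp) ?_ ?_ (by simp)
    · intro a ha b hb hab
      rw [ZMod.natCast_eq_natCast_iff'] at hab
      rwa [Nat.mod_eq_of_lt (Finset.mem_range.1 ha), Nat.mod_eq_of_lt (Finset.mem_range.1 hb)] at hab
    · intro b _
      exact ⟨b.val, Finset.mem_range.2 (ZMod.val_lt b), by simp⟩
  rw [h1]
  unfold Tq
  rw [Finset.sum_comm]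
  simp_rw [AddChar.sum_mulShift _ (ZMod.isPrimitive_stdAddChar q)]
  rw [cnt, Nat.card_eq_fintype_card, Fintype.card_subtype, ZMod.card]
  simp only [Nat.cast_ite, Nat.cast_zero]
  rw [← Finset.sum_filter, Finset.sum_const, nsmul_eq_mul, mul_comm]

/-- the basic divisor sum identity -/
lemma sum_divisors_fS (q : ℕ) (hq : q ≠ 0) :
    ∑ d ∈ q.divisors, fS M l c d = (q : ℂ) * cnt M l c q / (q : ℂ) ^ m := by
  haveI : NeZero q := ⟨hq⟩
  have hq0 : (q : ℂ) ≠ 0 := Nat.cast_ne_zero.2 hq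
  rw [← sum_Tq, eq_div_iff (pow_ne_zero _ hq0), Finset.sum_mul]
  have h1 : ∀ d ∈ q.divisors, fS M l c d * (q : ℂ) ^ m =
      ∑ a ∈ (Finset.range d).filter (fun a => Nat.gcd a d = 1),
        Tq M l c q ((a * (q / d) : ℕ) : ZMod q) := by
    intro d hd
    obtain ⟨k, rfl⟩ := (Nat.mem_divisors.1 hd).1
    have hd0 : d ≠ 0 := left_ne_zero_of_mul hq
    have hk0 : k ≠ 0 := right_ne_zero_of_mul hq
    haveI : NeZero d := ⟨hd0⟩
    haveI : NeZero k := ⟨hk0⟩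
    rw [Nat.mul_div_cancel_left _ (Nat.pos_of_ne_zero hd0)]
    simp_rw [Tq_scale]
    rw [← Finset.mul_sum, ← expSum_eq, fS]
    have hd : (d : ℂ) ≠ 0 := Nat.cast_ne_zero.2 hd0
    rw [_root_.zpow_neg, zpow_natCast]
    push_cast
    rw [mul_pow]
    field_simp
  rw [Finset.sum_congr rfl h1, Finset.sum_sigma']
  refine Finset.sum_bij (fun x _ => x.2 * (q / x.1)) ?_ ?_ ?_ (fun _ _ => rfl)
  · rintro ⟨d, a⟩ h
    simp only [Finset.mem_sigma, Nat.mem_divisors, Finset.mem_filter, Finset.mem_range] at h ⊢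
    obtain ⟨⟨⟨k, rfl⟩, -⟩, h2, h3⟩ := h
    rw [Nat.mul_div_cancel_left _ (by omega)]
    exact Nat.mul_lt_mul_of_pos_right h2 (Nat.pos_of_ne_zero (right_ne_zero_of_mul hq))
  · rintro ⟨d, a⟩ h ⟨d', a'⟩ h' e
    simp only [Finset.mem_sigma, Nat.mem_divisors, Finset.mem_filter, Finset.mem_range] at h h' e
    obtain ⟨⟨⟨k, hk⟩, -⟩, h2, h3⟩ := h
    obtain ⟨⟨⟨k', hk'⟩, -⟩, h2', h3'⟩ := h'
    have e1 : q / d = k := by rw [hk]; exact Nat.mul_div_cancel_left _ (by omega)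
    have e2 : q / d' = k' := by rw [hk']; exact Nat.mul_div_cancel_left _ (by omega)
    rw [e1, e2] at e
    have g1 : Nat.gcd (a * k) q = k := by rw [hk, Nat.gcd_mul_right, h3, one_mul]
    have g2 : Nat.gcd (a' * k') q = k' := by rw [hk', Nat.gcd_mul_right, h3', one_mul]
    have hkk : k = k' := by rw [← g1, e, g2]
    subst hkk
    have hk0 : k ≠ 0 := by rintro rfl; simp at hk; exact hq hk
    have : d = d' := Nat.eq_of_mul_eq_mul_right (Nat.pos_of_ne_zero hk0) (hk.symm.trans hk')
    subst this
    have : a = a' := Nat.eq_of_mul_eq_mul_right (Nat.pos_of_ne_zero hk0) e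
    subst this
    rfl
  · intro a ha
    have ha' := Finset.mem_range.1 ha
    have hg : 0 < Nat.gcd a q := Nat.gcd_pos_of_pos_right _ (by omega)
    have hgq := Nat.gcd_dvd_right a q
    have hga := Nat.gcd_dvd_left a q
    refine ⟨⟨q / Nat.gcd a q, a / Nat.gcd a q⟩, ?_, ?_⟩
    · simp only [Finset.mem_sigma, Nat.mem_divisors, Finset.mem_filter, Finset.mem_range]
      refine ⟨⟨Nat.div_dvd_of_dvd hgq, hq⟩, Nat.div_lt_div_of_lt_of_dvd hgq ha', ?_⟩
      exact Nat.coprime_div_gcd_div_gcd hg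
    · simp only
      rw [Nat.div_div_self hgq hq]
      exact Nat.div_mul_cancel hga

end Cub

open Matrix MvPolynomial

namespace Cub
variable {m : ℕ} (M : Matrix (Fin m) (Fin m) ℤ) (l : Fin m → ℤ) (c : ℤ)

lemma fS_zero : fS M l c 0 = 0 := by simp [fS, expSum]

lemma fS_im (q : ℕ) : (fS M l c q).im = 0 := by
  induction q using Nat.strong_induction_on with
  | _ q ih =>
    rcases eq_or_ne q 0 with rfl | hq
    · simp [fS_zero]
    have h := sum_divisors_fS M l c q hq
    rw [← Nat.insert_self_properDivisors hq, Finset.sum_insert Nat.self_notMem_properDivisors, add_comm] at h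
    have h' := congrArg Complex.im h
    rw [Complex.add_im, Complex.im_sum,
      Finset.sum_eq_zero (fun d hd => ih d (Nat.mem_properDivisors.1 hd).2), zero_add] at h'
    rw [h']
    have : (q : ℂ) * cnt M l c q / (q : ℂ) ^ m = (((q : ℝ) * cnt M l c q / (q : ℝ) ^ m : ℝ) : ℂ) := by
      push_cast; rfl
    rw [this, Complex.ofReal_im]

noncomputable def fR (q : ℕ) : ℝ := (fS M l c q).re

lemma fS_eq (q : ℕ) : fS M l c q = (fR M l c q : ℂ) :=
  Complex.ext rfl (by rw [fS_im, Complex.ofReal_im])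

lemma fR_zero : fR M l c 0 = 0 := by simp [fR, fS_zero]

lemma sum_divisors_fR (q : ℕ) (hq : q ≠ 0) :
    ∑ d ∈ q.divisors, fR M l c d = (q : ℝ) * cnt M l c q / (q : ℝ) ^ m := by
  have h := sum_divisors_fS M l c q hq
  simp_rw [fS_eq] at h
  apply Complex.ofReal_injective
  push_cast
  exact h

lemma cnt_mul (a b : ℕ) (hab : Nat.Coprime a b) :
    cnt M l c (a * b) = cnt M l c a * cnt M l c b := by
  unfold cnt
  rw [← Nat.card_prod]
  let e := ZMod.chineseRemainder hab
  have key : ∀ x : Fin m → ZMod (a * b), e (qf M l c x) =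
      (qf M l c (fun j => (e (x j)).1), qf M l c (fun j => (e (x j)).2)) := by
    intro x
    apply Prod.ext
    · exact qf_map M l c ((RingHom.fst _ _).comp (e : ZMod (a*b) →+* ZMod a × ZMod b)) x
    · exact qf_map M l c ((RingHom.snd _ _).comp (e : ZMod (a*b) →+* ZMod a × ZMod b)) x
  refine Nat.card_congr
    { toFun := fun x => (⟨fun j => (e (x.1 j)).1, ?_⟩, ⟨fun j => (e (x.1 j)).2, ?_⟩)
      invFun := fun y => ⟨fun j => e.symm (y.1.1 j, y.2.1 j), ?_⟩
      left_inv := ?_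
      right_inv := ?_ }
  · have := key x.1; rw [x.2, map_zero] at this; exact (congrArg Prod.fst this).symm
  · have := key x.1; rw [x.2, map_zero] at this; exact (congrArg Prod.snd this).symm
  · apply e.injective
    rw [key, map_zero]
    simp only [RingEquiv.apply_symm_apply]
    rw [y.1.2, y.2.2]; rfl
  · intro x; ext j; simp
  · intro y; ext j <;> simp

open ArithmeticFunction in
lemma fR_mul (a b : ℕ) (hab : Nat.Coprime a b) :
    fR M l c (a * b) = fR M l c a * fR M l c b := by
  let f : ArithmeticFunction ℝ := ⟨fR M l c, fR_zero M l c⟩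
  let g : ArithmeticFunction ℝ := ⟨fun q => (q : ℝ) * cnt M l c q / (q : ℝ) ^ m, by simp⟩
  have hfg : f * (zeta : ArithmeticFunction ℝ) = g := by
    ext q
    rcases eq_or_ne q 0 with rfl | hq
    · simp
    rw [coe_mul_zeta_apply]
    exact sum_divisors_fR M l c q hq
  have hg : g.IsMultiplicative := by
    constructor
    · show ((1 : ℕ) : ℝ) * cnt M l c 1 / ((1:ℕ) : ℝ) ^ m = 1
      have : cnt M l c 1 = 1 := by
        unfold cnt
        have : Unique (ZMod 1) := inferInstanceAs (Unique (Fin 1))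
        rw [Nat.card_eq_one_iff_unique]
        refine ⟨⟨fun x y => Subtype.ext (Subsingleton.elim _ _)⟩, ⟨⟨0, Subsingleton.elim _ _⟩⟩⟩
      simp [this]
    · intro a b hab
      show ((a * b : ℕ) : ℝ) * cnt M l c (a * b) / ((a * b : ℕ) : ℝ) ^ m =
        (a : ℝ) * cnt M l c a / (a : ℝ) ^ m * ((b : ℝ) * cnt M l c b / (b : ℝ) ^ m)
      rw [cnt_mul M l c a b hab]
      push_cast
      rw [mul_pow]; rw [div_mul_div_comm]; congr 1; ring
  have hf : f = g * ((moebius : ArithmeticFunction ℤ) : ArithmeticFunction ℝ) := by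
    rw [← hfg, mul_assoc, coe_zeta_mul_coe_moebius, mul_one]
  have hm : f.IsMultiplicative := by
    rw [hf]
    exact hg.mul isMultiplicative_moebius.intCast
  exact hm.2 hab

lemma fR_one : fR M l c 1 = 1 := by
  have h := sum_divisors_fR M l c 1 one_ne_zero
  have : cnt M l c 1 = 1 := by
    unfold cnt
    have : Unique (ZMod 1) := inferInstanceAs (Unique (Fin 1))
    rw [Nat.card_eq_one_iff_unique]
    refine ⟨⟨fun x y => Subtype.ext (Subsingleton.elim _ _)⟩, ⟨⟨0, Subsingleton.elim _ _⟩⟩⟩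
  simpa [this] using h

lemma sum_fR_pow (hm : 0 < m) (p : ℕ) (hp : p.Prime) (k : ℕ) :
    ∑ e ∈ Finset.range (k + 1), fR M l c (p ^ e) =
      cnt M l c (p ^ k) / (p : ℝ) ^ (k * (m - 1)) := by
  have h := sum_divisors_fR M l c (p ^ k) (pow_ne_zero _ hp.ne_zero)
  rw [Nat.sum_divisors_prime_pow hp] at h
  rw [h]
  obtain ⟨m', rfl⟩ : ∃ m', m = m' + 1 := ⟨m - 1, by omega⟩
  have hp0 : (p : ℝ) ≠ 0 := Nat.cast_ne_zero.2 hp.ne_zero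
  push_cast
  try rw [Nat.add_sub_cancel]
  rw [pow_succ, ← pow_mul]
  field_simp

/-- kernel count from a rank certificate -/
lemma ker_count {m r : ℕ} (A : Matrix (Fin m) (Fin m) ℤ) (W : Matrix (Fin r) (Fin m) ℤ)
    (V : Matrix (Fin m) (Fin r) ℤ) (D : ℤ) (hW : W * A * V = D • (1 : Matrix (Fin r) (Fin r) ℤ))
    (q : ℕ) [NeZero q] :
    q ^ r * (Finset.univ.filter fun u : Fin m → ZMod q =>
        (A.map (Int.cast : ℤ → ZMod q)).mulVec u = 0).card ≤
      (Finset.univ.filter fun t : ZMod q => (D : ZMod q) * t = 0).card ^ r * q ^ m := by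
  classical
  set A' := A.map (Int.cast : ℤ → ZMod q)
  set W' := W.map (Int.cast : ℤ → ZMod q)
  set V' := V.map (Int.cast : ℤ → ZMod q)
  have hW' : W' * A' * V' = (D : ZMod q) • (1 : Matrix (Fin r) (Fin r) (ZMod q)) := by
    have h := congrArg (fun X => X.map (Int.castRingHom (ZMod q))) hW
    simp only [Matrix.map_mul] at h
    rw [show (W.map (Int.castRingHom (ZMod q))) = W' from rfl,
      show (A.map (Int.castRingHom (ZMod q))) = A' from rfl,
      show (V.map (Int.castRingHom (ZMod q))) = V' from rfl] at h
    rw [h]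
    ext i j
    simp only [Matrix.map_apply, Matrix.smul_apply, Matrix.one_apply]
    split_ifs <;> simp
  set S := (Finset.univ : Finset (Fin r → ZMod q)) ×ˢ
    (Finset.univ.filter fun u : Fin m → ZMod q => A'.mulVec u = 0)
  have hS : S.card = q ^ r * (Finset.univ.filter fun u : Fin m → ZMod q => A'.mulVec u = 0).card := by
    rw [Finset.card_product]; simp [ZMod.card]
  rw [← hS]
  set φ : (Fin r → ZMod q) × (Fin m → ZMod q) → (Fin m → ZMod q) := fun x => V'.mulVec x.1 + x.2
  set Z := (Finset.univ.filter fun t : ZMod q => (D : ZMod q) * t = 0)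
  have h1 := Finset.card_le_mul_card_image (f := φ) S (Z.card ^ r) ?_
  · refine h1.trans (Nat.mul_le_mul_left _ ?_)
    refine (Finset.card_le_univ _).trans ?_
    simp [ZMod.card]
  · intro z hz
    obtain ⟨x0, hx0, rfl⟩ := Finset.mem_image.1 hz
    have : Z.card ^ r = (Fintype.piFinset fun _ : Fin r => Z).card := by simp
    rw [this]
    refine Finset.card_le_card_of_injOn (fun x => x.1 - x0.1) ?_ ?_
    · intro x hx
      simp only [Finset.coe_filter, Set.mem_ofPred_eq, S, Finset.mem_product, Finset.mem_filter,
        Finset.mem_univ, true_and] at hx hx0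
      simp only [Finset.mem_coe, Fintype.mem_piFinset]
      intro i
      simp only [Z, Finset.mem_filter, Finset.mem_univ, true_and]
      have e : V'.mulVec (x.1 - x0.1) = x0.2 - x.2 := by
        rw [Matrix.mulVec_sub]
        have := hx.2
        simp only [φ] at this
        rw [sub_eq_sub_iff_add_eq_add, this, add_comm]
      have e2 : A'.mulVec (V'.mulVec (x.1 - x0.1)) = 0 := by
        rw [e, Matrix.mulVec_sub, hx0, hx.1, sub_zero]
      have e3 : (W' * A' * V').mulVec (x.1 - x0.1) = 0 := by
        rw [← Matrix.mulVec_mulVec, ← Matrix.mulVec_mulVec, e2, Matrix.mulVec_zero]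
      rw [hW', Matrix.smul_mulVec, Matrix.one_mulVec] at e3
      exact congrFun e3 i
    · intro x hx y hy hxy
      simp only [Finset.coe_filter, Set.mem_ofPred_eq] at hx hy
      have e1 : x.1 = y.1 := by simpa using hxy
      have e2 := hx.2.trans hy.2.symm
      simp only [φ, e1] at e2
      exact Prod.ext e1 (add_left_cancel e2)

lemma card_ann_le (D : ℤ) (hD : D ≠ 0) (q : ℕ) [NeZero q] :
    (Finset.univ.filter fun t : ZMod q => (D : ZMod q) * t = 0).card ≤ D.natAbs := by
  classical
  refine le_trans (Finset.card_le_card ?_)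
    (IsAddCyclic.card_nsmul_eq_zero_le (α := ZMod q) (n := D.natAbs) (Int.natAbs_pos.2 hD))
  intro t ht
  simp only [Finset.mem_filter, Finset.mem_univ, true_and] at ht ⊢
  rw [nsmul_eq_mul]
  have : ((D.natAbs : ℕ) : ZMod q) = ((D.natAbs : ℤ) : ZMod q) := by simp
  rw [this]
  rcases Int.natAbs_eq D with h | h
  · rw [← h]; exact ht
  · have h' : ((D.natAbs : ℤ)) = -D := by omega
    rw [h']; push_cast; rw [neg_mul, ht, neg_zero]

lemma card_ann_coprime (D : ℤ) (q : ℕ) [NeZero q] (hD : IsCoprime D (q : ℤ)) :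
    (Finset.univ.filter fun t : ZMod q => (D : ZMod q) * t = 0).card ≤ 1 := by
  obtain ⟨a, b, hab⟩ := hD
  rw [Finset.card_le_one]
  have : ∀ t : ZMod q, (D : ZMod q) * t = 0 → t = 0 := by
    intro t ht
    have h := congrArg (Int.cast : ℤ → ZMod q) hab
    push_cast at h
    rw [ZMod.natCast_self, mul_zero, add_zero] at h
    calc t = (a * D) * t := by rw [h, one_mul]
      _ = 0 := by rw [mul_assoc, ht, mul_zero]
  intro a ha b hb
  simp only [Finset.mem_filter, Finset.mem_univ, true_and] at ha hb
  rw [this a ha, this b hb]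

/-- Bound for the normalised exponential sum. -/
lemma fR_sq_le (W : Matrix (Fin 5) (Fin m) ℤ)
    (V : Matrix (Fin m) (Fin 5) ℤ) (D : ℤ)
    (hW : W * (M + Mᵀ) * V = D • (1 : Matrix (Fin 5) (Fin 5) ℤ)) (q : ℕ) [NeZero q] (G : ℕ)
    (hG : (Finset.univ.filter fun t : ZMod q => (D : ZMod q) * t = 0).card ≤ G) :
    fR M l c q ^ 2 ≤ (G : ℝ) ^ 5 / (q : ℝ) ^ 3 := by
  classical
  have hq0 : (0 : ℝ) < q := Nat.cast_pos.2 (Nat.pos_of_ne_zero (NeZero.ne q))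
  set κ := (Finset.univ.filter fun u : Fin m → ZMod q =>
        ((M + Mᵀ).map (Int.cast : ℤ → ZMod q)).mulVec u = 0).card with hκ
  have hT : ∀ a : ℕ, Nat.gcd a q = 1 → ‖Tq M l c q (a : ZMod q)‖ ^ 2 ≤ (q : ℝ) ^ m * κ := by
    intro a ha
    have hu : IsUnit (a : ZMod q) := (ZMod.isUnit_iff_coprime a q).2 ha
    have := weyl_quad (ZMod.stdAddChar (N := q)) (ZMod.isPrimitive_stdAddChar q)
      (fun b : Fin m → ZMod q => (a : ZMod q) * qf M l c b)
      (fun u => fun j => (a : ZMod q) * (((M + Mᵀ).map (Int.cast : ℤ → ZMod q)).mulVec u) j)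
      (fun u => (a : ZMod q) * (qf M l c u - c)) ?_
    · refine this.trans ?_
      simp only [ZMod.card, Fintype.card_fin]
      refine mul_le_mul_of_nonneg_left ?_ (by positivity)
      rw [Nat.cast_le, hκ]
      refine Finset.card_le_card ?_
      intro u hu'
      simp only [Finset.mem_filter, Finset.mem_univ, true_and] at hu' ⊢
      funext j
      have := congrFun hu' j
      exact (hu.mul_right_eq_zero).1 this
    · intro b u
      rw [← mul_sub, qf_diff, mul_add, Finset.mul_sum]
      congr 1
      refine Finset.sum_congr rfl fun j _ => ?_
      simp only [Matrix.mulVec, dotProduct, Matrix.map_apply]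
      ring
  have hT' : ∀ a : ℕ, Nat.gcd a q = 1 → ‖Tq M l c q (a : ZMod q)‖ ≤ √((q : ℝ) ^ m * κ) :=
    fun a ha => Real.le_sqrt_of_sq_le (hT a ha)
  have hE : ‖expSum m (fun x => qf M l c x) q‖ ≤ q * √((q : ℝ) ^ m * κ) := by
    rw [expSum_eq]
    refine (norm_sum_le _ _).trans ?_
    refine (Finset.sum_le_card_nsmul _ _ (√((q : ℝ) ^ m * κ)) ?_).trans ?_
    · intro a ha
      exact hT' a (Finset.mem_filter.1 ha).2
    · rw [nsmul_eq_mul]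
      refine mul_le_mul_of_nonneg_right ?_ (Real.sqrt_nonneg _)
      rw [Nat.cast_le]
      exact (Finset.card_filter_le _ _).trans (by simp)
  have hf : fR M l c q ^ 2 = ‖fS M l c q‖ ^ 2 := by
    rw [fS_eq, Complex.norm_real, Real.norm_eq_abs, sq_abs]
  have hk := ker_count (M + Mᵀ) W V D hW q
  rw [← hκ] at hk
  have hk' : (q : ℝ) ^ 5 * κ ≤ (G : ℝ) ^ 5 * (q : ℝ) ^ m := by
    have h2 : q ^ 5 * κ ≤ G ^ 5 * q ^ m :=
      hk.trans (Nat.mul_le_mul_right _ (Nat.pow_le_pow_left hG 5))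
    exact_mod_cast h2
  rw [hf, fS, norm_mul, mul_pow, _root_.zpow_neg, zpow_natCast, norm_inv, norm_pow,
    Complex.norm_natCast]
  have h3 : ‖expSum m (fun x => qf M l c x) q‖ ^ 2 ≤ (q : ℝ) ^ 2 * ((q : ℝ) ^ m * κ) := by
    calc _ ≤ (q * √((q : ℝ) ^ m * κ)) ^ 2 := by gcongr
      _ = _ := by rw [mul_pow, Real.sq_sqrt (by positivity)]
  rw [le_div_iff₀ (by positivity), inv_pow, inv_mul_eq_div, div_mul_eq_mul_div,
    div_le_iff₀ (by positivity)]
  calc _ ≤ (q : ℝ) ^ 2 * ((q : ℝ) ^ m * κ) * (q : ℝ) ^ 3 := by gcongr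
    _ = (q : ℝ) ^ m * ((q : ℝ) ^ 5 * κ) := by ring
    _ ≤ (q : ℝ) ^ m * ((G : ℝ) ^ 5 * (q : ℝ) ^ m) := by gcongr
    _ = _ := by ring

end Cub

open Matrix MvPolynomial

namespace Cub

/-- `p^{-3/2}` -/
noncomputable def rr (p : ℕ) : ℝ := (√((p : ℝ) ^ 3))⁻¹

lemma rr_nonneg (p : ℕ) : 0 ≤ rr p := by unfold rr; positivity

lemma rr_sq (p : ℕ) : rr p ^ 2 = ((p : ℝ) ^ 3)⁻¹ := by
  unfold rr; rw [inv_pow, Real.sq_sqrt (by positivity)]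

lemma rr_le (p : ℕ) (hp : 2 ≤ p) : rr p ≤ 1 / 2 := by
  apply abs_le_of_sq_le_sq' _ (by norm_num) |>.2
  rw [rr_sq]
  have : (2 : ℝ) ^ 3 ≤ (p : ℝ) ^ 3 := by gcongr; exact_mod_cast hp
  rw [inv_le_comm₀ (by positivity) (by norm_num)]
  refine le_trans ?_ this; norm_num

lemma rr_summable : Summable rr := by
  have h : rr = fun n : ℕ => ((n : ℝ) ^ (3 / 2 : ℝ))⁻¹ := by
    funext n
    unfold rr
    rw [Real.sqrt_eq_rpow, ← Real.rpow_natCast, ← Real.rpow_mul (by positivity)]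
    norm_num
  rw [h]
  exact Real.summable_nat_rpow_inv.2 (by norm_num)

lemma exists_P0 (B : ℕ) : ∃ P0 : ℕ, B ≤ P0 ∧ ∀ t : Finset ℕ, (∀ p ∈ t, P0 < p) →
    ∑ p ∈ t, 2 * rr p ≤ 1 / 2 := by
  obtain ⟨s, hs⟩ := summable_iff_vanishing_norm.1 (rr_summable.mul_left 2) (1 / 2) (by norm_num)
  refine ⟨B + s.sup id, by omega, fun t ht => ?_⟩
  refine (le_abs_self _).trans (hs t ?_).le
  rw [Finset.disjoint_left]
  intro p hp hps
  have := ht p hp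
  have h2 : p ≤ s.sup id := Finset.le_sup (f := id) hps
  omega

lemma one_sub_sum_le_prod {ι : Type*} (s : Finset ι) (x : ι → ℝ) (h0 : ∀ i ∈ s, 0 ≤ x i)
    (h1 : ∀ i ∈ s, x i ≤ 1) : 1 - ∑ i ∈ s, x i ≤ ∏ i ∈ s, (1 - x i) ∧ ∏ i ∈ s, (1 - x i) ≤ 1 := by
  classical
  induction s using Finset.induction_on with
  | empty => simp
  | insert a s ha ih =>
    obtain ⟨i1, i2⟩ := ih (fun i hi => h0 i (Finset.mem_insert_of_mem hi))
      (fun i hi => h1 i (Finset.mem_insert_of_mem hi))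
    rw [Finset.sum_insert ha, Finset.prod_insert ha]
    have a0 := h0 a (Finset.mem_insert_self _ _)
    have a1 := h1 a (Finset.mem_insert_self _ _)
    have p0 : 0 ≤ ∏ i ∈ s, (1 - x i) := Finset.prod_nonneg fun i hi => by
      have := h1 i (Finset.mem_insert_of_mem hi); linarith
    constructor <;> nlinarith

variable {m : ℕ} (M : Matrix (Fin m) (Fin m) ℤ) (l : Fin m → ℤ) (c : ℤ)

lemma singSeries_eq : singSeries m (fun x => qf M l c x) = ((∑' q, fR M l c q : ℝ) : ℂ) := by
  rw [Complex.ofReal_tsum]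
  unfold singSeries
  congr 1
  funext q
  rw [← fS_eq]
  rfl

lemma fR_summable (W : Matrix (Fin 5) (Fin m) ℤ)
    (V : Matrix (Fin m) (Fin 5) ℤ) (D : ℤ) (hD : D ≠ 0)
    (hW : W * (M + Mᵀ) * V = D • (1 : Matrix (Fin 5) (Fin 5) ℤ)) :
    Summable (fun q => ‖fR M l c q‖) := by
  refine Summable.of_nonneg_of_le (fun _ => norm_nonneg _) (fun q => ?_)
    (rr_summable.mul_left (√((D.natAbs : ℝ) ^ 5)))
  rcases Nat.eq_zero_or_pos q with rfl | hq
  · simp [fR_zero, rr]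
  haveI : NeZero q := ⟨hq.ne'⟩
  have := fR_sq_le M l c W V D hW q D.natAbs (card_ann_le D hD q)
  rw [Real.norm_eq_abs]
  apply abs_le_of_sq_le_sq _ (mul_nonneg (Real.sqrt_nonneg _) (rr_nonneg _))
  rw [mul_pow, Real.sq_sqrt (by positivity), rr_sq]
  exact this

lemma sum_pow_ge (W : Matrix (Fin 5) (Fin m) ℤ)
    (V : Matrix (Fin m) (Fin 5) ℤ) (D : ℤ)
    (hW : W * (M + Mᵀ) * V = D • (1 : Matrix (Fin 5) (Fin 5) ℤ)) (p : ℕ) (hp : p.Prime)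
    (hpD : ¬ (p : ℤ) ∣ D) (k : ℕ) :
    1 - 2 * rr p + 2 * rr p ^ (k + 1) ≤ ∑ e ∈ Finset.range (k + 1), fR M l c (p ^ e) := by
  have hr := rr_le p hp.two_le
  have hr0 := rr_nonneg p
  induction k with
  | zero => simp [fR_one]
  | succ k ih =>
    rw [Finset.sum_range_succ]
    haveI : NeZero (p ^ (k + 1)) := ⟨pow_ne_zero _ hp.ne_zero⟩
    have hco : IsCoprime D ((p ^ (k + 1) : ℕ) : ℤ) := by
      push_cast
      apply IsCoprime.pow_right
      exact ((Nat.prime_iff_prime_int.1 hp).coprime_iff_not_dvd.2 hpD).symm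
    have h1 := fR_sq_le M l c W V D hW (p ^ (k + 1)) 1 (card_ann_coprime D _ hco)
    have h2 : |fR M l c (p ^ (k + 1))| ≤ rr p ^ (k + 1) := by
      apply abs_le_of_sq_le_sq _ (by positivity)
      refine h1.trans (le_of_eq ?_)
      rw [← pow_mul, mul_comm (k + 1) 2, pow_mul, rr_sq]
      push_cast
      rw [inv_pow, ← pow_mul, ← pow_mul, mul_comm 3]
      simp
    have h3 := (abs_le.1 h2).1
    have h4 : rr p ^ (k + 1 + 1) = rr p ^ (k + 1) * rr p := pow_succ _ _
    have h5 : 0 ≤ rr p ^ (k + 1) := by positivity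
    nlinarith

lemma le_tsum_of_le_partial (f : ℕ → ℝ) (hf : Summable f) (b : ℝ) (k0 : ℕ)
    (h : ∀ k ≥ k0, b ≤ ∑ e ∈ Finset.range (k + 1), f e) : b ≤ ∑' e, f e := by
  refine ge_of_tendsto hf.hasSum.tendsto_sum_nat ?_
  filter_upwards [Filter.eventually_ge_atTop (k0 + 1)] with n hn
  obtain ⟨k, rfl⟩ : ∃ k, n = k + 1 := ⟨n - 1, by omega⟩
  exact h k (by omega)

/-- Lower bound for the singular series. -/
lemma sing_lower (hm : 0 < m) (P0 : ℕ) (hP0 : ∀ t : Finset ℕ, (∀ p ∈ t, P0 < p) →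
    ∑ p ∈ t, 2 * rr p ≤ 1 / 2) (W : Matrix (Fin 5) (Fin m) ℤ)
    (V : Matrix (Fin m) (Fin 5) ℤ) (D : ℤ) (hD0 : D ≠ 0)
    (hW : W * (M + Mᵀ) * V = D • (1 : Matrix (Fin 5) (Fin 5) ℤ))
    (ℓ : ℕ) (hℓ : ℓ.Prime) (hℓP : P0 < ℓ) (hD : ∀ p : ℕ, p.Prime → (p : ℤ) ∣ D → p ≤ P0 ∨ p = ℓ)
    (J : ℕ) (h1 : ∀ p : ℕ, p.Prime → p ≤ P0 → ∀ k ≥ J,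
      p ^ ((k - J) * (m - 1)) ≤ cnt M l c (p ^ k))
    (ω : ℝ) (hω : 0 ≤ ω) (h2 : ∀ k ≥ 1, ω * (ℓ : ℝ) ^ (k * (m - 1)) ≤ cnt M l c (ℓ ^ k)) :
    ω * (1 / 2) * ∏ p ∈ (Finset.range (P0 + 1)).filter Nat.Prime, ((p : ℝ) ^ (J * (m - 1)))⁻¹ ≤
      (singSeries m (fun x => qf M l c x)).re := by
  classical
  rw [singSeries_eq, Complex.ofReal_re]
  have hsum := fR_summable M l c W V D hD0 hW
  have hsp : ∀ p : ℕ, p.Prime → Summable (fun e => fR M l c (p ^ e)) := fun p hp =>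
    (hsum.of_norm).comp_injective (Nat.pow_right_injective hp.two_le)
  set E : ℕ → ℝ := fun p => ∑' e, fR M l c (p ^ e) with hEdef
  have hEs : ∀ p : ℕ, p.Prime → p ≤ P0 → ((p : ℝ) ^ (J * (m - 1)))⁻¹ ≤ E p := by
    intro p hp hpP
    refine le_tsum_of_le_partial _ (hsp p hp) _ J fun k hk => ?_
    rw [sum_fR_pow M l c hm p hp]
    have hp0 : (0 : ℝ) < p := Nat.cast_pos.2 hp.pos
    rw [le_div_iff₀ (by positivity), inv_mul_le_iff₀ (by positivity)]
    have h := h1 p hp hpP k hk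
    have h' : (p : ℝ) ^ ((k - J) * (m - 1)) ≤ cnt M l c (p ^ k) := by exact_mod_cast h
    calc (p : ℝ) ^ (k * (m - 1)) = (p : ℝ) ^ (J * (m - 1)) * (p : ℝ) ^ ((k - J) * (m - 1)) := by
          rw [← pow_add, ← add_mul, Nat.add_sub_cancel' hk]
      _ ≤ _ := by gcongr
  have hEl : ω ≤ E ℓ := by
    refine le_tsum_of_le_partial _ (hsp ℓ hℓ) _ 1 fun k hk => ?_
    rw [sum_fR_pow M l c hm ℓ hℓ]
    have hp0 : (0 : ℝ) < ℓ := Nat.cast_pos.2 hℓ.pos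
    rw [le_div_iff₀ (by positivity)]
    exact h2 k hk
  have hEo : ∀ p : ℕ, p.Prime → P0 < p → p ≠ ℓ → 1 - 2 * rr p ≤ E p := by
    intro p hp hpP hpl
    refine le_tsum_of_le_partial _ (hsp p hp) _ 0 fun k _ => ?_
    have := sum_pow_ge M l c W V D hW p hp (fun h => by
      rcases hD p hp h with h | h <;> omega) k
    have h5 : 0 ≤ rr p ^ (k + 1) := pow_nonneg (rr_nonneg p) _
    linarith
  have hE' : Filter.Tendsto (fun n : ℕ => ∏ p ∈ n.primesBelow, E p) Filter.atTop
      (nhds (∑' n, fR M l c n)) := EulerProduct.eulerProduct (f := fR M l c) (fR_one M l c)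
    (fun {a b} hab => fR_mul M l c a b hab) hsum (fR_zero M l c)
  refine ge_of_tendsto hE' ?_
  filter_upwards [Filter.eventually_ge_atTop (ℓ + 1)] with n hn
  set S := n.primesBelow
  set S1 := (Finset.range (P0 + 1)).filter Nat.Prime
  set S2 := (S \ S1).erase ℓ
  have hS1 : S1 ⊆ S := by
    intro p hp
    simp only [S1, S, Nat.mem_primesBelow, Finset.mem_filter, Finset.mem_range] at hp ⊢
    exact ⟨by omega, hp.2⟩
  have hlS : ℓ ∈ S \ S1 := by
    simp only [S1, S, Nat.mem_primesBelow, Finset.mem_filter, Finset.mem_range, Finset.mem_sdiff]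
    exact ⟨⟨by omega, hℓ⟩, by omega⟩
  rw [← Finset.prod_sdiff hS1, ← Finset.mul_prod_erase _ _ hlS]
  have hS2 : ∀ p ∈ S2, p.Prime ∧ P0 < p ∧ p ≠ ℓ := by
    intro p hp
    simp only [S2, S1, S, Nat.mem_primesBelow, Finset.mem_filter, Finset.mem_range, Finset.mem_sdiff,
      Finset.mem_erase] at hp
    refine ⟨hp.2.1.2, ?_, hp.1⟩
    by_contra h
    exact hp.2.2 ⟨by omega, hp.2.1.2⟩
  have b2 : (1 / 2 : ℝ) ≤ ∏ p ∈ S2, E p := by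
    have := one_sub_sum_le_prod S2 (fun p => 2 * rr p)
      (fun p _ => mul_nonneg (by norm_num) (rr_nonneg p))
      (fun p hp => by have := rr_le p (hS2 p hp).1.two_le; linarith)
    have h3 := hP0 S2 (fun p hp => (hS2 p hp).2.1)
    calc (1 / 2 : ℝ) ≤ 1 - ∑ p ∈ S2, 2 * rr p := by linarith
      _ ≤ ∏ p ∈ S2, (1 - 2 * rr p) := this.1
      _ ≤ _ := Finset.prod_le_prod
        (fun p hp => by have := rr_le p (hS2 p hp).1.two_le; linarith)
        (fun p hp => hEo p (hS2 p hp).1 (hS2 p hp).2.1 (hS2 p hp).2.2)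
  have b1 : ∏ p ∈ S1, ((p : ℝ) ^ (J * (m - 1)))⁻¹ ≤ ∏ p ∈ S1, E p := by
    refine Finset.prod_le_prod (fun p _ => by positivity) fun p hp => ?_
    simp only [S1, Finset.mem_filter, Finset.mem_range] at hp
    exact hEs p hp.2 (by omega)
  have p1 : 0 ≤ ∏ p ∈ S1, ((p : ℝ) ^ (J * (m - 1)))⁻¹ :=
    Finset.prod_nonneg fun p _ => by positivity
  have hE0 : 0 ≤ E ℓ := hω.trans hEl
  have e1 : ω * (1 / 2) ≤ E ℓ * ∏ p ∈ S2, E p :=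
    mul_le_mul hEl b2 (by norm_num) hE0
  exact mul_le_mul e1 b1 p1 (le_trans (by positivity) e1)

end Cub

open Matrix MvPolynomial

namespace Cub

lemma lin_solve (p : ℕ) (hp : p.Prime) (β γ : ℤ) (hβ : ¬ (p : ℤ) ∣ β) :
    ∃ w : ℤ, (p : ℤ) ∣ β * w + γ := by
  have hc := (Nat.prime_iff_prime_int.1 hp).coprime_iff_not_dvd.2 hβ
  obtain ⟨a, b, hab⟩ := hc
  refine ⟨-γ * b, a * γ, ?_⟩
  linear_combination -γ * hab

/-- Hensel for a quadratic `p α u² + β u + γ`. -/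
lemma hensel_unit (p : ℕ) (hp : p.Prime) (α β γ : ℤ) (hβ : ¬ (p : ℤ) ∣ β) (k : ℕ) :
    ∃ u : ℤ, (p : ℤ) ^ k ∣ p * α * u ^ 2 + β * u + γ := by
  induction k with
  | zero => exact ⟨0, by simp⟩
  | succ k ih =>
    obtain ⟨u, d, hd⟩ := ih
    have h1 : ¬ (p : ℤ) ∣ β + 2 * α * p * u := by
      intro h
      apply hβ
      have : β = (β + 2 * α * p * u) - p * (2 * α * u) := by ring
      rw [this]
      exact dvd_sub h (Dvd.intro _ rfl)
    obtain ⟨w, e, he⟩ := lin_solve p hp _ d h1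
    refine ⟨u + p ^ k * w, e + α * p ^ k * w ^ 2, ?_⟩
    have hp1 : (p : ℤ) ^ (k + 1) = p ^ k * p := pow_succ _ _
    rw [hp1]
    linear_combination hd + (p : ℤ) ^ k * he

lemma hensel_quad (p : ℕ) (hp : p.Prime) (α β γ : ℤ) (v : ℕ) (β' : ℤ) (hβ : β = p ^ v * β')
    (hβ' : ¬ (p : ℤ) ∣ β') (hγ : (p : ℤ) ^ (2 * v + 1) ∣ γ) (k : ℕ) :
    ∃ t : ℤ, (p : ℤ) ^ k ∣ α * t ^ 2 + β * t + γ := by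
  obtain ⟨γ', rfl⟩ := hγ
  obtain ⟨u, d, hd⟩ := hensel_unit p hp α β' γ' hβ' k
  refine ⟨p ^ (v + 1) * u, p ^ (2 * v + 1) * d, ?_⟩
  rw [hβ]
  have e1 : (p : ℤ) ^ (v + 1) = p ^ v * p := pow_succ _ _
  have e2 : (p : ℤ) ^ (2 * v + 1) = p ^ v * p ^ v * p := by ring
  rw [e1, e2]
  linear_combination (p : ℤ) ^ v * p ^ v * p * hd

variable {m : ℕ} (M : Matrix (Fin m) (Fin m) ℤ) (l : Fin m → ℤ) (c : ℤ)

/-- partial derivative -/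
def dq (i : Fin m) (x : Fin m → ℤ) : ℤ := ∑ b, (M + Mᵀ) i b * x b + l i

lemma qf_single (x : Fin m → ℤ) (i : Fin m) (t : ℤ) :
    qf M l c (x + Pi.single i t) = qf M l c x + t * dq M l i x + M i i * t ^ 2 := by
  have h := qf_diff (k := ℤ) M l c x (Pi.single i t)
  have h1 : ∑ j, x j * (∑ i', (((M + Mᵀ) j i' : ℤ) : ℤ) * (Pi.single i t : Fin m → ℤ) i') =
      t * ∑ b, (M + Mᵀ) i b * x b := by
    rw [Finset.mul_sum]
    refine Finset.sum_congr rfl fun j _ => ?_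
    rw [Finset.sum_eq_single i]
    · simp; ring
    · intro b _ hb; simp [hb]
    · simp
  have h2 : qf (k := ℤ) M l c (Pi.single i t) - c = M i i * t ^ 2 + l i * t := by
    unfold qf
    rw [Finset.sum_eq_single i, Finset.sum_eq_single i, Finset.sum_eq_single i]
    · simp; ring
    all_goals (try simp)
    all_goals (intro b hb; simp [hb])
  simp only [Int.cast_id] at h h1
  rw [h1, h2] at h
  unfold dq
  linear_combination h

lemma count_lemma (p : ℕ) (hp : p.Prime) (i : Fin m) (x0 : Fin m → ℤ) (J k : ℕ) (hk : J ≤ k)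
    (h : ∀ s : Fin m → ℤ, ∃ x : Fin m → ℤ, (∀ j, j ≠ i → x j = x0 j + p ^ J * s j) ∧
      (p : ℤ) ^ k ∣ qf M l c x) :
    p ^ ((k - J) * (m - 1)) ≤ cnt M l c (p ^ k) := by
  classical
  choose X hX1 hX2 using h
  have : NeZero (p ^ k) := ⟨pow_ne_zero _ hp.ne_zero⟩
  have e : p ^ ((k - J) * (m - 1)) = Nat.card ({j : Fin m // j ≠ i} → Fin (p ^ (k - J))) := by
    rw [Nat.card_eq_fintype_card]
    simp [pow_mul]
  rw [e, cnt]
  let S : ({j : Fin m // j ≠ i} → Fin (p ^ (k - J))) → Fin m → ℤ := fun f j =>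
    if hj : j ≠ i then ((f ⟨j, hj⟩ : ℕ) : ℤ) else 0
  refine Nat.card_le_card_of_injective (fun f => ⟨fun j => ((X (S f) j : ℤ) : ZMod (p ^ k)), ?_⟩) ?_
  · rw [qf_cast, ZMod.intCast_zmod_eq_zero_iff_dvd]
    exact_mod_cast hX2 _
  · intro f g hfg
    funext j
    have h1 := congrFun (Subtype.ext_iff.1 hfg) j.1
    simp only at h1
    rw [ZMod.intCast_eq_intCast_iff_dvd_sub, hX1 _ _ j.2, hX1 _ _ j.2] at h1
    have h2 : (p : ℤ) ^ J * (p : ℤ) ^ (k - J) ∣ p ^ J * (S g j.1 - S f j.1) := by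
      rw [← pow_add, Nat.add_sub_cancel' hk]
      push_cast at h1
      convert h1 using 1
      ring
    have h3 := Int.dvd_of_mul_dvd_mul_left (pow_ne_zero _ (Int.natCast_ne_zero.2 hp.ne_zero)) h2
    have e1 : S g j.1 = ((g j : ℕ) : ℤ) := by simp [S, j.2]
    have e2 : S f j.1 = ((f j : ℕ) : ℤ) := by simp [S, j.2]
    rw [e1, e2] at h3
    have h4 := (Int.modEq_iff_dvd (n := (p : ℤ) ^ (k - J))).2 h3
    have h5 : ((f j : ℕ)) ≡ (g j : ℕ) [MOD p ^ (k - J)] := by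
      rw [← Int.natCast_modEq_iff]; exact_mod_cast h4
    have h6 := Nat.ModEq.eq_of_lt_of_lt h5 (f j).2 (g j).2
    exact Fin.ext h6

lemma exists_pow_mul (p : ℕ) (hp : p.Prime) (D : ℤ) (hD : D ≠ 0) :
    ∃ (v : ℕ) (D' : ℤ), D = p ^ v * D' ∧ ¬ (p : ℤ) ∣ D' := by
  have hf : FiniteMultiplicity (p : ℤ) D :=
    Int.finiteMultiplicity_iff.2 ⟨by simpa using hp.ne_one, hD⟩
  obtain ⟨D', h1, h2⟩ := hf.exists_eq_pow_mul_and_not_dvd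
  exact ⟨_, D', h1, h2⟩

lemma hens_count (p : ℕ) (hp : p.Prime) (i : Fin m) (x0 : Fin m → ℤ) (J : ℕ)
    (h0 : (p : ℤ) ^ J ∣ qf M l c x0) (e D' : ℤ) (h1 : (p : ℤ) ^ J ∣ dq M l i x0 - e * D')
    (he : ¬ (p : ℤ) ∣ e) (hD' : D' ≠ 0) (hDJ : D' ^ 2 < 2 ^ J) (k : ℕ) (hk : J ≤ k) :
    p ^ ((k - J) * (m - 1)) ≤ cnt M l c (p ^ k) := by
  have hpi := Nat.prime_iff_prime_int.1 hp
  obtain ⟨v, D'', hv, hD''⟩ := exists_pow_mul p hp D' hD'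
  have hD0 : D'' ≠ 0 := by rintro rfl; simp at hD''
  have hp2 : (2 : ℤ) ≤ p := by exact_mod_cast hp.two_le
  have hvJ : 2 * v + 1 ≤ J := by
    by_contra hcon
    have h2 : (p : ℤ) ^ (2 * v) ≤ D' ^ 2 := by
      rw [hv, mul_pow, ← pow_mul, mul_comm v 2]
      have : (1 : ℤ) ≤ D'' ^ 2 := by have := sq_pos_of_ne_zero hD0; omega
      nlinarith [pow_pos (show (0 : ℤ) < p by omega) (2 * v)]
    have h3 : (2 : ℤ) ^ J ≤ (p : ℤ) ^ (2 * v) :=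
      calc (2 : ℤ) ^ J ≤ 2 ^ (2 * v) := pow_le_pow_right₀ (by norm_num) (by omega)
        _ ≤ _ := by gcongr
    omega
  refine count_lemma M l c p hp i x0 J k hk fun s => ?_
  set x1 : Fin m → ℤ := fun j => x0 j + p ^ J * s j with hx1
  have hq1 : (p : ℤ) ^ J ∣ qf M l c x1 := by
    have hc : ((qf M l c x1 : ℤ) : ZMod (p ^ J)) = ((qf M l c x0 : ℤ) : ZMod (p ^ J)) := by
      rw [← qf_cast, ← qf_cast]
      congr 1
      funext j
      rw [ZMod.intCast_eq_intCast_iff_dvd_sub]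
      simp [hx1]
    rw [ZMod.intCast_eq_intCast_iff_dvd_sub] at hc
    push_cast at hc
    have := dvd_sub h0 hc
    simpa using this
  have hd1 : (p : ℤ) ^ J ∣ dq M l i x1 - e * D' := by
    have : dq M l i x1 - e * D' = (dq M l i x0 - e * D') + p ^ J * ∑ b, (M + Mᵀ) i b * s b := by
      unfold dq
      simp only [hx1, mul_add, Finset.sum_add_distrib, Finset.mul_sum]
      have : ∀ b, (M + Mᵀ) i b * ((p : ℤ) ^ J * s b) = p ^ J * ((M + Mᵀ) i b * s b) := fun b => by ring
      simp_rw [this]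
      ring
    rw [this]
    exact dvd_add h1 (Dvd.intro _ rfl)
  obtain ⟨w, hw⟩ := hd1
  obtain ⟨t, ht⟩ := hensel_quad p hp (M i i) (dq M l i x1) (qf M l c x1) v
    (e * D'' + p ^ (J - v) * w) (by
      have : (p : ℤ) ^ J = p ^ v * p ^ (J - v) := by rw [← pow_add]; congr 1; omega
      rw [this, hv] at hw
      linear_combination hw) (by
      intro hd
      have h5 : (p : ℤ) ∣ p ^ (J - v) * w :=
        Dvd.dvd.mul_right (dvd_pow_self _ (by omega)) _
      have h6 : (p : ℤ) ∣ e * D'' := by simpa using dvd_sub hd h5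
      rcases hpi.dvd_or_dvd h6 with h | h
      · exact he h
      · exact hD'' h) ((pow_dvd_pow _ hvJ).trans hq1) k
  refine ⟨x1 + Pi.single i t, fun j hj => by simp [hj, hx1], ?_⟩
  rw [qf_single]
  convert ht using 1
  ring

lemma unit_count (p : ℕ) (hp : p.Prime) (i : Fin m) (hM : ∀ a b, (p : ℤ) ∣ M a b)
    (hl : ¬ (p : ℤ) ∣ l i) (k : ℕ) : p ^ (k * (m - 1)) ≤ cnt M l c (p ^ k) := by
  refine count_lemma M l c p hp i 0 0 k (Nat.zero_le _) fun s => ?_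
  have hd : ∀ x, ¬ (p : ℤ) ∣ dq M l i x := by
    intro x hx
    apply hl
    unfold dq at hx
    refine (dvd_add_right ?_).1 hx
    refine Finset.dvd_sum fun b _ => Dvd.dvd.mul_right ?_ _
    exact dvd_add (hM _ _) (hM _ _)
  obtain ⟨w, hw⟩ := lin_solve p hp (dq M l i s) (qf M l c s) (hd s)
  have hx : (p : ℤ) ∣ qf M l c (s + Pi.single i w) := by
    rw [qf_single]
    have := dvd_add hw (Dvd.dvd.mul_right (hM i i) (w ^ 2))
    have e : qf M l c s + w * dq M l i s + M i i * w ^ 2 =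
        dq M l i s * w + qf M l c s + M i i * w ^ 2 := by ring
    rw [e]
    exact this
  obtain ⟨t, ht⟩ := hensel_quad p hp (M i i) (dq M l i (s + Pi.single i w))
    (qf M l c (s + Pi.single i w)) 0 _ (by rw [pow_zero, one_mul]) (hd _) (by simpa using hx) k
  refine ⟨s + Pi.single i w + Pi.single i t, fun j hj => by simp [hj], ?_⟩
  rw [qf_single]
  convert ht using 1
  ring

lemma cnt_scaled (p : ℕ) (hp : p.Prime) (k : ℕ) :
    cnt ((p : ℤ) • M) (fun j => p * l j) (p * c) (p ^ (k + 1)) = p ^ m * cnt M l c (p ^ k) := by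
  classical
  have : NeZero (p ^ k) := ⟨pow_ne_zero _ hp.ne_zero⟩
  have : NeZero (p ^ (k + 1)) := ⟨pow_ne_zero _ hp.ne_zero⟩
  have hdvd : p ^ k ∣ p ^ (k + 1) := pow_dvd_pow _ (by omega)
  let π : ZMod (p ^ (k + 1)) →+* ZMod (p ^ k) := ZMod.castHom hdvd (ZMod (p ^ k))
  let PI : (Fin m → ZMod (p ^ (k + 1))) →+ (Fin m → ZMod (p ^ k)) :=
    { toFun := fun b j => π (b j)
      map_zero' := by ext; simp
      map_add' := by intro x y; ext; simp }
  have hs : Function.Surjective PI := by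
    intro b
    have : ∀ j, ∃ x, π x = b j := fun j => ZMod.castHom_surjective hdvd (b j)
    choose x hx using this
    exact ⟨x, funext hx⟩
  have h := sum_fiber PI hs (fun b => if qf M l c b = 0 then 1 else 0)
  have hpt : ∀ b : Fin m → ZMod (p ^ (k + 1)), qf M l c (PI b) = 0 ↔
      qf ((p : ℤ) • M) (fun j => p * l j) (p * c) b = 0 := by
    intro b
    have e1 : qf ((p : ℤ) • M) (fun j => p * l j) (p * c) b = (p : ZMod (p ^ (k + 1))) * qf M l c b := by
      simp only [qf, Matrix.smul_apply, smul_eq_mul, mul_add, Finset.mul_sum]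
      push_cast
      simp only [mul_assoc]
    obtain ⟨n, hn⟩ := ZMod.intCast_surjective (qf M l c b)
    have h1 : qf M l c (PI b) = ((n : ℤ) : ZMod (p ^ k)) := by
      have := qf_map M l c π b
      rw [← hn] at this
      rw [map_intCast] at this
      exact this.symm
    rw [h1, e1, ← hn]
    have e2 : (p : ZMod (p ^ (k + 1))) * (n : ZMod (p ^ (k + 1))) =
      ((p * n : ℤ) : ZMod (p ^ (k + 1))) := by push_cast; rfl
    rw [e2, ZMod.intCast_zmod_eq_zero_iff_dvd, ZMod.intCast_zmod_eq_zero_iff_dvd]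
    push_cast
    rw [pow_succ, mul_comm ((p : ℤ) ^ k)]
    exact (mul_dvd_mul_iff_left (Int.natCast_ne_zero.2 hp.ne_zero)).symm
  simp_rw [hpt] at h
  simp only [Fintype.card_fun, ZMod.card, Fintype.card_fin, Finset.sum_boole] at h
  unfold cnt
  rw [Nat.card_eq_fintype_card, Fintype.card_subtype, Nat.card_eq_fintype_card, Fintype.card_subtype]
  have h' : (p ^ k) ^ m * (Finset.univ.filter fun b : Fin m → ZMod (p ^ (k + 1)) =>
      qf ((p : ℤ) • M) (fun j => p * l j) (p * c) b = 0).card = (p ^ (k + 1)) ^ m *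
      (Finset.univ.filter fun b : Fin m → ZMod (p ^ k) => qf M l c b = 0).card := by
    exact_mod_cast h
  have hpos : 0 < (p ^ k) ^ m := by have := hp.pos; positivity
  apply Nat.eq_of_mul_eq_mul_left hpos
  rw [h']
  ring

end Cub

open Matrix MvPolynomial

namespace Cub

lemma theta_diff : ∃ X0 : ℝ, 4 ≤ X0 ∧ ∀ x : ℝ, X0 ≤ x →
    (1 / 8) * x ≤ Chebyshev.theta x - Chebyshev.theta (x / 4) := by
  have h := (isLittleO_log_rpow_atTop (r := 1 / 2) (by norm_num)).def
    (show (0 : ℝ) < 1 / 200 by norm_num)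
  obtain ⟨X1, hX1⟩ := Filter.eventually_atTop.1 h
  refine ⟨max X1 10000, le_max_of_le_right (by norm_num), fun x hx => ?_⟩
  have hx1 : X1 ≤ x := (le_max_left _ _).trans hx
  have hx2 : 10000 ≤ x := (le_max_right _ _).trans hx
  have h1 := hX1 x hx1
  rw [Real.norm_eq_abs, Real.norm_eq_abs, abs_of_nonneg (Real.log_nonneg (by linarith)),
    abs_of_nonneg (Real.rpow_nonneg (by linarith) _), ← Real.sqrt_eq_rpow] at h1
  have h2 := Chebyshev.theta_ge' (x := x) (by linarith)
  have h3 := Chebyshev.theta_le_log4_mul_x (x := x / 4) (by linarith)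
  have h4 : Real.log 4 = 2 * Real.log 2 := by
    rw [show (4 : ℝ) = 2 ^ 2 by norm_num, Real.log_pow]; norm_num
  have h5 := Real.log_two_gt_d9
  have h5' := Real.log_two_lt_d9
  have h6 : Real.log (x + 2) ≤ 2 * Real.log x := by
    rw [← Real.log_rpow (by linarith)]
    apply Real.log_le_log (by linarith)
    rw [Real.rpow_ofNat]; nlinarith
  have h7 : √x * √x = x := Real.mul_self_sqrt (by linarith)
  have h8 : √x * Real.log x ≤ x / 200 := by
    calc √x * Real.log x ≤ √x * (1 / 200 * √x) := by gcongr
      _ = x / 200 := by linear_combination (1/200) * h7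
  have h9 : √x ≤ x / 100 := by
    have : (100 : ℝ) ≤ √x := Real.le_sqrt_of_sq_le (by linarith)
    nlinarith
  rw [h4] at h3
  nlinarith

lemma prime_count : ∃ X0 : ℝ, 4 ≤ X0 ∧ ∀ x : ℝ, X0 ≤ x → ∃ S : Finset ℕ,
    (∀ p ∈ S, p.Prime ∧ x / 4 ≤ p ∧ (p : ℝ) ≤ x) ∧ (1 / 8) * x / Real.log x ≤ S.card := by
  classical
  obtain ⟨X0, h4, h⟩ := theta_diff
  refine ⟨X0, h4, fun x hx => ?_⟩
  have hx4 : 4 ≤ x := h4.trans hx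
  have hlog : 0 < Real.log x := Real.log_pos (by linarith)
  refine ⟨(Finset.Ioc ⌊x / 4⌋₊ ⌊x⌋₊).filter Nat.Prime, ?_, ?_⟩
  · intro p hp
    simp only [Finset.mem_filter, Finset.mem_Ioc] at hp
    refine ⟨hp.2, ?_, ?_⟩
    · exact ((Nat.floor_lt (by linarith)).1 hp.1.1).le
    · exact (Nat.le_floor_iff (by linarith)).1 hp.1.2
  · rw [div_le_iff₀ hlog]
    refine (h x hx).trans ?_
    have hle : ⌊x / 4⌋₊ ≤ ⌊x⌋₊ := Nat.floor_le_floor (by linarith)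
    have e : Chebyshev.theta x - Chebyshev.theta (x / 4) =
        ∑ p ∈ (Finset.Ioc ⌊x / 4⌋₊ ⌊x⌋₊).filter Nat.Prime, Real.log p := by
      unfold Chebyshev.theta
      rw [sub_eq_iff_eq_add, Finset.sum_filter, Finset.sum_filter, Finset.sum_filter, add_comm,
        ← Finset.sum_union]
      · rw [Finset.Ioc_union_Ioc_eq_Ioc (Nat.zero_le _) hle]
      · rw [Finset.disjoint_left]
        intro p hp hp'
        simp only [Finset.mem_Ioc] at hp hp'
        omega
    rw [e, ← nsmul_eq_mul]
    refine Finset.sum_le_card_nsmul _ _ _ fun p hp => ?_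
    simp only [Finset.mem_filter, Finset.mem_Ioc] at hp
    apply Real.log_le_log (Nat.cast_pos.2 hp.2.pos)
    exact (Nat.le_floor_iff (by linarith)).1 hp.1.2

lemma final_of_primes (h : ℕ) (hh : 0 < h) (Sg : (Fin h → ℤ) → ℝ) (a : ℤ) (ha : a ≠ 0) (c : ℝ)
    (hc : 0 < c) (K : ℝ) (hK : 0 < K) (ℓ0 : ℕ)
    (H : ∀ ℓ : ℕ, ℓ.Prime → ℓ0 ≤ ℓ → ∃ 𝒞 : Finset (Fin h → ℤ),
      (∀ y ∈ 𝒞, y ⟨0, hh⟩ = a * ℓ ∧ ∀ i, (|y i| : ℝ) ≤ K * ℓ) ∧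
      c * (ℓ : ℝ) ^ (h - 1) ≤ ∑ y ∈ 𝒞, Sg y) :
    ∃ c > (0 : ℝ), ∃ K > (0 : ℝ), ∃ Y₀ : ℝ, ∀ Y : ℝ, Y₀ ≤ Y →
      ∃ 𝒞 : Finset (Fin h → ℤ),
        (∀ y ∈ 𝒞, ∀ i, (|y i| : ℝ) ≤ K * Y) ∧
        c * Y ^ h / Real.log Y ≤ ∑ y ∈ 𝒞, Sg y := by
  classical
  obtain ⟨X0, hX4, hX⟩ := prime_count
  choose 𝒞 h1 h2 using H
  refine ⟨c * (1 / 4) ^ (h - 1) * (1 / 8), by positivity, K, hK, max X0 (4 * ℓ0 + 4), fun Y hY => ?_⟩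
  have hYX : X0 ≤ Y := (le_max_left _ _).trans hY
  have hYl : 4 * (ℓ0 : ℝ) + 4 ≤ Y := (le_max_right _ _).trans hY
  have hY4 : 4 ≤ Y := hX4.trans hYX
  obtain ⟨S, hS1, hS2⟩ := hX Y hYX
  have hSl : ∀ p ∈ S, ℓ0 ≤ p := by
    intro p hp
    have := (hS1 p hp).2.1
    have : (ℓ0 : ℝ) ≤ p := by linarith
    exact_mod_cast this
  let T : ℕ → Finset (Fin h → ℤ) := fun p =>
    if hp : p.Prime ∧ ℓ0 ≤ p then 𝒞 p hp.1 hp.2 else ∅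
  have hT1 : ∀ p ∈ S, (∀ y ∈ T p, y ⟨0, hh⟩ = a * p ∧ ∀ i, (|y i| : ℝ) ≤ K * p) ∧
      c * (p : ℝ) ^ (h - 1) ≤ ∑ y ∈ T p, Sg y := by
    intro p hp
    have hp' : p.Prime ∧ ℓ0 ≤ p := ⟨(hS1 p hp).1, hSl p hp⟩
    simp only [T, dif_pos hp']
    exact ⟨h1 p hp'.1 hp'.2, h2 p hp'.1 hp'.2⟩
  refine ⟨S.biUnion T, ?_, ?_⟩
  · intro y hy i
    obtain ⟨p, hp, hyp⟩ := Finset.mem_biUnion.1 hy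
    refine (((hT1 p hp).1 y hyp).2 i).trans ?_
    have := (hS1 p hp).2.2
    gcongr
  · rw [Finset.sum_biUnion]
    · have h5 : ∀ p ∈ S, c * (Y / 4) ^ (h - 1) ≤ ∑ y ∈ T p, Sg y := by
        intro p hp
        refine le_trans ?_ (hT1 p hp).2
        have := (hS1 p hp).2.1
        gcongr
      have h6 := Finset.card_nsmul_le_sum S _ _ h5
      refine le_trans ?_ h6
      rw [nsmul_eq_mul]
      calc c * (1 / 4) ^ (h - 1) * (1 / 8) * Y ^ h / Real.log Y
          = ((1 / 8) * Y / Real.log Y) * (c * (Y / 4) ^ (h - 1)) := by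
            obtain ⟨h', rfl⟩ : ∃ h', h = h' + 1 := ⟨h - 1, by omega⟩
            rw [Nat.add_sub_cancel, div_eq_mul_one_div Y 4, mul_pow, pow_succ]
            ring
        _ ≤ _ := by gcongr
    · intro p hp p' hp' hne
      rw [Function.onFun, Finset.disjoint_left]
      intro y hy hy'
      apply hne
      have e := ((hT1 p hp).1 y hy).1.symm.trans ((hT1 p' hp').1 y hy').1
      have := mul_left_cancel₀ ha e
      exact_mod_cast this

end Cub

open Matrix MvPolynomial

namespace Cub

section cert
variable {K : Type*} [Field K]

lemma cert_of_rank {n r : ℕ} (M : Matrix (Fin n) (Fin n) K) (h : r ≤ M.rank) :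
    ∃ (W : Matrix (Fin r) (Fin n) K) (V : Matrix (Fin n) (Fin r) K), W * M * V = 1 := by
  classical
  obtain ⟨f, hf⟩ : ∃ f : Fin r → LinearMap.range M.mulVecLin, LinearIndependent K f := by
    have : (r : Cardinal) ≤ Module.rank K (LinearMap.range M.mulVecLin) := by
      rw [← Module.finrank_eq_rank]
      exact_mod_cast h
    have := exists_linearIndependent_of_le_rank this
    exact this
  have hf' : LinearIndependent K (fun i => (f i : Fin n → K)) :=
    hf.map' (Submodule.subtype _) (Submodule.ker_subtype _)
  choose v hv using fun i => (f i).2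
  let V : Matrix (Fin n) (Fin r) K := Matrix.of fun a i => v i a
  have hcol : ∀ i, (M * V).col i = (f i : Fin n → K) := by
    intro i
    rw [← hv i]
    ext a
    simp [Matrix.mul_apply, V, Matrix.mulVec, dotProduct]
  have hinj : Function.Injective (M * V).mulVec := by
    rw [Matrix.mulVec_injective_iff]
    have : (M * V).col = fun i => (f i : Fin n → K) := funext hcol
    rw [this]
    exact hf'
  obtain ⟨g, hg⟩ := LinearMap.exists_leftInverse_of_injective (M * V).mulVecLin
    (LinearMap.ker_eq_bot.2 hinj)
  refine ⟨LinearMap.toMatrix' g, V, ?_⟩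
  rw [Matrix.mul_assoc]
  apply (Matrix.toLin' (R := K)).injective
  rw [Matrix.toLin'_mul, Matrix.toLin'_toMatrix', Matrix.toLin'_one]
  exact hg

lemma rank_of_cert {n r : ℕ} (M : Matrix (Fin n) (Fin n) K)
    (W : Matrix (Fin r) (Fin n) K) (V : Matrix (Fin n) (Fin r) K) (h : W * M * V = 1) :
    r ≤ M.rank := by
  have h1 : (W * M * V).rank = r := by rw [h, Matrix.rank_one]; simp
  rw [← h1]
  exact (Matrix.rank_mul_le_left _ _).trans (Matrix.rank_mul_le_right _ _)

end cert

lemma common_denom {ι : Type*} [Fintype ι] (x : ι → ℚ) :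
    ∃ d : ℤ, d ≠ 0 ∧ ∀ i, ∃ z : ℤ, (d : ℚ) * x i = z := by
  obtain ⟨b, hb⟩ := IsLocalization.exist_integer_multiples_of_finite (nonZeroDivisors ℤ) x
  refine ⟨b, nonZeroDivisors.coe_ne_zero b, fun i => ?_⟩
  obtain ⟨z, hz⟩ := hb i
  exact ⟨z, by rw [← zsmul_eq_mul]; exact hz.symm⟩

lemma int_matrix {a b : ℕ} (W : Matrix (Fin a) (Fin b) ℚ) :
    ∃ d : ℤ, d ≠ 0 ∧ ∃ W' : Matrix (Fin a) (Fin b) ℤ, W'.map (Int.cast : ℤ → ℚ) = (d : ℚ) • W := by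
  obtain ⟨d, hd, h⟩ := common_denom (fun ij : Fin a × Fin b => W ij.1 ij.2)
  choose z hz using h
  refine ⟨d, hd, Matrix.of fun i j => z (i, j), ?_⟩
  ext i j
  simp [← hz (i, j)]

lemma int_cert {n r : ℕ} (M : Matrix (Fin n) (Fin n) ℤ)
    (h : r ≤ (M.map (Int.cast : ℤ → ℚ)).rank) :
    ∃ (W : Matrix (Fin r) (Fin n) ℤ) (V : Matrix (Fin n) (Fin r) ℤ) (D : ℤ), D ≠ 0 ∧
      W * M * V = D • (1 : Matrix (Fin r) (Fin r) ℤ) := by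
  obtain ⟨W, V, hWV⟩ := cert_of_rank _ h
  obtain ⟨d, hd, W', hW'⟩ := int_matrix W
  obtain ⟨e, he, V', hV'⟩ := int_matrix V
  refine ⟨W', V', d * e, mul_ne_zero hd he, ?_⟩
  have hinj : Function.Injective (fun X : Matrix (Fin r) (Fin r) ℤ => X.map (Int.castRingHom ℚ)) :=
    Matrix.map_injective (RingHom.injective_int _)
  apply hinj
  simp only [Matrix.map_mul]
  rw [show W'.map (Int.castRingHom ℚ) = (d : ℚ) • W from hW',
    show V'.map (Int.castRingHom ℚ) = (e : ℚ) • V from hV',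
    show M.map (Int.castRingHom ℚ) = M.map (Int.cast : ℤ → ℚ) from rfl]
  rw [Matrix.smul_mul, Matrix.smul_mul, Matrix.mul_smul, hWV, smul_smul]
  ext i j
  simp only [Matrix.map_apply, Matrix.smul_apply, Matrix.one_apply]
  split_ifs <;> simp

section evals
variable {σ : Type*}

lemma eval_congr (P : MvPolynomial σ ℤ) (n : ℤ) (x y : σ → ℤ) (h : ∀ i, n ∣ x i - y i) :
    n ∣ eval x P - eval y P := by
  induction P using MvPolynomial.induction_on with
  | C a => simp
  | add p q hp hq =>
    rw [map_add, map_add, add_sub_add_comm]; exact dvd_add hp hq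
  | mul_X p i hp =>
    rw [map_mul, map_mul, eval_X, eval_X]
    have : eval x p * x i - eval y p * y i =
      (eval x p - eval y p) * x i + eval y p * (x i - y i) := by ring
    rw [this]
    exact dvd_add (Dvd.dvd.mul_right hp _) (Dvd.dvd.mul_left (h i) _)

lemma eval_smul_hom {R : Type*} [CommRing R] (P : MvPolynomial σ R) (d : ℕ) (hP : P.IsHomogeneous d) (r : R) (x : σ → R) :
    eval (fun i => r * x i) P = r ^ d * eval x P := by
  rw [MvPolynomial.eval_eq, MvPolynomial.eval_eq, Finset.mul_sum]
  refine Finset.sum_congr rfl fun e he => ?_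
  have hd := hP (MvPolynomial.mem_support_iff.1 he)
  simp only [mul_pow, Finset.prod_mul_distrib]
  rw [Finset.prod_pow_eq_pow_sum]
  have : ∑ i ∈ e.support, e i = d := by
    rw [← hd, Finsupp.weight_apply, Finsupp.sum]; simp
  rw [this]; ring

end evals
end Cub

open Matrix MvPolynomial

namespace Cub

lemma family_sum {s : ℕ} (Sg : (Fin (s + 1) → ℤ) → ℝ) (ℓ : ℕ) [NeZero ℓ] (a L : ℤ)
    (w : Fin s → ℤ) (hL : L ≠ 0) (T : Finset (Fin s → ZMod ℓ)) (β : ℝ)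
    (hS : ∀ t ∈ T, β ≤ Sg (Fin.cons (a * ℓ) fun i => ℓ * w i + L * ((t i).val : ℤ))) :
    ∃ 𝒞 : Finset (Fin (s + 1) → ℤ), (∀ y ∈ 𝒞, y 0 = a * ℓ ∧
      ∀ i, (|y i| : ℝ) ≤ ((|a| + ∑ i, |w i| + |L| + 1 : ℤ) : ℝ) * ℓ) ∧
      T.card * β ≤ ∑ y ∈ 𝒞, Sg y := by
  classical
  let Y : (Fin s → ZMod ℓ) → (Fin (s + 1) → ℤ) := fun t =>
    Fin.cons (a * ℓ) fun i => ℓ * w i + L * ((t i).val : ℤ)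
  have hinj : Function.Injective Y := by
    intro t t' h
    funext i
    have h1 := congrFun h i.succ
    simp only [Y, Fin.cons_succ] at h1
    have h2 : ((t i).val : ℤ) = ((t' i).val : ℤ) := mul_left_cancel₀ hL (by linarith)
    exact ZMod.val_injective ℓ (by exact_mod_cast h2)
  refine ⟨T.image Y, ?_, ?_⟩
  · intro y hy
    obtain ⟨t, -, rfl⟩ := Finset.mem_image.1 hy
    refine ⟨by simp [Y], fun i => ?_⟩
    have hℓ : (0 : ℤ) ≤ ℓ := by positivity
    have hw0 : 0 ≤ ∑ i, |w i| := Finset.sum_nonneg fun i _ => abs_nonneg _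
    suffices h : |Y t i| ≤ (|a| + ∑ i, |w i| + |L| + 1) * ℓ by exact_mod_cast h
    refine Fin.cases ?_ (fun i => ?_) i
    · simp only [Y, Fin.cons_zero]
      rw [abs_mul, abs_of_nonneg hℓ]
      refine mul_le_mul_of_nonneg_right ?_ hℓ
      have := abs_nonneg L
      linarith
    · simp only [Y, Fin.cons_succ]
      refine (abs_add_le _ _).trans ?_
      rw [abs_mul, abs_mul, abs_of_nonneg hℓ]
      have h1 : |w i| ≤ ∑ i, |w i| :=
        Finset.single_le_sum (f := fun i => |w i|) (fun i _ => abs_nonneg _) (Finset.mem_univ i)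
      have h2 : |((t i).val : ℤ)| ≤ ℓ := by
        rw [abs_of_nonneg (by positivity)]
        exact_mod_cast (ZMod.val_lt (t i)).le
      have h3 := mul_le_mul_of_nonneg_left h2 (abs_nonneg L)
      have h4 := mul_le_mul_of_nonneg_left h1 hℓ
      have h5 := mul_nonneg (abs_nonneg a) hℓ
      nlinarith
  · rw [Finset.sum_image fun x _ y _ h => hinj h, ← nsmul_eq_mul]
    exact Finset.card_nsmul_le_sum _ _ _ hS

/-- restriction to `y₁ = 0` -/
noncomputable def res0 {s : ℕ} {k : Type*} [CommRing k] (P : MvPolynomial (Fin (s + 1)) k) : MvPolynomial (Fin s) k :=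
  aeval (Fin.cons 0 X : Fin (s + 1) → MvPolynomial (Fin s) k) P

lemma eval_res0 {s : ℕ} {k : Type*} [CommRing k] (P : MvPolynomial (Fin (s + 1)) k) (t : Fin s → k) :
    eval t (res0 P) = eval (Fin.cons 0 t) P := by
  induction P using MvPolynomial.induction_on with
  | C a => simp [res0]
  | add p q hp hq => simp only [res0, map_add] at *; rw [hp, hq]
  | mul_X p i hp =>
    simp only [res0, map_mul, aeval_X, eval_X] at *
    rw [hp]
    congr 1
    refine Fin.cases ?_ (fun i => ?_) i <;> simp

lemma sz_count {s : ℕ} (Q0 : MvPolynomial (Fin s) ℤ) (v : Fin s → ℤ) (ℓ : ℕ) [Fact ℓ.Prime]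
    (hv : ¬ (ℓ : ℤ) ∣ eval v Q0) (hd : 2 * Q0.totalDegree ≤ ℓ) :
    ℓ ^ s ≤ 2 * (Finset.univ.filter fun t : Fin s → ZMod ℓ =>
      eval t (MvPolynomial.map (Int.castRingHom (ZMod ℓ)) Q0) ≠ 0).card := by
  classical
  set Q1 := MvPolynomial.map (Int.castRingHom (ZMod ℓ)) Q0 with hQ1
  have h0 : Q1 ≠ 0 := by
    intro h
    apply hv
    have := MvPolynomial.map_eval (Int.castRingHom (ZMod ℓ)) v Q0
    rw [← hQ1, h, map_zero] at this
    rw [← ZMod.intCast_zmod_eq_zero_iff_dvd]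
    simpa using this
  have h1 := MvPolynomial.schwartz_zippel_totalDegree h0 (Finset.univ : Finset (ZMod ℓ))
  have hdeg : Q1.totalDegree ≤ Q0.totalDegree := Finset.sup_mono (support_map_subset _ _)
  have hℓ : 0 < ℓ := (Fact.out : ℓ.Prime).pos
  rw [Finset.card_univ, ZMod.card] at h1
  have h2 : (Q1.totalDegree : ℚ≥0) / ℓ ≤ 1 / 2 := by
    rw [div_le_div_iff₀ (by exact_mod_cast hℓ) (by norm_num)]
    have : 2 * Q1.totalDegree ≤ ℓ := by omega
    rw [mul_comm]
    have : ((2 * Q1.totalDegree : ℕ) : ℚ≥0) ≤ ℓ := by exact_mod_cast this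
    simpa using this
  have h3 := h1.trans h2
  rw [div_le_div_iff₀ (by positivity) (by norm_num)] at h3
  have h4 : 2 * (Finset.univ.filter fun t : Fin s → ZMod ℓ => eval t Q1 = 0).card ≤ ℓ ^ s := by
    have e : (Fintype.piFinset fun _ : Fin s => (Finset.univ : Finset (ZMod ℓ))) = Finset.univ := by
      ext; simp
    rw [e] at h3
    rw [mul_comm]
    have : (((Finset.univ.filter fun t : Fin s → ZMod ℓ => eval t Q1 = 0).card * 2 : ℕ) : ℚ≥0)
      ≤ ((ℓ ^ s : ℕ) : ℚ≥0) := by push_cast; simpa using h3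
    exact_mod_cast this
  have h5 := Finset.card_filter_add_card_filter_not (s := (Finset.univ : Finset (Fin s → ZMod ℓ)))
    (fun t => eval t Q1 = 0)
  rw [Finset.card_univ, Fintype.card_fun, ZMod.card, Fintype.card_fin] at h5
  simp only [ne_eq]
  omega

lemma eval_val {s : ℕ} (Q0 : MvPolynomial (Fin s) ℤ) (ℓ : ℕ) [NeZero ℓ] (t : Fin s → ZMod ℓ) :
    eval t (MvPolynomial.map (Int.castRingHom (ZMod ℓ)) Q0) =
      ((eval (fun i => ((t i).val : ℤ)) Q0 : ℤ) : ZMod ℓ) := by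
  have := MvPolynomial.map_eval (Int.castRingHom (ZMod ℓ)) (fun i => ((t i).val : ℤ)) Q0
  have e : (Int.castRingHom (ZMod ℓ)) ∘ (fun i => ((t i).val : ℤ)) = t := by
    funext i; simp
  rw [e] at this
  rw [← this]; simp

/-- the singular series of the fibre -/
noncomputable def SgF {m s : ℕ} (A : Matrix (Fin m) (Fin m) ℤ)
    (q : Fin m → MvPolynomial (Fin (s + 1)) ℤ) (R : MvPolynomial (Fin (s + 1)) ℤ)
    (y : Fin (s + 1) → ℤ) : ℝ :=
  (singSeries m (fun x => qf (y 0 • A) (fun j => eval y (q j)) (eval y R) x)).re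

/-- the input for `final_of_primes` -/
def Good (s : ℕ) (Sg : (Fin (s + 1) → ℤ) → ℝ) : Prop :=
  ∃ a : ℤ, a ≠ 0 ∧ ∃ c > (0 : ℝ), ∃ K > (0 : ℝ), ∃ ℓ0 : ℕ, ∀ ℓ : ℕ, ℓ.Prime → ℓ0 ≤ ℓ →
    ∃ 𝒞 : Finset (Fin (s + 1) → ℤ), (∀ y ∈ 𝒞, y 0 = a * ℓ ∧ ∀ i, (|y i| : ℝ) ≤ K * ℓ) ∧
      c * (ℓ : ℝ) ^ s ≤ ∑ y ∈ 𝒞, Sg y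

end Cub

open Matrix MvPolynomial

namespace Cub

lemma qf_at_single {m : ℕ} (M : Matrix (Fin m) (Fin m) ℤ) (l : Fin m → ℤ) (c : ℤ) (i : Fin m)
    (t : ℤ) : qf M l c (Pi.single i t : Fin m → ℤ) = c + t * l i + M i i * t ^ 2 := by
  have h := qf_single M l c 0 i t
  rw [zero_add] at h
  rw [h]
  have h1 : qf M l c (0 : Fin m → ℤ) = c := by simp [qf]
  have h2 : dq M l i 0 = l i := by simp [dq]
  rw [h1, h2]

lemma prime_dvd_fact_pow {p ℓ P0 : ℕ} (hp : p.Prime) (hℓ : ℓ.Prime) (h1 : p ≤ P0) (h2 : P0 < ℓ)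
    (k : ℕ) : ¬ (p : ℤ) ∣ (ℓ : ℤ) ^ k := by
  intro h
  have h3 : p ∣ ℓ ^ k := by exact_mod_cast h
  have h4 := (Nat.prime_dvd_prime_iff_eq hp hℓ).1 (hp.dvd_of_dvd_pow h3)
  omega

lemma prime_le_of_dvd {p : ℕ} {D : ℤ} {P0 : ℕ} (hD : D ≠ 0) (h : (p : ℤ) ∣ D)
    (hP : D.natAbs ≤ P0) : p ≤ P0 := by
  have h1 : p ∣ D.natAbs := Int.natCast_dvd.1 h
  exact (Nat.le_of_dvd (Int.natAbs_pos.2 hD) h1).trans hP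

lemma not_dvd_fact {ℓ P0 : ℕ} (hℓ : ℓ.Prime) (h : P0 < ℓ) (k : ℕ) :
    ¬ (ℓ : ℤ) ∣ ((P0.factorial : ℤ)) ^ k := by
  intro h1
  have h3 : ℓ ∣ P0.factorial ^ k := by exact_mod_cast h1
  have h4 := hℓ.dvd_of_dvd_pow h3
  have := (hℓ.dvd_factorial).1 h4
  omega

lemma dvd_fact_pow {p P0 : ℕ} (hp : p.Prime) (h : p ≤ P0) (k : ℕ) :
    (p : ℤ) ^ k ∣ ((P0.factorial : ℤ)) ^ k :=
  pow_dvd_pow_of_dvd (by exact_mod_cast (hp.dvd_factorial).2 h) k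

lemma prod_pos' (P0 J m : ℕ) : 0 < ∏ p ∈ (Finset.range (P0 + 1)).filter Nat.Prime,
    ((p : ℝ) ^ (J * (m - 1)))⁻¹ := by
  refine Finset.prod_pos fun p hp => ?_
  have := (Finset.mem_filter.1 hp).2.pos
  positivity

lemma caseA {m s : ℕ} (A : Matrix (Fin m) (Fin m) ℤ) (W : Matrix (Fin 5) (Fin m) ℤ)
    (V : Matrix (Fin m) (Fin 5) ℤ) (D0 : ℤ) (hD0 : D0 ≠ 0)
    (hW : W * (A + Aᵀ) * V = D0 • (1 : Matrix (Fin 5) (Fin 5) ℤ))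
    (q : Fin m → MvPolynomial (Fin (s + 1)) ℤ) (hq : ∀ j, (q j).IsHomogeneous 2)
    (R : MvPolynomial (Fin (s + 1)) ℤ) (hR : R.IsHomogeneous 3)
    (j0 : Fin m) (v : Fin s → ℤ) (hv : eval (Fin.cons 0 v) (q j0) ≠ 0) :
    Good s (SgF A q R) := by
  classical
  have hm : 0 < m := Fin.pos j0
  set D := eval (Fin.cons 0 v : Fin (s + 1) → ℤ) (q j0) with hDdef
  set ρ := eval (Fin.cons 0 v : Fin (s + 1) → ℤ) R with hρ
  obtain ⟨J, hJ⟩ : ∃ J : ℕ, (D ^ 3) ^ 2 < 2 ^ J := by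
    refine ⟨((D ^ 3) ^ 2).natAbs, ?_⟩
    have := Nat.lt_two_pow_self (n := ((D ^ 3) ^ 2).natAbs)
    have h2 : ((D ^ 3) ^ 2) ≤ (((D ^ 3) ^ 2).natAbs : ℤ) := Int.le_natAbs
    refine lt_of_le_of_lt h2 ?_
    exact_mod_cast this
  obtain ⟨P0, hP0B, hP0⟩ := exists_P0 D0.natAbs
  set N : ℤ := (P0.factorial : ℤ) with hN
  have hN0 : N ≠ 0 := by rw [hN]; exact_mod_cast P0.factorial_ne_zero
  set β : ℝ := 1 * (1 / 2) * ∏ p ∈ (Finset.range (P0 + 1)).filter Nat.Prime,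
    ((p : ℝ) ^ (J * (m - 1)))⁻¹ with hβ
  have hβ0 : 0 < β := by have := prod_pos' P0 J m; positivity
  refine ⟨N ^ J, pow_ne_zero _ hN0, β / 2, by positivity,
    ((|N ^ J| + ∑ i, |D * v i| + |N ^ J| + 1 : ℤ) : ℝ), ?_,
    P0 + 1 + D.natAbs + 2 * (res0 (q j0)).totalDegree, fun ℓ hℓ hℓ0 => ?_⟩
  · have h1 : 0 ≤ ∑ i, |D * v i| := Finset.sum_nonneg fun i _ => abs_nonneg _
    have h2 := abs_nonneg (N ^ J)
    have : 0 < |N ^ J| + ∑ i, |D * v i| + |N ^ J| + 1 := by linarith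
    exact_mod_cast this
  have : Fact ℓ.Prime := ⟨hℓ⟩
  have : NeZero ℓ := ⟨hℓ.ne_zero⟩
  have hℓP : P0 < ℓ := by omega
  have hℓD : ¬ (ℓ : ℤ) ∣ D := by
    intro h
    have := prime_le_of_dvd hv h le_rfl
    omega
  have hcount := sz_count (res0 (q j0)) v ℓ (by rw [eval_res0]; exact hℓD) (by omega)
  set T := Finset.univ.filter fun t : Fin s → ZMod ℓ =>
      eval t (MvPolynomial.map (Int.castRingHom (ZMod ℓ)) (res0 (q j0))) ≠ 0 with hT
  suffices hS : ∀ t ∈ T, β ≤ SgF A q R (Fin.cons (N ^ J * ℓ) fun i => ℓ * (D * v i) + N ^ J * ((t i).val : ℤ)) by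
    obtain ⟨𝒞, h1, h2⟩ := family_sum (SgF A q R) ℓ (N ^ J) (N ^ J) (fun i => D * v i)
      (pow_ne_zero _ hN0) T β hS
    refine ⟨𝒞, h1, le_trans ?_ h2⟩
    have : ((ℓ ^ s : ℕ) : ℝ) ≤ ((2 * T.card : ℕ) : ℝ) := by exact_mod_cast hcount
    push_cast at this
    nlinarith
  intro t ht
  set y : Fin (s + 1) → ℤ :=
    Fin.cons (N ^ J * ℓ) fun i => ℓ * (D * v i) + N ^ J * ((t i).val : ℤ) with hy
  have hy0 : y 0 = N ^ J * ℓ := by simp [hy]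
  have hyN : ∀ i, N ^ J ∣ y i - (fun i => (ℓ * D) * (Fin.cons 0 v : Fin (s + 1) → ℤ) i) i := by
    intro i
    refine Fin.cases ?_ (fun i => ?_) i
    · simp [hy]
    · simp only [hy, Fin.cons_succ]
      exact ⟨((t i).val : ℤ), by ring⟩
  have hyl : ∀ i, (ℓ : ℤ) ∣ y i -
      (fun i => (N ^ J) * (Fin.cons 0 (fun i => ((t i).val : ℤ)) : Fin (s + 1) → ℤ) i) i := by
    intro i
    refine Fin.cases ?_ (fun i => ?_) i
    · simp [hy]
    · simp only [hy, Fin.cons_succ]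
      exact ⟨D * v i, by ring⟩
  have hq1 := eval_congr (q j0) _ _ _ hyN
  have hR1 := eval_congr R _ _ _ hyN
  have hq2 := eval_congr (q j0) _ _ _ hyl
  rw [eval_smul_hom _ _ (hq j0)] at hq1 hq2
  rw [eval_smul_hom _ _ hR] at hR1
  unfold SgF
  have hcert : W * (y 0 • A + (y 0 • A)ᵀ) * V = (y 0 * D0) • (1 : Matrix (Fin 5) (Fin 5) ℤ) := by
    rw [Matrix.transpose_smul, ← smul_add, Matrix.mul_smul, Matrix.smul_mul, hW, smul_smul]
  have hy00 : y 0 ≠ 0 := by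
    rw [hy0]; exact mul_ne_zero (pow_ne_zero _ hN0) (by exact_mod_cast hℓ.ne_zero)
  refine sing_lower (y 0 • A) (fun j => eval y (q j)) (eval y R) hm P0 hP0 W V (y 0 * D0)
    (mul_ne_zero hy00 hD0) hcert ℓ hℓ hℓP ?_ J ?_ 1 (by norm_num) ?_
  · intro p hp hpd
    have hpi := Nat.prime_iff_prime_int.1 hp
    rcases hpi.dvd_or_dvd hpd with h | h
    · rw [hy0] at h
      rcases hpi.dvd_or_dvd h with h | h
      · left
        have := hpi.dvd_of_dvd_pow h
        rw [hN] at this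
        exact (hp.dvd_factorial).1 (by exact_mod_cast this)
      · right
        exact (Nat.prime_dvd_prime_iff_eq hp hℓ).1 (by exact_mod_cast h)
    · left
      exact prime_le_of_dvd hD0 h hP0B
  · intro p hp hpP k hk
    have hpN : (p : ℤ) ^ J ∣ N ^ J := dvd_fact_pow hp hpP J
    have hyp : (p : ℤ) ^ J ∣ y 0 := by rw [hy0]; exact Dvd.dvd.mul_right hpN _
    obtain ⟨a1, ha1⟩ := hpN.trans hq1
    obtain ⟨a2, ha2⟩ := hpN.trans hR1
    obtain ⟨a3, ha3⟩ := hyp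
    refine hens_count _ _ _ p hp j0 (Pi.single j0 (-ℓ * ρ)) J ?_ (ℓ ^ 2) (D ^ 3) ?_
      (prime_dvd_fact_pow hp hℓ hpP hℓP 2) (pow_ne_zero _ hv) hJ k hk
    · rw [qf_at_single]
      refine ⟨a2 + (-ℓ * ρ) * a1 + a3 * A j0 j0 * (-ℓ * ρ) ^ 2, ?_⟩
      simp only [Matrix.smul_apply, smul_eq_mul]
      rw [ha3]
      linear_combination ha2 + (-ℓ * ρ) * ha1
    · have hd : (p : ℤ) ^ J ∣ ∑ b, (y 0 • A + (y 0 • A)ᵀ) j0 b *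
          (Pi.single j0 (-ℓ * ρ) : Fin m → ℤ) b := by
        refine Finset.dvd_sum fun b _ => Dvd.dvd.mul_right ?_ _
        simp only [Matrix.add_apply, Matrix.smul_apply, Matrix.transpose_apply, smul_eq_mul]
        rw [← mul_add, ha3, mul_assoc]
        exact dvd_mul_right _ _
      unfold dq
      rw [add_sub_assoc]
      refine dvd_add hd ⟨a1, ?_⟩
      rw [← ha1]; ring
  · intro k _
    rw [one_mul]
    have := unit_count (y 0 • A) (fun j => eval y (q j)) (eval y R) ℓ hℓ j0 ?_ ?_ k
    · exact_mod_cast this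
    · intro a b
      rw [Matrix.smul_apply, smul_eq_mul, hy0]
      exact Dvd.intro _ (by ring : (ℓ : ℤ) * (N ^ J * A a b) = N ^ J * ℓ * A a b)
    · intro h
      have h3 := (dvd_sub_right h).1 hq2
      rcases (Nat.prime_iff_prime_int.1 hℓ).dvd_or_dvd h3 with h4 | h4
      · rw [← pow_mul] at h4
        exact not_dvd_fact hℓ hℓP _ h4
      · rw [← eval_res0] at h4
        have := (Finset.mem_filter.1 ht).2
        rw [eval_val] at this
        exact this ((ZMod.intCast_zmod_eq_zero_iff_dvd _ _).2 h4)

end Cub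

open Matrix MvPolynomial

namespace Cub

lemma split0_aux {s : ℕ} (P : MvPolynomial (Fin (s + 1)) ℤ) :
    ∃ P' : MvPolynomial (Fin (s + 1)) ℤ, ∀ y, eval y P = y 0 * eval y P' +
      eval (Fin.tail y) (res0 P) := by
  induction P using MvPolynomial.induction_on with
  | C a => exact ⟨0, fun y => by simp [res0]⟩
  | add p q hp hq =>
    obtain ⟨p', hp'⟩ := hp
    obtain ⟨q', hq'⟩ := hq
    refine ⟨p' + q', fun y => ?_⟩
    have : res0 (p + q) = res0 p + res0 q := map_add _ _ _
    rw [this]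
    simp only [map_add, hp', hq']; ring
  | mul_X p i hp =>
    obtain ⟨p', hp'⟩ := hp
    have h1 : res0 (p * X i) = res0 p * (Fin.cons 0 X : Fin (s + 1) → MvPolynomial (Fin s) ℤ) i := by
      simp [res0]
    rw [h1]
    refine Fin.cases ?_ (fun i => ?_) i
    · refine ⟨p, fun y => by simp; ring⟩
    · refine ⟨p' * X i.succ, fun y => ?_⟩
      simp only [map_mul, eval_X, Fin.cons_succ]
      rw [hp' y]
      simp only [Fin.tail]
      ring

lemma split0 {s : ℕ} (P : MvPolynomial (Fin (s + 1)) ℤ) (d : ℕ) (hd : 2 ≤ d)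
    (hP : P.IsHomogeneous d) :
    ∃ P' : MvPolynomial (Fin (s + 1)) ℤ, (∀ y, eval y P = y 0 * eval y P' +
      eval (Fin.tail y) (res0 P)) ∧ ∀ (n : ℤ) y, (∀ i, n ∣ y i) → n ∣ eval y P' := by
  obtain ⟨P', h⟩ := split0_aux P
  refine ⟨P', h, ?_⟩
  have h0 : eval 0 P' = 0 := by
    set c := eval 0 P' with hc
    by_contra hne
    set r : ℤ := |c| + 1 with hr
    have hr0 : r ≠ 0 := by have := abs_nonneg c; omega
    set e : Fin (s + 1) → ℤ := Fin.cons 1 0 with he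
    have h1 := h (fun i => r * e i)
    rw [eval_smul_hom _ _ hP, eval_res0] at h1
    have h2 : eval (Fin.cons 0 (Fin.tail fun i => r * e i) : Fin (s + 1) → ℤ) P = 0 := by
      have : (Fin.cons 0 (Fin.tail fun i => r * e i) : Fin (s + 1) → ℤ) = fun i => 0 * e i := by
        funext i
        refine Fin.cases ?_ (fun i => ?_) i <;> simp [he, Fin.tail]
      rw [this, eval_smul_hom _ _ hP, zero_pow (by omega), zero_mul]
    rw [h2, add_zero] at h1
    obtain ⟨d', rfl⟩ : ∃ d', d = d' + 2 := ⟨d - 2, by omega⟩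
    have h3 : eval (fun i => r * e i) P' = r * (r ^ d' * eval e P) := by
      apply mul_left_cancel₀ hr0
      simp only [he, Fin.cons_zero, mul_one] at h1
      rw [← h1]; ring
    have h4 := eval_congr P' r (fun i => r * e i) 0 (fun i => by simp)
    rw [h3] at h4
    have h5 : r ∣ c := (dvd_sub_right (dvd_mul_right _ _)).1 h4
    have h6 := Int.le_of_dvd (abs_pos.2 hne) ((dvd_abs _ _).2 h5)
    omega
  intro n y hy
  have := eval_congr P' n y 0 (fun i => by simpa using hy i)
  rwa [h0, sub_zero] at this

lemma cnt_mul_le {m : ℕ} (M M' : Matrix (Fin m) (Fin m) ℤ) (l l' : Fin m → ℤ) (c c' a : ℤ) (n : ℕ)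
    [NeZero n]
    (hM : M' = a • M) (hl : ∀ j, l' j = a * l j) (hc : c' = a * c) :
    cnt M l c n ≤ cnt M' l' c' n := by
  subst hM hc
  unfold cnt
  refine Nat.card_le_card_of_injective (fun b => ⟨b.1, ?_⟩) ?_
  · have hb := b.2
    have : qf (a • M) l' (a * c) b.1 = (a : ZMod n) * qf M l c b.1 := by
      simp only [qf, Matrix.smul_apply, smul_eq_mul, hl, Int.cast_mul, mul_add, Finset.mul_sum]
      simp only [mul_assoc]
    rw [this, hb, mul_zero]
  · intro x y hxy
    exact Subtype.ext (by simpa using hxy)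

lemma exists_x0 {m : ℕ} (A : Matrix (Fin m) (Fin m) ℤ) (hA : A + Aᵀ ≠ 0) :
    ∃ x0 : Fin m → ℤ, qf A 0 0 x0 ≠ 0 ∧ ∃ i, ∑ b, (A + Aᵀ) i b * x0 b ≠ 0 := by
  classical
  by_contra hcon
  push Not at hcon
  have h0 : ∀ x : Fin m → ℤ, qf A 0 0 x = 0 := by
    intro x
    by_contra hx
    have h1 := hcon x hx
    have h2 := qf_diff (k := ℤ) A 0 0 x x
    have h3 : ∑ j, x j * (∑ i, (A + Aᵀ) j i * x i) = 0 := by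
      refine Finset.sum_eq_zero fun j _ => ?_
      rw [h1 j, mul_zero]
    simp only [Int.cast_id] at h2
    rw [h3] at h2
    have h4 : qf A 0 0 (x + x) = 4 * qf A 0 0 x := by
      simp only [qf, Pi.add_apply, Pi.zero_apply, Int.cast_zero, zero_mul, Finset.sum_const_zero, add_zero, Finset.mul_sum]
      refine Finset.sum_congr rfl fun i _ => Finset.sum_congr rfl fun j _ => ?_
      ring
    rw [h4] at h2
    simp at h2
    omega
  apply hA
  ext j i
  have h2 := qf_diff (k := ℤ) A 0 0 (Pi.single j 1) (Pi.single i 1)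
  rw [h0, h0, h0] at h2
  rw [Finset.sum_eq_single j] at h2
  · rw [Finset.sum_eq_single i] at h2
    · simp at h2
      simpa using h2.symm
    · intro b _ hb; simp [hb]
    · simp
  · intro b _ hb; simp [hb]
  · simp

lemma rr_le4 (p : ℕ) (hp : 3 ≤ p) : rr p ≤ 1 / 4 := by
  apply abs_le_of_sq_le_sq' _ (by norm_num) |>.2
  rw [rr_sq]
  have : (3 : ℝ) ^ 3 ≤ (p : ℝ) ^ 3 := by gcongr; exact_mod_cast hp
  rw [inv_le_comm₀ (by positivity) (by norm_num)]
  refine le_trans ?_ this; norm_num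

lemma cnt_ge_half {m : ℕ} (hm : 0 < m) (M : Matrix (Fin m) (Fin m) ℤ) (l : Fin m → ℤ) (c : ℤ)
    (W : Matrix (Fin 5) (Fin m) ℤ) (V : Matrix (Fin m) (Fin 5) ℤ) (D : ℤ)
    (hW : W * (M + Mᵀ) * V = D • (1 : Matrix (Fin 5) (Fin 5) ℤ))
    (p : ℕ) (hp : p.Prime) (hp3 : 3 ≤ p) (hpD : ¬ (p : ℤ) ∣ D) (k : ℕ) :
    (1 / 2 : ℝ) * (p : ℝ) ^ (k * (m - 1)) ≤ cnt M l c (p ^ k) := by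
  have h1 := sum_pow_ge M l c W V D hW p hp hpD k
  rw [sum_fR_pow M l c hm p hp k] at h1
  have h2 := rr_le4 p hp3
  have h3 := pow_nonneg (rr_nonneg p) (k + 1)
  have hpos : 0 < (p : ℝ) ^ (k * (m - 1)) := pow_pos (by exact_mod_cast hp.pos) _
  rw [← le_div_iff₀ hpos]
  linarith

lemma caseB {m s : ℕ} (hm : 0 < m) (A : Matrix (Fin m) (Fin m) ℤ) (W : Matrix (Fin 5) (Fin m) ℤ)
    (V : Matrix (Fin m) (Fin 5) ℤ) (D0 : ℤ) (hD0 : D0 ≠ 0)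
    (hW : W * (A + Aᵀ) * V = D0 • (1 : Matrix (Fin 5) (Fin 5) ℤ))
    (q : Fin m → MvPolynomial (Fin (s + 1)) ℤ) (hq : ∀ j, (q j).IsHomogeneous 2)
    (R : MvPolynomial (Fin (s + 1)) ℤ) (hR : R.IsHomogeneous 3)
    (hq0 : ∀ j, res0 (q j) = 0) (hR0 : (res0 R).IsHomogeneous 3) (v : Fin s → ℤ)
    (hv : eval v (res0 R) ≠ 0) (p0 : ℕ)
    (hcnt : ∀ ℓ : ℕ, ∀ _ : Fact ℓ.Prime, p0 ≤ ℓ → ℓ ^ s ≤ 2 * ℓ * (Finset.univ.filter fun t : Fin s → ZMod ℓ =>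
      eval t (MvPolynomial.map (Int.castRingHom (ZMod ℓ)) (res0 R)) = 0).card) :
    Good s (SgF A q R) := by
  classical
  have hA : A + Aᵀ ≠ 0 := by
    intro h
    rw [h] at hW
    have := congrFun (congrFun hW 0) 0
    simp at this
    exact hD0 this.symm
  obtain ⟨x0, hφ, i0, hw⟩ := exists_x0 A hA
  set φ := qf A 0 0 x0 with hφdef
  set w := ∑ b, (A + Aᵀ) i0 b * x0 b with hwdef
  set R0 := res0 R with hR0def
  set ρ := eval v R0 with hρ
  choose lj hlj1 hlj2 using fun j => split0 (q j) 2 le_rfl (hq j)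
  obtain ⟨Q, hQ1, hQ2⟩ := split0 R 3 (by norm_num) hR
  obtain ⟨J, hJ⟩ : ∃ J : ℕ, w ^ 2 < 2 ^ J := by
    refine ⟨(w ^ 2).natAbs, ?_⟩
    have := Nat.lt_two_pow_self (n := (w ^ 2).natAbs)
    have h2 : (w ^ 2) ≤ ((w ^ 2).natAbs : ℤ) := Int.le_natAbs
    refine lt_of_le_of_lt h2 ?_
    exact_mod_cast this
  obtain ⟨P0, hP0B, hP0⟩ := exists_P0 (D0.natAbs + φ.natAbs + ρ.natAbs + 2)
  set N : ℤ := (P0.factorial : ℤ) with hN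
  have hN0 : N ≠ 0 := by rw [hN]; exact_mod_cast P0.factorial_ne_zero
  set a : ℤ := -(φ ^ 2 * N ^ (3 * J) * ρ) with ha
  have ha0 : a ≠ 0 := neg_ne_zero.2
    (mul_ne_zero (mul_ne_zero (pow_ne_zero _ hφ) (pow_ne_zero _ hN0)) hv)
  set PP : ℝ := ∏ p ∈ (Finset.range (P0 + 1)).filter Nat.Prime,
    ((p : ℝ) ^ (J * (m - 1)))⁻¹ with hPP
  have hPP0 : 0 < PP := prod_pos' P0 J m
  have hL0 : a * N ^ J ≠ 0 := mul_ne_zero ha0 (pow_ne_zero _ hN0)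
  have hpa : ∀ p : ℕ, p.Prime → (p : ℤ) ∣ a → p ≤ P0 := by
    intro p hp h
    have hpi := Nat.prime_iff_prime_int.1 hp
    rw [ha, dvd_neg] at h
    rcases hpi.dvd_or_dvd h with h | h
    · rcases hpi.dvd_or_dvd h with h | h
      · exact prime_le_of_dvd hφ (hpi.dvd_of_dvd_pow h) (by omega)
      · have := hpi.dvd_of_dvd_pow h
        rw [hN] at this
        exact (hp.dvd_factorial).1 (by exact_mod_cast this)
    · exact prime_le_of_dvd hv h (by omega)
  refine ⟨a, ha0, PP / 8, by positivity,
    ((|a| + ∑ i, |φ * N ^ J * v i| + |a * N ^ J| + 1 : ℤ) : ℝ), ?_,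
    P0 + 1 + p0, fun ℓ hℓ hℓ0 => ?_⟩
  · have h1 : 0 ≤ ∑ i, |φ * N ^ J * v i| := Finset.sum_nonneg fun i _ => abs_nonneg _
    have h2 := abs_nonneg (a * N ^ J)
    have h3 := abs_nonneg a
    have : 0 < |a| + ∑ i, |φ * N ^ J * v i| + |a * N ^ J| + 1 := by linarith
    exact_mod_cast this
  have hF : Fact ℓ.Prime := ⟨hℓ⟩
  have : NeZero ℓ := ⟨hℓ.ne_zero⟩
  have hℓP : P0 < ℓ := by omega
  have hℓ3 : 3 ≤ ℓ := by omega
  have hcount := hcnt ℓ hF (by omega)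
  set T := Finset.univ.filter fun t : Fin s → ZMod ℓ =>
      eval t (MvPolynomial.map (Int.castRingHom (ZMod ℓ)) R0) = 0 with hT
  have hℓpos : (0 : ℝ) < ℓ := by exact_mod_cast hℓ.pos
  suffices hS : ∀ t ∈ T, (ℓ / 2 : ℝ) * (1 / 2) * PP ≤ SgF A q R (Fin.cons (a * ℓ)
      fun i => ℓ * (φ * N ^ J * v i) + a * N ^ J * ((t i).val : ℤ)) by
    obtain ⟨𝒞, h1, h2⟩ := family_sum (SgF A q R) ℓ a (a * N ^ J) (fun i => φ * N ^ J * v i)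
      hL0 T _ hS
    refine ⟨𝒞, h1, le_trans ?_ h2⟩
    have : ((ℓ ^ s : ℕ) : ℝ) ≤ ((2 * ℓ * T.card : ℕ) : ℝ) := by exact_mod_cast hcount
    push_cast at this
    nlinarith
  intro t ht
  set y : Fin (s + 1) → ℤ :=
    Fin.cons (a * ℓ) fun i => ℓ * (φ * N ^ J * v i) + a * N ^ J * ((t i).val : ℤ) with hy
  have hy0 : y 0 = a * ℓ := by simp [hy]
  have hNa : N ^ J ∣ a := ⟨-(φ ^ 2 * N ^ (2 * J) * ρ), by rw [ha]; ring⟩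
  have hyN : ∀ i, N ^ J ∣ y i := by
    intro i
    refine Fin.cases ?_ (fun i => ?_) i
    · rw [hy0]; exact Dvd.dvd.mul_right hNa _
    · simp only [hy, Fin.cons_succ]
      exact ⟨ℓ * (φ * v i) + a * ((t i).val : ℤ), by ring⟩
  have hc1 := eval_congr R0 (a * N ^ J) (Fin.tail y) (fun i => (ℓ * (φ * N ^ J)) * v i) (by
    intro i
    simp only [hy, Fin.tail, Fin.cons_succ]
    exact ⟨((t i).val : ℤ), by ring⟩)
  have hc2 := eval_congr R0 (ℓ : ℤ) (Fin.tail y) (fun i => (a * N ^ J) * ((t i).val : ℤ)) (by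
    intro i
    simp only [hy, Fin.tail, Fin.cons_succ]
    exact ⟨φ * N ^ J * v i, by ring⟩)
  rw [eval_smul_hom _ _ hR0] at hc1 hc2
  obtain ⟨k', hk'⟩ := hc1
  have hk1 : eval (Fin.tail y) R0 = a * (-(ℓ ^ 3 * φ) + N ^ J * k') := by
    have : (ℓ * (φ * N ^ J)) ^ 3 * eval v R0 = a * (-(ℓ ^ 3 * φ)) := by
      rw [ha, ← hρ]; ring
    rw [this] at hk'
    linear_combination hk'
  have hk2 : (ℓ : ℤ) ∣ eval (Fin.tail y) R0 := by
    have h1 := (Finset.mem_filter.1 ht).2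
    rw [eval_val] at h1
    have h2 := (ZMod.intCast_zmod_eq_zero_iff_dvd _ _).1 h1
    exact (dvd_sub_left (Dvd.dvd.mul_left h2 _)).1 hc2
  obtain ⟨k2, hk2⟩ := hk2
  have hqy : ∀ j, eval y (q j) = a * ℓ * eval y (lj j) := by
    intro j
    rw [hlj1 j y, hq0 j, hy0]; simp
  have hRy : eval y R = a * ℓ * eval y Q + eval (Fin.tail y) R0 := by
    rw [hQ1 y, hy0]
  unfold SgF
  have hcert : W * (y 0 • A + (y 0 • A)ᵀ) * V = (y 0 * D0) • (1 : Matrix (Fin 5) (Fin 5) ℤ) := by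
    rw [Matrix.transpose_smul, ← smul_add, Matrix.mul_smul, Matrix.smul_mul, hW, smul_smul]
  have hcert2 : W * (a • A + (a • A)ᵀ) * V = (a * D0) • (1 : Matrix (Fin 5) (Fin 5) ℤ) := by
    rw [Matrix.transpose_smul, ← smul_add, Matrix.mul_smul, Matrix.smul_mul, hW, smul_smul]
  have hy00 : y 0 ≠ 0 := by
    rw [hy0]; exact mul_ne_zero ha0 (by exact_mod_cast hℓ.ne_zero)
  refine sing_lower (y 0 • A) (fun j => eval y (q j)) (eval y R) hm P0 hP0 W V (y 0 * D0)
    (mul_ne_zero hy00 hD0) hcert ℓ hℓ hℓP ?_ J ?_ (ℓ / 2) (by positivity) ?_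
  · intro p hp hpd
    have hpi := Nat.prime_iff_prime_int.1 hp
    rcases hpi.dvd_or_dvd hpd with h | h
    · rw [hy0] at h
      rcases hpi.dvd_or_dvd h with h | h
      · left
        exact hpa p hp h
      · right
        exact (Nat.prime_dvd_prime_iff_eq hp hℓ).1 (by exact_mod_cast h)
    · left
      exact prime_le_of_dvd hD0 h (by omega)
  · intro p hp hpP k hk
    have : NeZero (p ^ k) := ⟨pow_ne_zero _ hp.ne_zero⟩
    have hpN : (p : ℤ) ^ J ∣ N ^ J := dvd_fact_pow hp hpP J
    have hljd : ∀ j, (p : ℤ) ^ J ∣ eval y (lj j) := fun j => hpN.trans (hlj2 j _ y hyN)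
    have hQd : (p : ℤ) ^ J ∣ eval y Q := hpN.trans (hQ2 _ y hyN)
    refine le_trans ?_ (cnt_mul_le ((ℓ : ℤ) • A) (y 0 • A) (fun j => ℓ * eval y (lj j)) _
      (ℓ * eval y Q + (-(ℓ ^ 3 * φ) + N ^ J * k')) _ a (p ^ k) ?_ ?_ ?_)
    · refine hens_count _ _ _ p hp i0 (fun j => ℓ * x0 j) J ?_ (ℓ ^ 2) w ?_
        (prime_dvd_fact_pow hp hℓ hpP hℓP 2) hw hJ k hk
      · have e : qf ((ℓ : ℤ) • A) (fun j => ℓ * eval y (lj j))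
            (ℓ * eval y Q + (-(ℓ ^ 3 * φ) + N ^ J * k')) (fun j => (ℓ : ℤ) * x0 j) =
            ℓ ^ 2 * ∑ j, eval y (lj j) * x0 j + ℓ * eval y Q + N ^ J * k' := by
          have e1 : ∑ a, ∑ b, (((ℓ : ℤ) • A) a b) * (ℓ * x0 a) * (ℓ * x0 b) = ℓ ^ 3 * φ := by
            rw [hφdef]
            simp only [qf, Pi.zero_apply, Int.cast_zero, zero_mul, Finset.sum_const_zero,
              add_zero, Finset.mul_sum, Int.cast_id]
            refine Finset.sum_congr rfl fun i _ => Finset.sum_congr rfl fun j _ => ?_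
            rw [Matrix.smul_apply, smul_eq_mul]; ring
          have e2 : ∑ j, (ℓ * eval y (lj j)) * (ℓ * x0 j) =
              ℓ ^ 2 * ∑ j, eval y (lj j) * x0 j := by
            rw [Finset.mul_sum]
            exact Finset.sum_congr rfl fun i _ => by ring
          simp only [qf, Int.cast_id]
          rw [e1, e2]; ring
        rw [e]
        refine dvd_add (dvd_add (Dvd.dvd.mul_left ?_ _) (Dvd.dvd.mul_left hQd _))
          (Dvd.dvd.mul_right hpN _)
        exact Finset.dvd_sum fun j _ => Dvd.dvd.mul_right (hljd j) _
      · have e : dq ((ℓ : ℤ) • A) (fun j => ℓ * eval y (lj j)) i0 (fun j => (ℓ : ℤ) * x0 j)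
            - ℓ ^ 2 * w = ℓ * eval y (lj i0) := by
          have e1 : ∑ b, ((ℓ : ℤ) • A + ((ℓ : ℤ) • A)ᵀ) i0 b * (ℓ * x0 b) = ℓ ^ 2 * w := by
            rw [hwdef, Finset.mul_sum]
            refine Finset.sum_congr rfl fun b _ => ?_
            simp only [Matrix.add_apply, Matrix.smul_apply, Matrix.transpose_apply, smul_eq_mul]
            ring
          unfold dq
          rw [e1]; ring
        rw [e]
        exact Dvd.dvd.mul_left (hljd i0) _
    · rw [hy0, smul_smul]
    · intro j; rw [hqy j]; ring
    · rw [hRy, hk1]; ring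
  · intro k hk
    obtain ⟨k, rfl⟩ : ∃ k', k = k' + 1 := ⟨k - 1, by omega⟩
    have hℓa : ¬ (ℓ : ℤ) ∣ a * D0 := by
      intro h
      rcases (Nat.prime_iff_prime_int.1 hℓ).dvd_or_dvd h with h | h
      · have := hpa ℓ hℓ h; omega
      · have := prime_le_of_dvd hD0 h (le_refl _); omega
    have h1 := cnt_ge_half hm (a • A) (fun j => a * eval y (lj j)) (a * eval y Q + k2)
      W V (a * D0) hcert2 ℓ hℓ hℓ3 hℓa k
    have h2 := cnt_scaled (a • A) (fun j => a * eval y (lj j)) (a * eval y Q + k2) ℓ hℓ k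
    have e1 : (ℓ : ℤ) • a • A = y 0 • A := by rw [smul_smul, hy0, mul_comm]
    have e2 : (fun j => (ℓ : ℤ) * (a * eval y (lj j))) = fun j => eval y (q j) := by
      funext j; rw [hqy j]; ring
    have e3 : (ℓ : ℤ) * (a * eval y Q + k2) = eval y R := by rw [hRy, hk2]; ring
    rw [e1, e2, e3] at h2
    rw [h2]
    push_cast
    have e4 : (ℓ : ℝ) ^ ((k + 1) * (m - 1)) * ℓ = ℓ ^ m * ℓ ^ (k * (m - 1)) := by
      rw [← pow_succ, ← pow_add]
      congr 1
      obtain ⟨m', rfl⟩ : ∃ m', m = m' + 1 := ⟨m - 1, by omega⟩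
      simp only [Nat.add_sub_cancel]; ring
    calc (ℓ / 2 : ℝ) * ℓ ^ ((k + 1) * (m - 1)) = (ℓ ^ ((k + 1) * (m - 1)) * ℓ) * (1 / 2) := by ring
      _ = ℓ ^ m * (1 / 2 * ℓ ^ (k * (m - 1))) := by rw [e4]; ring
      _ ≤ _ := by gcongr

end Cub

open Matrix MvPolynomial

namespace Cub

section ranks
variable {K : Type*} [Field K]

lemma mat_rank_add {n : ℕ} (M N : Matrix (Fin n) (Fin n) K) :
    (M + N).rank ≤ M.rank + N.rank := by
  unfold Matrix.rank
  rw [Matrix.mulVecLin_add]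
  refine le_trans (Submodule.finrank_mono (t := LinearMap.range M.mulVecLin ⊔ LinearMap.range N.mulVecLin) ?_)
    (Submodule.finrank_add_le_finrank_add_finrank _ _)
  rintro _ ⟨x, rfl⟩
  exact Submodule.add_mem_sup ⟨x, rfl⟩ ⟨x, rfl⟩

lemma mat_rank_smul {n : ℕ} (c : K) (hc : c ≠ 0) (M : Matrix (Fin n) (Fin n) K) :
    (c • M).rank = M.rank :=
  Matrix.rank_smul_of_mem_nonZeroDivisors M (mem_nonZeroDivisors_of_ne_zero hc)

lemma rank_of_det {ι : Type*} [Fintype ι] [DecidableEq ι] {n : ℕ} (M : Matrix (Fin n) (Fin n) K)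
    (W : Matrix ι (Fin n) K) (V : Matrix (Fin n) ι K) (h : (W * M * V).det ≠ 0) :
    Fintype.card ι ≤ M.rank := by
  have h1 : (W * M * V).rank = Fintype.card ι :=
    Matrix.rank_of_isUnit _ ((Matrix.isUnit_iff_isUnit_det _).2 (isUnit_iff_ne_zero.2 h))
  rw [← h1]
  exact (Matrix.rank_mul_le_left _ _).trans (Matrix.rank_mul_le_right _ _)

lemma card_det_le {ι : Type*} [Fintype ι] [DecidableEq ι] (N : Matrix ι ι K) (S : Finset K)
    (hS : ∀ x ∈ S, (x • (1 : Matrix ι ι K) + N).det = 0) : S.card ≤ Fintype.card ι := by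
  have h0 : (-N).charpoly ≠ 0 := (Matrix.charpoly_monic _).ne_zero
  rw [← Matrix.charpoly_natDegree_eq_dim (-N)]
  refine Polynomial.card_le_degree_of_subset_roots fun x hx => ?_
  rw [Polynomial.mem_roots h0, Polynomial.IsRoot.def, Matrix.eval_charpoly]
  rw [sub_neg_eq_add, ← hS x hx, Matrix.smul_one_eq_diagonal]
  rfl

lemma rank_lt_card {n r : ℕ} (M N : Matrix (Fin n) (Fin n) K) (hr : r ≤ N.rank) (S : Finset K)
    (hS : ∀ x ∈ S, (M + x • N).rank < r) : S.card ≤ r := by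
  obtain ⟨W, V, h⟩ := cert_of_rank N hr
  have := card_det_le (W * M * V) S (fun x hx => by
    by_contra hne
    have h1 : W * (M + x • N) * V = x • (1 : Matrix (Fin r) (Fin r) K) + W * M * V := by
      rw [Matrix.mul_add, Matrix.add_mul, Matrix.mul_smul, Matrix.smul_mul, h, add_comm]
    rw [← h1] at hne
    have h2 := rank_of_det _ _ _ hne
    have h3 := hS x hx
    simp at h2
    omega)
  simpa using this

/-- maximal-rank argument -/
lemma max_rank_step [Infinite K] {n : ℕ} (A M : Matrix (Fin n) (Fin n) K) (v : Fin n → K)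
    (hv : A.mulVec v = 0) (hmax : ∀ x : K, (x • A + M).rank ≤ A.rank) :
    M.mulVec v ∈ LinearMap.range A.mulVecLin := by
  classical
  by_contra hnot
  set r := A.rank with hr
  obtain ⟨W0, V, hWV⟩ := cert_of_rank A (le_refl A.rank)
  let P : Matrix (Fin n) (Fin r ⊕ Unit) K := Matrix.fromCols (A * V) (Matrix.replicateCol Unit (M.mulVec v))
  have hinj : Function.Injective P.mulVec := by
    have : Function.Injective P.mulVecLin := by
      rw [← LinearMap.ker_eq_bot, LinearMap.ker_eq_bot']
      intro z hz
      have hz' : (A * V).mulVec (z ∘ Sum.inl) + z (Sum.inr ()) • M.mulVec v = 0 := by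
        have : P.mulVec z = 0 := hz
        rw [Matrix.fromCols_mulVec] at this
        rw [← this]
        congr 1
        ext i
        simp [Matrix.mulVec, dotProduct, mul_comm]
      have h0 : z (Sum.inr ()) = 0 := by
        by_contra hne
        apply hnot
        have : M.mulVec v = A.mulVec (-(z (Sum.inr ()))⁻¹ • V.mulVec (z ∘ Sum.inl)) := by
          rw [Matrix.mulVec_smul, Matrix.mulVec_mulVec, neg_smul, eq_neg_of_add_eq_zero_left hz',
            smul_neg, smul_smul, inv_mul_cancel₀ hne, neg_neg, one_smul]
        rw [this]
        exact ⟨_, rfl⟩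
      rw [h0, zero_smul, add_zero] at hz'
      have h1 : z ∘ Sum.inl = 0 := by
        have := congrArg W0.mulVec hz'
        rwa [Matrix.mulVec_mulVec, ← Matrix.mul_assoc, hWV, Matrix.one_mulVec, Matrix.mulVec_zero] at this
      funext i
      rcases i with i | i
      · exact congrFun h1 i
      · exact h0
    exact this
  obtain ⟨g, hg⟩ := LinearMap.exists_leftInverse_of_injective P.mulVecLin
    (LinearMap.ker_eq_bot.2 hinj)
  set W : Matrix (Fin r ⊕ Unit) (Fin n) K := LinearMap.toMatrix' g with hW
  have hWP : W * P = 1 := by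
    apply (Matrix.toLin' (R := K)).injective
    rw [Matrix.toLin'_mul, Matrix.toLin'_toMatrix', Matrix.toLin'_one]
    exact hg
  let Q : Matrix (Fin n) (Fin r ⊕ Unit) K := Matrix.fromCols (M * V) 0
  obtain ⟨x, hx⟩ : ∃ x : K, (x • (1 : Matrix (Fin r ⊕ Unit) (Fin r ⊕ Unit) K) + W * Q).det ≠ 0 := by
    by_contra hcon
    push Not at hcon
    obtain ⟨S, hS⟩ := Infinite.exists_subset_card_eq K (Fintype.card (Fin r ⊕ Unit) + 1)
    have := card_det_le (W * Q) S fun x _ => hcon x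
    omega
  have key : W * (x • A + M) * (Matrix.fromCols V (Matrix.replicateCol Unit (x • v))) =
      x • (1 : Matrix (Fin r ⊕ Unit) (Fin r ⊕ Unit) K) + W * Q := by
    rw [← hWP, Matrix.mul_assoc, ← Matrix.mul_smul, ← Matrix.mul_add]
    congr 1
    have e1 : (x • A + M) * Matrix.replicateCol Unit (x • v) = Matrix.replicateCol Unit (x • M.mulVec v) := by
      ext i j
      have := congrFun hv i
      have h2 : ((x • A + M).mulVec (x • v)) i = (x • M.mulVec v) i := by
        rw [Matrix.mulVec_smul, Matrix.add_mulVec, Matrix.smul_mulVec, hv, smul_zero, zero_add]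
      simpa [Matrix.mul_apply, Matrix.mulVec, dotProduct] using h2
    rw [Matrix.mul_fromCols, e1]
    ext i j
    rcases j with j | j
    · simp [P, Q, Matrix.add_mul, Matrix.add_apply]
    · simp [P, Q]
  rw [← key] at hx
  have h1 := rank_of_det _ _ _ hx
  have h2 := hmax x
  simp at h1
  omega

end ranks

section Hm
variable {s : ℕ} (B : Fin s → Fin s → Fin s → ℤ) {k : Type*} [CommRing k]

/-- Hessian-type matrix of the symmetric trilinear form `B`. -/
def Hm (u : Fin s → k) : Matrix (Fin s) (Fin s) k :=
  Matrix.of fun j l => ∑ i, (B i j l : k) * u i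

lemma Hm_add (u v : Fin s → k) : Hm B (u + v) = Hm B u + Hm B v := by
  ext j l; simp [Hm, mul_add, Finset.sum_add_distrib]

lemma Hm_smul (c : k) (u : Fin s → k) : Hm B (c • u) = c • Hm B u := by
  ext j l; simp only [Hm, Matrix.of_apply, Matrix.smul_apply, Pi.smul_apply, smul_eq_mul, Finset.mul_sum]
  exact Finset.sum_congr rfl fun i _ => by ring

lemma Hm_sub (u v : Fin s → k) : Hm B (u - v) = Hm B u - Hm B v := by
  ext j l; simp [Hm, mul_sub, Finset.sum_sub_distrib]

lemma Hm_map {k' : Type*} [CommRing k'] (φ : k →+* k') (u : Fin s → k) :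
    (Hm B u).map φ = Hm B (fun i => φ (u i)) := by
  ext j l; simp [Hm, map_sum]

/-- full symmetry -/
structure Sym3 (B : Fin s → Fin s → Fin s → ℤ) : Prop where
  s12 : ∀ i j l, B i j l = B j i l
  s23 : ∀ i j l, B i j l = B i l j

variable {B}

lemma Hm_transpose (hB : Sym3 B) (u : Fin s → k) : (Hm B u)ᵀ = Hm B u := by
  ext j l
  simp only [Hm, Matrix.transpose_apply, Matrix.of_apply]
  exact Finset.sum_congr rfl fun i _ => by rw [hB.s23]

lemma Hm_comm (hB : Sym3 B) (u v : Fin s → k) : (Hm B u).mulVec v = (Hm B v).mulVec u := by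
  ext j
  simp only [Hm, Matrix.mulVec, dotProduct, Matrix.of_apply, Finset.sum_mul]
  rw [Finset.sum_comm]
  refine Finset.sum_congr rfl fun i _ => Finset.sum_congr rfl fun l _ => ?_
  rw [hB.s12 i j l, hB.s23 j i l, hB.s12 j l i]
  ring

/-- Davenport's lemma -/
lemma davenport {s : ℕ} {B : Fin s → Fin s → Fin s → ℤ} (hB : Sym3 B) (T : Submodule ℚ (Fin s → ℚ)) (d : ℕ)
    (hT : ∀ u ∈ T, (Hm B u).rank ≤ d) :
    ∃ L : Submodule ℚ (Fin s → ℚ), Module.finrank ℚ T ≤ Module.finrank ℚ L + d ∧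
      ∀ v ∈ L, v ⬝ᵥ (Hm B v).mulVec v = 0 := by
  classical
  obtain ⟨z, hz⟩ : ∃ z : T, ∀ w : T, (Hm B (w : Fin s → ℚ)).rank ≤ (Hm B (z : Fin s → ℚ)).rank := by
    have hne : (Set.range fun w : T => (Hm B (w : Fin s → ℚ)).rank).Nonempty := ⟨_, 0, rfl⟩
    have hbd : BddAbove (Set.range fun w : T => (Hm B (w : Fin s → ℚ)).rank) :=
      ⟨d, by rintro _ ⟨w, rfl⟩; exact hT w w.2⟩
    obtain ⟨z, hz⟩ := Nat.sSup_mem hne hbd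
    exact ⟨z, fun w => (le_csSup hbd ⟨w, rfl⟩).trans hz.ge⟩
  set A := Hm B (z : Fin s → ℚ) with hA
  refine ⟨T ⊓ LinearMap.ker A.mulVecLin, ?_, ?_⟩
  · have h1 := Submodule.finrank_sup_add_finrank_inf_eq T (LinearMap.ker A.mulVecLin)
    have h2 := LinearMap.finrank_range_add_finrank_ker A.mulVecLin
    have h3 : Module.finrank ℚ (LinearMap.range A.mulVecLin) ≤ d := hT z z.2
    have h4 := Submodule.finrank_le (T ⊔ LinearMap.ker A.mulVecLin)
    omega
  · intro v hv
    have hAv : A.mulVec v = 0 := hv.2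
    obtain ⟨x, hx⟩ := max_rank_step A (Hm B v) v hAv (by
      intro x
      have := hz ⟨x • (z : Fin s → ℚ) + v, T.add_mem (T.smul_mem _ z.2) hv.1⟩
      simpa [Hm_add, Hm_smul] using this)
    rw [← hx]
    change v ⬝ᵥ A.mulVec x = 0
    rw [Matrix.dotProduct_mulVec, ← Matrix.mulVec_transpose, hA, Hm_transpose hB, ← hA, hAv,
      zero_dotProduct]

end Hm
end Cub

open Matrix MvPolynomial

namespace Cub

lemma affine_of_slopes (φ : ℚ → ℚ) (F : Set ℚ) (hF : F.Finite)
    (h : ∀ x y, x ≠ y → (φ x - φ y) / (x - y) ∈ F) : ∃ σ, ∀ y, φ y = φ 0 + σ * y := by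
  classical
  have hinf : ({0}ᶜ : Set ℚ).Infinite := (Set.finite_singleton (0 : ℚ)).infinite_compl
  obtain ⟨σ, hσ⟩ : ∃ σ, {x : ℚ | x ≠ 0 ∧ φ x = φ 0 + σ * x}.Infinite := by
    by_contra hcon
    push Not at hcon
    apply hinf
    refine (hF.biUnion (t := fun σ => {x : ℚ | x ≠ 0 ∧ φ x = φ 0 + σ * x}) fun σ _ => ?_).subset ?_
    · exact hcon σ
    · intro x hx
      have hx0 : x ≠ 0 := hx
      refine Set.mem_biUnion (h x 0 hx0) ⟨hx0, ?_⟩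
      rw [sub_zero, div_mul_cancel₀ _ hx0]; ring
  refine ⟨σ, fun y => ?_⟩
  by_contra hy
  refine Set.infinite_of_injOn_mapsTo (s := {x : ℚ | x ≠ 0 ∧ φ x = φ 0 + σ * x})
    (f := fun x => (φ x - φ y) / (x - y)) (t := F) ?_ ?_ hσ hF
  · rintro x ⟨hx0, hx⟩ x' ⟨hx0', hx'⟩ hxx
    have hxy : x - y ≠ 0 := by
      intro h0
      have : x = y := by linarith
      rw [this] at hx; exact hy hx
    have hxy' : x' - y ≠ 0 := by
      intro h0
      have : x' = y := by linarith
      rw [this] at hx'; exact hy hx'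
    simp only [hx, hx'] at hxx
    rw [div_eq_div_iff hxy hxy'] at hxx
    have h2 : (φ y - φ 0 - σ * y) * (x - x') = 0 := by linear_combination hxx
    rcases mul_eq_zero.1 h2 with h3 | h3
    · exact absurd (by linarith) hy
    · linarith
  · rintro x ⟨hx0, hx⟩
    refine h x y ?_
    rintro rfl
    exact hy hx

lemma exists_int_smul {s : ℕ} (u : Fin s → ℚ) : ∃ d : ℤ, d ≠ 0 ∧ ∃ e : Fin s → ℤ,
    (fun i => (e i : ℚ)) = (d : ℚ) • u := by
  obtain ⟨d, hd, h⟩ := common_denom u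
  choose z hz using h
  exact ⟨d, hd, z, funext fun i => by simp [hz i]⟩

variable {s : ℕ} {B : Fin s → Fin s → Fin s → ℤ}

/-- nondegeneracy hypothesis -/
def ND (B : Fin s → Fin s → Fin s → ℤ) : Prop :=
  ∀ L : Submodule ℚ (Fin s → ℚ), s ≤ Module.finrank ℚ L + 4 →
    ∃ v ∈ L, v ⬝ᵥ (Hm B v).mulVec v ≠ 0

lemma exists_e (hB : Sym3 B) (hND : ND B) :
    ∃ e : Fin s → ℤ, 5 ≤ (Hm B (fun i => (e i : ℚ))).rank := by
  by_contra hcon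
  push Not at hcon
  obtain ⟨L, hL, hL0⟩ := davenport hB ⊤ 4 (fun u _ => by
    obtain ⟨d, hd, e, he⟩ := exists_int_smul u
    have := hcon e
    rw [he, Hm_smul, mat_rank_smul _ (by exact_mod_cast hd)] at this
    omega)
  rw [finrank_top, Module.finrank_fin_fun] at hL
  obtain ⟨v, hv, hv0⟩ := hND L hL
  exact hv0 (hL0 v hv)

lemma exists_f (hB : Sym3 B) (hND : ND B) (e : Fin s → ℚ) (he : 5 ≤ (Hm B e).rank) :
    ∃ f : Fin s → ℤ, ∀ θ : ℚ, 3 ≤ (Hm B ((fun i => (f i : ℚ)) + θ • e)).rank := by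
  classical
  by_contra hcon
  push Not at hcon
  have hex : ∀ f : Fin s → ℚ, ∃ θ : ℚ, (Hm B (f + θ • e)).rank ≤ 2 := by
    intro f
    obtain ⟨d, hd, f', hf'⟩ := exists_int_smul f
    obtain ⟨θ, hθ⟩ := hcon f'
    have hd' : (d : ℚ) ≠ 0 := by exact_mod_cast hd
    refine ⟨θ / d, ?_⟩
    rw [hf'] at hθ
    have : (d : ℚ) • f + θ • e = (d : ℚ) • (f + (θ / d) • e) := by
      rw [smul_add, smul_smul, mul_div_cancel₀ _ hd']
    rw [this, Hm_smul, mat_rank_smul _ hd'] at hθ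
    omega
  choose θ hθ using hex
  -- rank of differences
  have hsub : ∀ f g : Fin s → ℚ, ∀ a b : ℚ, (Hm B (f + a • e)).rank ≤ 2 →
      (Hm B (g + b • e)).rank ≤ 2 → (Hm B ((f - g) + (a - b) • e)).rank < 5 := by
    intro f g a b h1 h2
    have e1 : (f - g) + (a - b) • e = (f + a • e) + (-1 : ℚ) • (g + b • e) := by
      ext i; simp; ring
    rw [e1, Hm_add, Hm_smul]
    have h3 := mat_rank_add (Hm B (f + a • e)) ((-1 : ℚ) • Hm B (g + b • e))
    rw [mat_rank_smul _ (by norm_num)] at h3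
    omega
  have huniq : ∀ f : Fin s → ℚ, ∀ a : ℚ, (Hm B (f + a • e)).rank ≤ 2 → θ f = a := by
    intro f a h
    by_contra hne
    have h1 := hsub f f _ _ (hθ f) h
    rw [sub_self, zero_add, Hm_smul, mat_rank_smul _ (sub_ne_zero.2 hne)] at h1
    omega
  have hhom : ∀ (c : ℚ) f, θ (c • f) = c * θ f := by
    intro c f
    by_cases hc : c = 0
    · subst hc
      rw [zero_smul, zero_mul]
      apply huniq
      have : (Hm B (0 + (0 : ℚ) • e)) = 0 := by
        rw [zero_smul, add_zero]; ext; simp [Hm]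
      rw [this]; simp
    · apply huniq
      rw [mul_smul, ← smul_add, Hm_smul, mat_rank_smul _ hc]
      exact hθ f
  have hline : ∀ f g : Fin s → ℚ, ∃ σ, ∀ x : ℚ, θ (f + x • g) = θ f + σ * x := by
    intro f g
    have hfin : {τ : ℚ | (Hm B (g + τ • e)).rank < 5}.Finite := by
      by_contra hinf
      obtain ⟨S, hS, hS2⟩ := Set.Infinite.exists_subset_card_eq hinf 6
      have := rank_lt_card (Hm B g) (Hm B e) he S (fun x hx => by
        have := hS hx
        rw [Set.mem_ofPred_eq, Hm_add, Hm_smul] at this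
        exact this)
      omega
    obtain ⟨σ, hσ⟩ := affine_of_slopes (fun x => θ (f + x • g)) _ hfin (by
      intro x y hxy
      have hxy' : x - y ≠ 0 := sub_ne_zero.2 hxy
      have h1 := hsub _ _ _ _ (hθ (f + x • g)) (hθ (f + y • g))
      have e1 : (f + x • g - (f + y • g)) + (θ (f + x • g) - θ (f + y • g)) • e =
          (x - y) • (g + ((θ (f + x • g) - θ (f + y • g)) / (x - y)) • e) := by
        rw [smul_add, smul_smul, mul_div_cancel₀ _ hxy', add_sub_add_left_eq_sub, ← sub_smul]
      rw [e1, Hm_smul, mat_rank_smul _ hxy'] at h1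
      exact h1)
    refine ⟨σ, fun x => ?_⟩
    have := hσ x
    simpa using this
  have hadd : ∀ f g, θ (f + g) = θ f + θ g := by
    intro f g
    obtain ⟨σ, hσ⟩ := hline f (g - f)
    have h1 := hσ 1
    have h2 := hσ (1 / 2)
    have e1 : f + (1 : ℚ) • (g - f) = g := by simp
    have e2 : f + (1 / 2 : ℚ) • (g - f) = (1 / 2 : ℚ) • (f + g) := by
      ext i; simp; ring
    rw [e1] at h1
    rw [e2, hhom] at h2
    linarith
  let Θ : (Fin s → ℚ) →ₗ[ℚ] ℚ :=
    { toFun := θ, map_add' := hadd, map_smul' := fun c f => by simp [hhom] }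
  obtain ⟨L, hL, hL0⟩ := davenport hB (LinearMap.ker Θ) 2 (fun u hu => by
    have h1 : θ u = 0 := hu
    have := hθ u
    rwa [h1, zero_smul, add_zero] at this)
  have h1 := LinearMap.finrank_range_add_finrank_ker Θ
  have h2 : Module.finrank ℚ (LinearMap.range Θ) ≤ 1 := by
    have := Submodule.finrank_le (LinearMap.range Θ)
    simpa using this
  rw [Module.finrank_fin_fun] at h1
  obtain ⟨v, hv, hv0⟩ := hND L (by omega)
  exact hv0 (hL0 v hv)

end Cub

open Matrix MvPolynomial

namespace Cub

lemma rational_eig {K : Type*} [Field K] [CharZero K] (N : Matrix (Fin 5) (Fin 5) ℚ) (β : K)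
    (h : (N.map (algebraMap ℚ K) - β • (1 : Matrix (Fin 5) (Fin 5) K)).rank ≤ 2) :
    ∃ b : ℚ, β = algebraMap ℚ K b := by
  classical
  set P : Polynomial ℚ := N.charpoly with hP
  have hP0 : P ≠ 0 := (Matrix.charpoly_monic _).ne_zero
  have hPK : (N.map (algebraMap ℚ K)).charpoly = P.map (algebraMap ℚ K) := Matrix.charpoly_map _ _
  have hmul : 3 ≤ (P.map (algebraMap ℚ K)).rootMultiplicity β := by
    rw [← hPK]
    have h1 := LinearMap.finrank_eigenspace_le (Matrix.toLin' (N.map (algebraMap ℚ K))) β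
    rw [Matrix.charpoly_toLin'] at h1
    refine le_trans ?_ h1
    have h2 := LinearMap.finrank_range_add_finrank_ker
      (N.map (algebraMap ℚ K) - β • (1 : Matrix (Fin 5) (Fin 5) K)).mulVecLin
    rw [Module.finrank_fin_fun] at h2
    have h3 : Module.finrank K (LinearMap.range
      (N.map (algebraMap ℚ K) - β • (1 : Matrix (Fin 5) (Fin 5) K)).mulVecLin) ≤ 2 := h
    have h4 : LinearMap.ker (N.map (algebraMap ℚ K) - β • (1 : Matrix (Fin 5) (Fin 5) K)).mulVecLin
        = Module.End.eigenspace (Matrix.toLin' (N.map (algebraMap ℚ K))) β := by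
      ext v
      rw [Module.End.mem_eigenspace_iff, LinearMap.mem_ker, Matrix.mulVecLin_apply,
        Matrix.sub_mulVec, Matrix.smul_mulVec, Matrix.one_mulVec, sub_eq_zero, Matrix.toLin'_apply]
    rw [← h4]
    omega
  have hroot : (P.map (algebraMap ℚ K)).IsRoot β := by
    have : 0 < (P.map (algebraMap ℚ K)).rootMultiplicity β := by omega
    exact (Polynomial.rootMultiplicity_pos'.1 this).2
  have hintg : IsIntegral ℚ β := by
    refine ⟨P, Matrix.charpoly_monic _, ?_⟩
    rw [← Polynomial.eval_map]; exact hroot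
  have hirr := minpoly.irreducible hintg
  have hm0 : minpoly ℚ β ≠ 0 := minpoly.ne_zero hintg
  obtain ⟨c, hc, hndvd⟩ := (FiniteMultiplicity.of_not_isUnit hirr.not_isUnit hP0).exists_eq_pow_mul_and_not_dvd
  generalize multiplicity (minpoly ℚ β) P = k at hc
  have hsep : (minpoly ℚ β).Separable := hirr.separable
  have hm0K : (minpoly ℚ β).map (algebraMap ℚ K) ≠ 0 := Polynomial.map_ne_zero hm0
  have hc0 : c ≠ 0 := by rintro rfl; simp at hndvd
  have hc0K : c.map (algebraMap ℚ K) ≠ 0 := Polynomial.map_ne_zero hc0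
  have hr1 : ((minpoly ℚ β).map (algebraMap ℚ K)).rootMultiplicity β ≤ 1 :=
    Polynomial.rootMultiplicity_le_one_of_separable (hsep.map) β
  have hr2 : (c.map (algebraMap ℚ K)).rootMultiplicity β = 0 := by
    apply Polynomial.rootMultiplicity_eq_zero
    intro hr
    apply hndvd
    apply minpoly.dvd
    rw [Polynomial.aeval_def, ← Polynomial.eval_map]; exact hr
  have hk : 3 ≤ k := by
    rw [hc, Polynomial.map_mul, Polynomial.map_pow, Polynomial.rootMultiplicity_mul
      (mul_ne_zero (pow_ne_zero _ hm0K) hc0K), hr2, add_zero] at hmul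
    rw [← Polynomial.count_roots, Polynomial.roots_pow, Multiset.count_nsmul,
      Polynomial.count_roots] at hmul
    have := Nat.mul_le_mul_left k hr1
    rw [mul_one] at this
    exact hmul.trans this
  have hdeg : P.natDegree = 5 := by rw [hP, Matrix.charpoly_natDegree_eq_dim]; simp
  have hd1 : (minpoly ℚ β).natDegree ≤ 1 := by
    rw [hc, Polynomial.natDegree_mul (pow_ne_zero _ hm0) hc0, Polynomial.natDegree_pow] at hdeg
    by_contra h2
    have := Nat.mul_le_mul hk (Nat.lt_of_not_le h2)
    omega
  have hd2 : (minpoly ℚ β).natDegree = 1 := le_antisymm hd1 (minpoly.natDegree_pos hintg)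
  have := minpoly.mem_range_of_degree_eq_one ℚ β (by
    rw [Polynomial.degree_eq_natDegree hm0, hd2]; rfl)
  obtain ⟨b, hb⟩ := this
  exact ⟨b, hb.symm⟩

variable {s : ℕ} {B : Fin s → Fin s → Fin s → ℤ}

lemma rank_map_ge {K : Type*} [Field K] [Algebra ℚ K] {r : ℕ} (M : Matrix (Fin s) (Fin s) ℚ)
    (h : r ≤ M.rank) : r ≤ (M.map (algebraMap ℚ K)).rank := by
  obtain ⟨W, V, hWV⟩ := cert_of_rank M h
  refine rank_of_cert _ (W.map (algebraMap ℚ K)) (V.map (algebraMap ℚ K)) ?_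
  rw [← Matrix.map_mul, ← Matrix.map_mul, hWV, Matrix.map_one _ (map_zero _) (map_one _)]

lemma char0_rank {K : Type*} [Field K] [CharZero K] (e f : Fin s → ℤ)
    (he : 5 ≤ (Hm B (fun i => (e i : ℚ))).rank)
    (hf : ∀ θ : ℚ, 3 ≤ (Hm B ((fun i => (f i : ℚ)) + θ • (fun i => (e i : ℚ)))).rank) (α : K) :
    3 ≤ (Hm B ((fun i => (f i : K)) + α • (fun i => (e i : K)))).rank := by
  by_contra hcon
  obtain ⟨W, V, h⟩ := cert_of_rank _ he
  set N : Matrix (Fin 5) (Fin 5) ℚ := -(W * Hm B (fun i => (f i : ℚ)) * V) with hN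
  set φ := algebraMap ℚ K with hφ
  have emap : ∀ g : Fin s → ℤ, Hm B (fun i => (g i : K)) = (Hm B (fun i => (g i : ℚ))).map φ := by
    intro g; rw [Hm_map]; simp
  have key : W.map φ * Hm B ((fun i => (f i : K)) + α • (fun i => (e i : K))) * V.map φ =
      -(N.map φ - α • (1 : Matrix (Fin 5) (Fin 5) K)) := by
    rw [Hm_add, Hm_smul, emap, emap, Matrix.mul_add, Matrix.add_mul, Matrix.mul_smul,
      Matrix.smul_mul, ← Matrix.map_mul, ← Matrix.map_mul, ← Matrix.map_mul, ← Matrix.map_mul, h,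
      Matrix.map_one _ (map_zero _) (map_one _), hN]
    generalize W * Hm B (fun i => (f i : ℚ)) * V = M0
    ext i j
    simp [add_comm]
  obtain ⟨b, hb⟩ := rational_eig N α (by
    have h1 : (-(N.map φ - α • (1 : Matrix (Fin 5) (Fin 5) K))).rank ≤ 2 := by
      rw [← key]
      refine ((Matrix.rank_mul_le_left _ _).trans (Matrix.rank_mul_le_right _ _)).trans ?_
      omega
    have h2 := mat_rank_smul (-1 : K) (by simp) (N.map φ - α • (1 : Matrix (Fin 5) (Fin 5) K))
    rw [neg_one_smul] at h2
    rw [← h2]; exact h1)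
  apply hcon
  have h3 := rank_map_ge (K := K) _ (hf b)
  rw [Hm_map] at h3
  convert h3 using 3
  funext i
  simp [hb]

end Cub

open Matrix MvPolynomial

namespace Cub

variable {s : ℕ} {B : Fin s → Fin s → Fin s → ℤ}

lemma clear_denoms {R K : Type*} [CommRing R] [Field K] (P : Ideal R) [P.IsPrime]
    [Algebra (R ⧸ P) K] [IsFractionRing (R ⧸ P) K] {a b : ℕ} (W : Matrix (Fin a) (Fin b) K) :
    ∃ (W' : Matrix (Fin a) (Fin b) R) (d : K), d ≠ 0 ∧
      W'.map ((algebraMap (R ⧸ P) K).comp (Ideal.Quotient.mk P)) = d • W := by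
  obtain ⟨d, hd⟩ := IsLocalization.exist_integer_multiples_of_finite
    (nonZeroDivisors (R ⧸ P)) (fun ij : Fin a × Fin b => W ij.1 ij.2)
  choose c hc using hd
  choose r hr using fun ij => Ideal.Quotient.mk_surjective (I := P) (c ij)
  refine ⟨Matrix.of fun i j => r (i, j), algebraMap (R ⧸ P) K d, ?_, ?_⟩
  · exact IsFractionRing.to_map_ne_zero_of_mem_nonZeroDivisors d.2
  · ext i j
    simp only [Matrix.map_apply, Matrix.of_apply, RingHom.comp_apply, hr, hc, Matrix.smul_apply]
    rw [Algebra.smul_def, smul_eq_mul]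

lemma spread (e f : Fin s → ℤ)
    (he : 5 ≤ (Hm B (fun i => (e i : ℚ))).rank)
    (hf : ∀ θ : ℚ, 3 ≤ (Hm B ((fun i => (f i : ℚ)) + θ • (fun i => (e i : ℚ)))).rank) :
    ∃ E : ℤ, E ≠ 0 ∧ ∀ p : ℕ, ∀ _ : Fact p.Prime, ¬ (p : ℤ) ∣ E → ∀ t : ZMod p,
      3 ≤ (Hm B ((fun i => (f i : ZMod p)) + t • (fun i => (e i : ZMod p)))).rank := by
  classical
  set M : Matrix (Fin s) (Fin s) (Polynomial ℤ) :=
    Hm B ((fun i => (f i : Polynomial ℤ)) + (Polynomial.X : Polynomial ℤ) • (fun i => (e i : Polynomial ℤ))) with hM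
  have hMmap : ∀ {k : Type} [CommRing k] (φ : Polynomial ℤ →+* k), M.map φ =
      Hm B ((fun i => (f i : k)) + φ Polynomial.X • (fun i => (e i : k))) := by
    intro k _ φ
    rw [hM, Hm_map]
    congr 1
    funext i
    simp
  set g : Matrix (Fin 3) (Fin s) (Polynomial ℤ) × Matrix (Fin s) (Fin 3) (Polynomial ℤ) → Polynomial ℤ :=
    fun WV => (WV.1 * M * WV.2).det with hg
  set I : Ideal (Polynomial ℤ) := Ideal.span (Set.range g) with hI
  obtain ⟨E, hE0, hE⟩ : ∃ E : ℤ, E ≠ 0 ∧ Polynomial.C E ∈ I := by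
    by_contra hcon
    push Not at hcon
    let S : Submonoid (Polynomial ℤ) := (nonZeroDivisors ℤ).map (Polynomial.C : ℤ →+* Polynomial ℤ)
    have hdis : Disjoint (I : Set (Polynomial ℤ)) S := by
      rw [Set.disjoint_left]
      rintro x hx ⟨n, hn, rfl⟩
      exact hcon n (nonZeroDivisors.ne_zero hn) hx
    obtain ⟨P, hP, hIP, hPS⟩ := Ideal.exists_le_prime_disjoint I S hdis
    let K := FractionRing (Polynomial ℤ ⧸ P)
    let φ : Polynomial ℤ →+* K := (algebraMap (Polynomial ℤ ⧸ P) K).comp (Ideal.Quotient.mk P)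
    have hφ0 : ∀ x, φ x = 0 → x ∈ P := by
      intro x hx
      have h1 : algebraMap (Polynomial ℤ ⧸ P) K (Ideal.Quotient.mk P x) = 0 := hx
      have h2 := (IsFractionRing.injective (Polynomial ℤ ⧸ P) K) (h1.trans (map_zero _).symm)
      exact Ideal.Quotient.eq_zero_iff_mem.1 h2
    haveI : CharZero K := by
      refine charZero_of_injective_ringHom (f := φ.comp (Polynomial.C : ℤ →+* Polynomial ℤ)) ?_
      rw [injective_iff_map_eq_zero]
      intro n hn
      by_contra hne
      exact Set.disjoint_left.1 hPS (hφ0 _ hn) ⟨n, mem_nonZeroDivisors_of_ne_zero hne, rfl⟩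
    have hr := char0_rank (K := K) e f he hf (φ Polynomial.X)
    rw [← hMmap φ] at hr
    obtain ⟨W, V, hWV⟩ := cert_of_rank _ hr
    obtain ⟨W', d, hd, hW'⟩ := clear_denoms (K := K) P W
    obtain ⟨V', d', hd', hV'⟩ := clear_denoms (K := K) P V
    have hmem : g (W', V') ∈ P := hIP (Ideal.subset_span ⟨_, rfl⟩)
    have h0 : φ (g (W', V')) = 0 := by
      change algebraMap (Polynomial ℤ ⧸ P) K (Ideal.Quotient.mk P _) = 0
      rw [Ideal.Quotient.eq_zero_iff_mem.2 hmem, map_zero]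
    rw [hg, RingHom.map_det, RingHom.mapMatrix_apply, Matrix.map_mul, Matrix.map_mul] at h0
    change (W'.map ((algebraMap (Polynomial ℤ ⧸ P) K).comp (Ideal.Quotient.mk P)) * M.map φ *
      V'.map ((algebraMap (Polynomial ℤ ⧸ P) K).comp (Ideal.Quotient.mk P))).det = 0 at h0
    rw [hW', hV', Matrix.smul_mul, Matrix.smul_mul, Matrix.mul_smul, hWV, smul_smul,
      Matrix.det_smul, Matrix.det_one, mul_one] at h0
    exact (pow_ne_zero _ (mul_ne_zero hd hd')) h0
  refine ⟨E, hE0, fun p hp hpE t => ?_⟩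
  by_contra hcon
  let φ : Polynomial ℤ →+* ZMod p := Polynomial.eval₂RingHom (Int.castRingHom (ZMod p)) t
  have hle : I ≤ RingHom.ker φ := by
    rw [hI, Ideal.span_le]
    rintro _ ⟨⟨W, V⟩, rfl⟩
    change φ (W * M * V).det = 0
    by_contra hne
    rw [RingHom.map_det, RingHom.mapMatrix_apply, Matrix.map_mul, Matrix.map_mul, hMmap φ] at hne
    have h1 := rank_of_det _ _ _ hne
    have h2 : φ Polynomial.X = t := by simp [φ]
    rw [h2] at h1
    simp at h1
    omega
  have h1 : φ (Polynomial.C E) = 0 := hle hE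
  apply hpE
  rw [← ZMod.intCast_zmod_eq_zero_iff_dvd]
  simpa [φ] using h1

lemma spread_e (e : Fin s → ℤ) (he : 5 ≤ (Hm B (fun i => (e i : ℚ))).rank) :
    ∃ E : ℤ, E ≠ 0 ∧ ∀ p : ℕ, ∀ _ : Fact p.Prime, ¬ (p : ℤ) ∣ E →
      5 ≤ (Hm B (fun i => (e i : ZMod p))).rank := by
  have h1 : 5 ≤ ((Hm B e).map (Int.cast : ℤ → ℚ)).rank := by
    have := Hm_map B (Int.castRingHom ℚ) e
    simp only [Int.coe_castRingHom] at this
    have h2 : (Int.castRingHom ℚ : ℤ → ℚ) = Int.cast := rfl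
    rw [this]; exact he
  obtain ⟨W, V, D, hD, h⟩ := int_cert _ h1
  refine ⟨D, hD, fun p hp hpD => ?_⟩
  have h2 : W.map (Int.castRingHom (ZMod p)) * Hm B (fun i => (e i : ZMod p)) *
      V.map (Int.castRingHom (ZMod p)) = (D : ZMod p) • 1 := by
    have := Hm_map B (Int.castRingHom (ZMod p)) e
    simp only [eq_intCast] at this
    rw [← this, ← Matrix.map_mul, ← Matrix.map_mul, h]
    ext i j
    rw [Matrix.map_apply, Matrix.smul_apply, Matrix.smul_apply]
    by_cases hij : i = j
    · subst hij; rw [Matrix.one_apply_eq, Matrix.one_apply_eq]; simp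
    · rw [Matrix.one_apply_ne hij, Matrix.one_apply_ne hij]; simp
  have h3 := rank_of_det (Hm B (fun i => (e i : ZMod p))) (W.map (Int.castRingHom (ZMod p))) (V.map (Int.castRingHom (ZMod p))) (by
    rw [h2, Matrix.det_smul, Matrix.det_one, mul_one]
    apply pow_ne_zero
    rw [Ne, ZMod.intCast_zmod_eq_zero_iff_dvd]; exact hpD)
  simpa using h3

end Cub

open Matrix MvPolynomial

namespace Cub

set_option linter.unusedSectionVars false

variable {s : ℕ} {B : Fin s → Fin s → Fin s → ℤ}

lemma avg_count {J V : Type*} [Fintype J] [Fintype V] [AddCommGroup V] (g : J → V)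
    (T : V → Prop) [DecidablePred T] (c : ℕ)
    (h : ∀ u, (Finset.univ.filter fun x : J => T (u + g x)).card ≤ c) :
    Fintype.card J * (Finset.univ.filter T).card ≤ c * Fintype.card V := by
  have h1 : ∑ u : V, (Finset.univ.filter fun x : J => T (u + g x)).card =
      Fintype.card J * (Finset.univ.filter T).card := by
    simp only [Finset.card_filter]
    rw [Finset.sum_comm]
    have : ∀ x : J, ∑ u : V, (if T (u + g x) then 1 else 0) = ∑ u : V, (if T u then 1 else 0) :=
      fun x => Equiv.sum_comp (Equiv.addRight (g x)) (fun u => if T u then 1 else 0)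
    simp only [this]
    simp
  rw [← h1]
  refine (Finset.sum_le_sum fun u _ => h u).trans ?_
  simp [mul_comm]

section
variable {k : Type*} [Field k] [Fintype k] [DecidableEq k]

lemma count5 (e : Fin s → k) (he : 5 ≤ (Hm B e).rank) :
    Fintype.card k * (Finset.univ.filter fun u : Fin s → k => (Hm B u).rank < 5).card ≤
      5 * Fintype.card (Fin s → k) := by
  refine avg_count (fun x : k => x • e) _ 5 fun u => ?_
  refine rank_lt_card (Hm B u) (Hm B e) he _ fun x hx => ?_
  have := (Finset.mem_filter.1 hx).2
  rwa [Hm_add, Hm_smul] at this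

lemma count3 (e f : Fin s → k) (he : 5 ≤ (Hm B e).rank)
    (hf : ∀ t : k, 3 ≤ (Hm B (f + t • e)).rank) :
    Fintype.card k ^ 2 * (Finset.univ.filter fun u : Fin s → k => (Hm B u).rank < 3).card ≤
      16 * Fintype.card (Fin s → k) := by
  classical
  have := avg_count (J := k × k) (fun x => x.1 • e + x.2 • f)
    (fun u : Fin s → k => (Hm B u).rank < 3) 16 fun u => ?_
  · rwa [Fintype.card_prod, ← sq] at this
  set Z := (Finset.univ.filter fun x : k × k => (Hm B (u + (x.1 • e + x.2 • f))).rank < 3) with hZ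
  have hmem : ∀ x, x ∈ Z ↔ (Hm B (u + (x.1 • e + x.2 • f))).rank < 3 := by
    intro x; simp [hZ]
  rcases Z.eq_empty_or_nonempty with h0 | ⟨z, hz⟩
  · rw [h0]; simp
  have hdiff : ∀ x ∈ Z, (Hm B ((x.1 - z.1) • e + (x.2 - z.2) • f)).rank < 5 := by
    intro x hx
    have h1 := (hmem x).1 hx
    have h2 := (hmem z).1 hz
    have e1 : (x.1 - z.1) • e + (x.2 - z.2) • f = (u + (x.1 • e + x.2 • f)) + (-1 : k) • (u + (z.1 • e + z.2 • f)) := by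
      ext i; simp; ring
    rw [e1, Hm_add, Hm_smul]
    have h3 := mat_rank_add (Hm B (u + (x.1 • e + x.2 • f))) ((-1 : k) • Hm B (u + (z.1 • e + z.2 • f)))
    rw [mat_rank_smul _ (by simp)] at h3
    omega
  have hne : ∀ x ∈ Z.erase z, x.2 - z.2 ≠ 0 := by
    intro x hx h0
    have h1 := hdiff x (Finset.mem_of_mem_erase hx)
    rw [h0, zero_smul, add_zero] at h1
    have h2 : x.1 - z.1 ≠ 0 := by
      intro h2
      exact Finset.ne_of_mem_erase hx (Prod.ext (sub_eq_zero.1 h2) (sub_eq_zero.1 h0))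
    rw [Hm_smul, mat_rank_smul _ h2] at h1
    omega
  set σ : k × k → k := fun x => (x.1 - z.1) / (x.2 - z.2) with hσ
  have hx1 : ∀ x ∈ Z.erase z, x.1 - z.1 = σ x * (x.2 - z.2) := fun x hx =>
    (div_mul_cancel₀ _ (hne x hx)).symm
  have himg : ((Z.erase z).image σ).card ≤ 5 := by
    refine rank_lt_card (Hm B f) (Hm B e) he _ fun τ hτ => ?_
    obtain ⟨x, hx, rfl⟩ := Finset.mem_image.1 hτ
    have h1 := hdiff x (Finset.mem_of_mem_erase hx)
    rw [hx1 x hx] at h1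
    have e1 : (σ x * (x.2 - z.2)) • e + (x.2 - z.2) • f = (x.2 - z.2) • (f + σ x • e) := by
      rw [smul_add, smul_smul, add_comm, mul_comm]
    rw [e1, Hm_smul, mat_rank_smul _ (hne x hx), Hm_add, Hm_smul] at h1
    exact h1
  have hfib : ∀ τ ∈ (Z.erase z).image σ, ((Z.erase z).filter fun x => σ x = τ).card ≤ 3 := by
    intro τ _
    have hinj : Set.InjOn (fun x : k × k => x.2 - z.2) ((Z.erase z).filter fun x => σ x = τ) := by
      intro x hx y hy hxy
      simp only [Finset.coe_filter, Set.mem_ofPred_eq] at hx hy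
      have h1 := hx1 x hx.1
      have h2 := hx1 y hy.1
      simp only at hxy
      rw [hx.2, hxy] at h1
      rw [hy.2, ← h1] at h2
      exact Prod.ext (sub_left_injective h2).symm (sub_left_injective hxy)
    rw [← Finset.card_image_of_injOn hinj]
    refine rank_lt_card (Hm B (u + (z.1 • e + z.2 • f))) (Hm B (f + τ • e)) (hf τ) _ fun b hb => ?_
    obtain ⟨x, hx, rfl⟩ := Finset.mem_image.1 hb
    obtain ⟨hx, hxτ⟩ := Finset.mem_filter.1 hx
    have h1 := (hmem x).1 (Finset.mem_of_mem_erase hx)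
    have h2 := hx1 x hx
    rw [hxτ] at h2
    rw [← Hm_smul, ← Hm_add]
    convert h1 using 3
    ext i
    simp
    linear_combination (-(e i)) * h2
  have h1 := Finset.card_le_mul_card_image (Z.erase z) 3 hfib
  have h2 := Finset.card_erase_add_one hz
  omega

lemma count_ker {r : ℕ} (M : Matrix (Fin s) (Fin s) k) (h : r ≤ M.rank) :
    Fintype.card k ^ r * (Finset.univ.filter fun v : Fin s → k => M.mulVec v = 0).card ≤
      Fintype.card k ^ s := by
  classical
  have h1 : (Finset.univ.filter fun v : Fin s → k => M.mulVec v = 0).card =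
      Fintype.card k ^ (Module.finrank k (LinearMap.ker M.mulVecLin)) := by
    rw [← Module.card_eq_pow_finrank (K := k) (V := LinearMap.ker M.mulVecLin)]
    rw [← Fintype.card_coe]
    refine Fintype.card_congr (Equiv.subtypeEquivRight fun v => ?_)
    simp
  have h2 := LinearMap.finrank_range_add_finrank_ker M.mulVecLin
  rw [Module.finrank_fin_fun] at h2
  have h3 : r ≤ Module.finrank k (LinearMap.range M.mulVecLin) := h
  rw [h1, ← pow_add]
  exact Nat.pow_le_pow_right Fintype.card_pos (by omega)

lemma count0 (hB : Sym3 B) (e : Fin s → k) (he : 5 ≤ (Hm B e).rank) :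
    Fintype.card k ^ 5 * (Finset.univ.filter fun u : Fin s → k => Hm B u = 0).card ≤
      Fintype.card k ^ s := by
  refine le_trans (Nat.mul_le_mul_left _ (Finset.card_le_card ?_)) (count_ker (Hm B e) he)
  intro u hu
  simp only [Finset.mem_filter, Finset.mem_univ, true_and] at hu ⊢
  rw [Hm_comm hB, hu, Matrix.zero_mulVec]

/-- the cubic form -/
def Gc (B : Fin s → Fin s → Fin s → ℤ) (u : Fin s → k) : k := u ⬝ᵥ (Hm B u).mulVec u

lemma dot_symm (hB : Sym3 B) (u v w : Fin s → k) :
    v ⬝ᵥ (Hm B u).mulVec w = w ⬝ᵥ (Hm B u).mulVec v := by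
  rw [Matrix.dotProduct_mulVec, ← Matrix.mulVec_transpose, Hm_transpose hB, dotProduct_comm]

lemma Gc_diff (hB : Sym3 B) (b u : Fin s → k) :
    Gc B (b + u) - Gc B b = 3 * (b ⬝ᵥ (Hm B u).mulVec b) + 3 * (b ⬝ᵥ (Hm B u).mulVec u) + Gc B u := by
  unfold Gc
  have e1 : b ⬝ᵥ (Hm B b).mulVec u = b ⬝ᵥ (Hm B u).mulVec b := by rw [Hm_comm hB]
  have e2 : u ⬝ᵥ (Hm B b).mulVec b = b ⬝ᵥ (Hm B u).mulVec b := by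
    rw [dot_symm hB, e1]
  have e3 : u ⬝ᵥ (Hm B b).mulVec u = b ⬝ᵥ (Hm B u).mulVec u := by
    rw [Hm_comm hB, dot_symm hB]
  have e4 : u ⬝ᵥ (Hm B u).mulVec b = b ⬝ᵥ (Hm B u).mulVec u := dot_symm hB _ _ _
  simp only [Hm_add, Matrix.add_mulVec, Matrix.mulVec_add, add_dotProduct, dotProduct_add]
  rw [e1, e2, e3, e4]
  ring

lemma inner_bound (hB : Sym3 B) (ψ : AddChar k ℂ) (hψ : ψ.IsPrimitive) (a : k) (ha : 6 * a ≠ 0)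
    (u : Fin s → k) (r : ℕ) (hr : r ≤ (Hm B u).rank) :
    ‖∑ b, ψ (a * Gc B (b + u) - a * Gc B b)‖ * Real.sqrt (Fintype.card k) ^ r ≤ (Fintype.card k : ℝ) ^ s := by
  have h1 := weyl_quad ψ hψ (fun b => a * Gc B (b + u) - a * Gc B b)
    (fun v j => 6 * a * (Hm B u).mulVec v j)
    (fun v => a * (3 * (v ⬝ᵥ (Hm B u).mulVec v) + 3 * (v ⬝ᵥ (Hm B u).mulVec u))) (by
      intro b v
      rw [← mul_sub, ← mul_sub, Gc_diff hB, Gc_diff hB]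
      have e1 : ∑ j, b j * (6 * a * (Hm B u).mulVec v j) = 6 * a * (b ⬝ᵥ (Hm B u).mulVec v) := by
        rw [dotProduct, Finset.mul_sum]
        exact Finset.sum_congr rfl fun j _ => by ring
      rw [e1]
      simp only [Matrix.mulVec_add, add_dotProduct, dotProduct_add]
      rw [dot_symm hB u v b]
      ring)
  have h2 : (Finset.univ.filter fun v : Fin s → k => (fun j => 6 * a * (Hm B u).mulVec v j) = 0)
      = (Finset.univ.filter fun v : Fin s → k => (Hm B u).mulVec v = 0) := by
    ext v
    simp only [Finset.mem_filter, Finset.mem_univ, true_and, _root_.funext_iff, Pi.zero_apply, mul_eq_zero, ha, false_or]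
  rw [h2, Fintype.card_fin] at h1
  have h3 := count_ker (Hm B u) hr
  have h3' : (Fintype.card k : ℝ) ^ r * ((Finset.univ.filter fun v : Fin s → k => (Hm B u).mulVec v = 0).card : ℝ)
    ≤ (Fintype.card k : ℝ) ^ s := by exact_mod_cast h3
  refine le_of_sq_le_sq ?_ (by positivity)
  rw [mul_pow, ← pow_mul, mul_comm r 2, pow_mul, Real.sq_sqrt (by positivity)]
  refine (mul_le_mul_of_nonneg_right h1 (by positivity)).trans ?_
  rw [sq, mul_assoc]
  refine mul_le_mul_of_nonneg_left ?_ (by positivity)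
  rw [mul_comm]; exact h3'

end
end Cub

open Matrix MvPolynomial

namespace Cub

set_option linter.unusedSectionVars false

variable {s : ℕ} {B : Fin s → Fin s → Fin s → ℤ}
variable {k : Type*} [Field k] [Fintype k] [DecidableEq k]

lemma S_bound (hB : Sym3 B) (e f : Fin s → k) (he : 5 ≤ (Hm B e).rank)
    (hf : ∀ t : k, 3 ≤ (Hm B (f + t • e)).rank)
    (ψ : AddChar k ℂ) (hψ : ψ.IsPrimitive) (a : k) (ha : 6 * a ≠ 0)
    (hk : 8464 ≤ Fintype.card k) :
    ‖∑ b : Fin s → k, ψ (a * Gc B b)‖ ≤ (Fintype.card k : ℝ) ^ s / (2 * Fintype.card k) := by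
  classical
  set p : ℝ := (Fintype.card k : ℝ) with hp
  have hp1 : (8464 : ℝ) ≤ p := by rw [hp]; exact_mod_cast hk
  set P : ℝ := p ^ s with hP
  set w := Real.sqrt p with hw
  have hw2 : w ^ 2 = p := Real.sq_sqrt (by linarith)
  have hw92 : 92 ≤ w := Real.le_sqrt_of_sq_le (by norm_num; exact hp1)
  have hw0 : 0 < w := by linarith
  have hP0 : 0 < P := by positivity
  have hcV : (Fintype.card (Fin s → k) : ℝ) = P := by simp [hP, hp]
  have c5 := count5 (B := B) e he
  have c3 := count3 (B := B) e f he hf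
  have c0 := count0 hB e he
  set n5 := (Finset.univ.filter fun u : Fin s → k => (Hm B u).rank < 5).card
  set n3 := (Finset.univ.filter fun u : Fin s → k => (Hm B u).rank < 3).card
  set n0 := (Finset.univ.filter fun u : Fin s → k => Hm B u = 0).card
  have c5' : p * n5 ≤ 5 * P := by rw [← hcV, hp]; exact_mod_cast c5
  have c3' : p ^ 2 * n3 ≤ 16 * P := by rw [← hcV, hp]; exact_mod_cast c3
  have c0' : p ^ 5 * n0 ≤ P := by rw [hP, hp]; exact_mod_cast c0
  have hpt : ∀ u : Fin s → k, ‖∑ b, ψ (a * Gc B (b + u) - a * Gc B b)‖ ≤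
      P / w ^ 5 + (if (Hm B u).rank < 5 then P / w ^ 3 else 0)
      + (if (Hm B u).rank < 3 then P / w else 0) + (if Hm B u = 0 then P else 0) := by
    intro u
    have hb := fun r hr => inner_bound hB ψ hψ a ha u r hr
    have q5 : 0 ≤ P / w ^ 5 := by positivity
    have q3 : 0 ≤ P / w ^ 3 := by positivity
    have q1 : 0 ≤ P / w := by positivity
    by_cases h5 : (Hm B u).rank < 5
    · by_cases h3 : (Hm B u).rank < 3
      · by_cases h0 : Hm B u = 0
        · have := hb 0 (by simp)
          simp only [pow_zero, mul_one] at this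
          simp only [h5, h3, h0, if_true]
          have : ‖∑ b, ψ (a * Gc B (b + u) - a * Gc B b)‖ ≤ P := this
          have e5 : (if (0 : Matrix (Fin s) (Fin s) k).rank < 5 then P / w ^ 3 else 0) ≥ 0 := by
            split_ifs <;> positivity
          have e3 : (if (0 : Matrix (Fin s) (Fin s) k).rank < 3 then P / w else 0) ≥ 0 := by
            split_ifs <;> positivity
          linarith
        · have hr : 1 ≤ (Hm B u).rank := by
            by_contra hcon
            apply h0
            have h1 : (Hm B u).rank = 0 := by omega
            have h2 : LinearMap.range (Hm B u).mulVecLin = ⊥ := Submodule.finrank_eq_zero.1 h1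
            have h3 := LinearMap.range_eq_bot.1 h2
            ext i j
            have h4 := congrFun (LinearMap.congr_fun h3 (Pi.single j 1)) i
            simpa using h4
          have := hb 1 hr
          rw [pow_one, ← le_div_iff₀ hw0] at this
          simp only [h5, h3, h0, if_true, if_false]
          have : ‖∑ b, ψ (a * Gc B (b + u) - a * Gc B b)‖ ≤ P / w := this
          linarith
      · have h0 : Hm B u ≠ 0 := by
          intro h0; rw [h0] at h3; simp at h3
        have := hb 3 (by omega)
        rw [← le_div_iff₀ (by positivity)] at this
        simp only [h5, h3, h0, if_true, if_false]
        have : ‖∑ b, ψ (a * Gc B (b + u) - a * Gc B b)‖ ≤ P / w ^ 3 := this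
        linarith
    · have h3 : ¬ (Hm B u).rank < 3 := by omega
      have h0 : Hm B u ≠ 0 := by
        intro h0; rw [h0] at h3; simp at h3
      have := hb 5 (by omega)
      rw [← le_div_iff₀ (by positivity)] at this
      simp only [h5, h3, h0, if_false]
      have : ‖∑ b, ψ (a * Gc B (b + u) - a * Gc B b)‖ ≤ P / w ^ 5 := this
      linarith
  have h1 : ‖∑ b : Fin s → k, ψ (a * Gc B b)‖ ^ 2 ≤
      P * (P / w ^ 5) + n5 * (P / w ^ 3) + n3 * (P / w) + n0 * P := by
    refine (norm_sq_le_diff ψ (fun b => a * Gc B b)).trans ?_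
    refine (Finset.sum_le_sum fun u _ => hpt u).trans ?_
    rw [Finset.sum_add_distrib, Finset.sum_add_distrib, Finset.sum_add_distrib]
    simp only [← Finset.sum_filter, Finset.sum_const, nsmul_eq_mul]
    rw [Finset.card_univ, hcV]
  have hn5 : (n5 : ℝ) ≤ 5 * P / w ^ 2 := by
    rw [le_div_iff₀ (by positivity), hw2]; linarith
  have hn3 : (n3 : ℝ) ≤ 16 * P / w ^ 4 := by
    rw [le_div_iff₀ (by positivity), show w ^ 4 = (w ^ 2) ^ 2 by ring, hw2]; linarith
  have hn0 : (n0 : ℝ) ≤ P / w ^ 10 := by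
    rw [le_div_iff₀ (by positivity), show w ^ 10 = (w ^ 2) ^ 5 by ring, hw2]; linarith
  have hn0' : P / w ^ 10 ≤ P / w ^ 5 :=
    div_le_div_of_nonneg_left hP0.le (by positivity) (pow_le_pow_right₀ (by linarith) (by norm_num))
  have h2 : ‖∑ b : Fin s → k, ψ (a * Gc B b)‖ ^ 2 ≤ 23 * (P ^ 2 / w ^ 5) := by
    refine h1.trans ?_
    have t5 : (n5 : ℝ) * (P / w ^ 3) ≤ 5 * (P ^ 2 / w ^ 5) := by
      refine (mul_le_mul_of_nonneg_right hn5 (by positivity)).trans (le_of_eq ?_)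
      field_simp
    have t3 : (n3 : ℝ) * (P / w) ≤ 16 * (P ^ 2 / w ^ 5) := by
      refine (mul_le_mul_of_nonneg_right hn3 (by positivity)).trans (le_of_eq ?_)
      field_simp
    have t0 : (n0 : ℝ) * P ≤ P ^ 2 / w ^ 5 := by
      refine (mul_le_mul_of_nonneg_right (hn0.trans hn0') (by positivity)).trans (le_of_eq ?_)
      field_simp
    have tt : P * (P / w ^ 5) = P ^ 2 / w ^ 5 := by field_simp
    linarith
  refine le_of_sq_le_sq (h2.trans ?_) (by positivity)
  rw [← hw2, div_pow, mul_pow, mul_div_assoc', div_le_div_iff₀ (by positivity) (by positivity)]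
  have : 23 * P ^ 2 * (2 ^ 2 * (w ^ 2) ^ 2) = 92 * (P ^ 2 * w ^ 4) := by ring
  rw [this]
  have : P ^ 2 * w ^ 5 = w * (P ^ 2 * w ^ 4) := by ring
  rw [this]
  exact mul_le_mul_of_nonneg_right hw92 (by positivity)

lemma zero_count (hB : Sym3 B) (e f : Fin s → k) (he : 5 ≤ (Hm B e).rank)
    (hf : ∀ t : k, 3 ≤ (Hm B (f + t • e)).rank)
    (ψ : AddChar k ℂ) (hψ : ψ.IsPrimitive) (h6 : (6 : k) ≠ 0)
    (hk : 8464 ≤ Fintype.card k) :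
    Fintype.card k ^ s ≤ 2 * Fintype.card k *
      (Finset.univ.filter fun u : Fin s → k => Gc B u = 0).card := by
  classical
  set N := (Finset.univ.filter fun u : Fin s → k => Gc B u = 0).card with hN
  have h1 : ∑ a : k, ∑ u : Fin s → k, ψ (a * Gc B u) = (Fintype.card k : ℂ) * N := by
    rw [Finset.sum_comm]
    have : ∀ u : Fin s → k, ∑ a : k, ψ (a * Gc B u) = if Gc B u = 0 then (Fintype.card k : ℂ) else 0 := by
      intro u
      rw [AddChar.sum_mulShift _ hψ]
      split_ifs <;> simp
    simp only [this]
    rw [← Finset.sum_filter, Finset.sum_const, nsmul_eq_mul, mul_comm]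
  rw [← Finset.add_sum_erase _ _ (Finset.mem_univ (0 : k))] at h1
  simp only [zero_mul, AddChar.map_zero_eq_one, Finset.sum_const, Finset.card_univ, nsmul_eq_mul, mul_one] at h1
  set P : ℝ := (Fintype.card k : ℝ) ^ s with hP
  set p : ℝ := (Fintype.card k : ℝ) with hp
  have hp1 : (8464 : ℝ) ≤ p := by rw [hp]; exact_mod_cast hk
  have h2 : ‖∑ a ∈ Finset.univ.erase (0 : k), ∑ u : Fin s → k, ψ (a * Gc B u)‖ ≤ P / 2 := by
    refine (norm_sum_le _ _).trans ?_
    refine (Finset.sum_le_sum (g := fun _ => P / (2 * p)) fun a ha => S_bound hB e f he hf ψ hψ a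
      (mul_ne_zero h6 (Finset.ne_of_mem_erase ha)) hk).trans ?_
    rw [Finset.sum_const, nsmul_eq_mul, Finset.card_erase_of_mem (Finset.mem_univ _), Finset.card_univ]
    have : ((Fintype.card k - 1 : ℕ) : ℝ) ≤ p := by
      rw [hp]; exact_mod_cast Nat.sub_le _ _
    refine (mul_le_mul_of_nonneg_right this (by positivity)).trans (le_of_eq ?_)
    field_simp
  have h3 : P - p * N = -(∑ a ∈ Finset.univ.erase (0 : k), ∑ u : Fin s → k, ψ (a * Gc B u)).re := by
    have := congrArg Complex.re h1
    have e1 : ((Fintype.card (Fin s → k) : ℂ)).re = P := by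
      rw [Complex.natCast_re]; simp [hP, hp]
    have e2 : ((Fintype.card k : ℂ) * N).re = p * N := by
      rw [← Nat.cast_mul, Complex.natCast_re]; simp [hp]
    rw [Complex.add_re, e1, e2] at this
    linarith
  have h4 := Complex.abs_re_le_norm (∑ a ∈ Finset.univ.erase (0 : k), ∑ u : Fin s → k, ψ (a * Gc B u))
  rw [abs_le] at h4
  have h5 : P ≤ 2 * p * N := by linarith [h4.1]
  rw [hP, hp] at h5
  exact_mod_cast h5

/-- packaged count for all large primes -/
lemma count_large (hB : Sym3 B) (hND : ND B) : ∃ p0 : ℕ, ∀ p : ℕ, ∀ _ : Fact p.Prime, p0 ≤ p →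
    p ^ s ≤ 2 * p * (Finset.univ.filter fun u : Fin s → ZMod p => Gc B u = 0).card := by
  obtain ⟨e, he⟩ := exists_e hB hND
  obtain ⟨f, hf⟩ := exists_f hB hND _ he
  obtain ⟨E1, hE1, h1⟩ := spread_e e he
  obtain ⟨E2, hE2, h2⟩ := spread e f he hf
  have hndvd : ∀ (E : ℤ) (p : ℕ), E ≠ 0 → E.natAbs < p → ¬ (p : ℤ) ∣ E := by
    intro E p hE hlt hd
    have := Nat.le_of_dvd (Int.natAbs_pos.2 hE) (Int.natCast_dvd.1 hd)
    omega
  refine ⟨8464 + E1.natAbs + E2.natAbs, fun p hp hle => ?_⟩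
  have hprime := hp.out
  haveI : NeZero p := ⟨hprime.ne_zero⟩
  have h6 : (6 : ZMod p) ≠ 0 := by
    have := hndvd 6 p (by norm_num) (by simp; omega)
    rw [← ZMod.intCast_zmod_eq_zero_iff_dvd] at this
    simpa using this
  have := zero_count hB (fun i => (e i : ZMod p)) (fun i => (f i : ZMod p))
    (h1 p hp (hndvd _ _ hE1 (by omega))) (h2 p hp (hndvd _ _ hE2 (by omega)))
    ZMod.stdAddChar (ZMod.isPrimitive_stdAddChar p) h6 (by rw [ZMod.card]; omega)
  rw [ZMod.card] at this
  exact this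

end Cub

open Matrix MvPolynomial

namespace Cub

variable {s : ℕ}

lemma euler_T (R : MvPolynomial (Fin s) ℤ) (hR : R.IsHomogeneous 3) :
    ∃ T : Fin s → Fin s → Fin s → ℤ,
      (6 : MvPolynomial (Fin s) ℤ) * R = ∑ i, ∑ j, ∑ l, X i * (X j * (X l * C (T i j l))) := by
  have h1 : ∀ i, (pderiv i R).IsHomogeneous 2 := fun i => hR.pderiv
  have h2 : ∀ i j, (pderiv j (pderiv i R)).IsHomogeneous 1 := fun i j => (h1 i).pderiv
  have h3 : ∀ i j l, (pderiv l (pderiv j (pderiv i R))).IsHomogeneous 0 := fun i j l => (h2 i j).pderiv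
  have h4 : ∀ i j l, ∃ t, pderiv l (pderiv j (pderiv i R)) = C t := by
    intro i j l
    have := (totalDegree_zero_iff_isHomogeneous _).2 (h3 i j l)
    exact ⟨_, totalDegree_eq_zero_iff_eq_C.1 this⟩
  choose T hT using h4
  refine ⟨T, ?_⟩
  have e1 := hR.sum_X_mul_pderiv
  have e2 := fun i => (h1 i).sum_X_mul_pderiv
  have e3 := fun i j => (h2 i j).sum_X_mul_pderiv
  simp only [hT, one_smul] at e3
  simp only [← Finset.mul_sum, e3, e2]
  have : ∀ i, X i * (2 • pderiv i R) = (2 : MvPolynomial (Fin s) ℤ) * (X i * pderiv i R) := by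
    intro i; simp only [nsmul_eq_mul]; push_cast; ring
  rw [Finset.sum_congr rfl fun i _ => this i, ← Finset.mul_sum, e1, nsmul_eq_mul]
  push_cast; ring

lemma exists_B (R : MvPolynomial (Fin s) ℤ) (hR : R.IsHomogeneous 3) :
    ∃ B : Fin s → Fin s → Fin s → ℤ, Sym3 B ∧ ∀ (k : Type) [Field k] (u : Fin s → k),
      Gc B u = 36 * eval u (MvPolynomial.map (Int.castRingHom k) R) := by
  obtain ⟨T, hT⟩ := euler_T R hR
  refine ⟨fun i j l => T i j l + T i l j + T j i l + T j l i + T l i j + T l j i, ⟨?_, ?_⟩, ?_⟩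
  · intro i j l; ring
  · intro i j l; ring
  · intro k _ u
    have h := congrArg (fun P => eval u (MvPolynomial.map (Int.castRingHom k) P)) hT
    simp only [map_mul, map_sum, map_ofNat, map_X, eval_X, map_C, eval_C] at h
    simp only [eq_intCast] at h
    set τ : Fin s → Fin s → Fin s → k := fun i j l => u i * (u j * (u l * (T i j l : k))) with hτ
    have h36 : (36 : k) * eval u (MvPolynomial.map (Int.castRingHom k) R) = 6 * ∑ i, ∑ j, ∑ l, τ i j l := by
      rw [hτ, ← h]; ring
    rw [h36]
    have hG : ∀ B : Fin s → Fin s → Fin s → ℤ, Gc B u = ∑ i, ∑ j, ∑ l, u i * (u j * (u l * (B i j l : k))) := by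
      intro B
      simp only [Gc, Hm, dotProduct, Matrix.mulVec, Matrix.of_apply, Finset.mul_sum, Finset.sum_mul]
      have : ∀ j, ∑ l, ∑ i, u j * ((B i j l : k) * u i * u l) = ∑ i, ∑ l, u j * ((B i j l : k) * u i * u l) :=
        fun j => Finset.sum_comm
      simp only [this]
      rw [Finset.sum_comm]
      refine Finset.sum_congr rfl fun i _ => Finset.sum_congr rfl fun j _ => Finset.sum_congr rfl fun l _ => ?_
      ring
    rw [hG]
    have p1 : ∑ i, ∑ j, ∑ l, τ i l j = ∑ i, ∑ j, ∑ l, τ i j l :=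
      Finset.sum_congr rfl fun i _ => Finset.sum_comm
    have p2 : ∑ i, ∑ j, ∑ l, τ j i l = ∑ i, ∑ j, ∑ l, τ i j l := Finset.sum_comm
    have p3 : ∑ i, ∑ j, ∑ l, τ l i j = ∑ i, ∑ j, ∑ l, τ i j l := by
      have : ∀ i, ∑ j, ∑ l, τ l i j = ∑ l, ∑ j, τ l i j := fun i => Finset.sum_comm
      simp only [this]
      exact Finset.sum_comm
    have p4 : ∑ i, ∑ j, ∑ l, τ j l i = ∑ i, ∑ j, ∑ l, τ i j l := by
      rw [Finset.sum_comm]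
      exact Finset.sum_congr rfl fun i _ => Finset.sum_comm
    have p5 : ∑ i, ∑ j, ∑ l, τ l j i = ∑ i, ∑ j, ∑ l, τ i j l := by
      have : ∀ i, ∑ j, ∑ l, τ l j i = ∑ l, ∑ j, τ l j i := fun i => Finset.sum_comm
      simp only [this]
      rw [Finset.sum_comm]
      exact Finset.sum_congr rfl fun i _ => Finset.sum_comm
    have : ∑ i, ∑ j, ∑ l, u i * (u j * (u l * ((T i j l + T i l j + T j i l + T j l i + T l i j + T l j i : ℤ) : k)))
        = ∑ i, ∑ j, ∑ l, (τ i j l + τ i l j + τ j i l + τ j l i + τ l i j + τ l j i) := by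
      refine Finset.sum_congr rfl fun i _ => Finset.sum_congr rfl fun j _ => Finset.sum_congr rfl fun l _ => ?_
      simp only [hτ]; push_cast; ring
    rw [this]
    simp only [Finset.sum_add_distrib, p1, p2, p3, p4, p5]
    ring

end Cub

open Matrix MvPolynomial

namespace Cub

variable {s : ℕ} {B : Fin s → Fin s → Fin s → ℤ}

lemma exists_lam_w (L : Submodule ℚ (Fin s → ℚ)) (hL : s ≤ Module.finrank ℚ L + 4) :
    ∃ (lam : (Fin s → ℚ) →ₗ[ℚ] (Fin 4 → ℚ)) (w : (Fin 4 → ℚ) →ₗ[ℚ] (Fin s → ℚ)),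
      ∀ x, x - w (lam x) ∈ L := by
  have h1 := Submodule.finrank_quotient_add_finrank L
  rw [Module.finrank_fin_fun] at h1
  have hd : Module.finrank ℚ ((Fin s → ℚ) ⧸ L) ≤ 4 := by omega
  let b := Module.finBasis ℚ ((Fin s → ℚ) ⧸ L)
  let g : (Fin 4 → ℚ) →ₗ[ℚ] ((Fin s → ℚ) ⧸ L) :=
    b.equivFun.symm.toLinearMap.comp (LinearMap.funLeft ℚ ℚ (Fin.castLE hd))
  have hg : Function.Surjective g := by
    refine b.equivFun.symm.surjective.comp ?_
    exact LinearMap.funLeft_surjective_of_injective ℚ ℚ _ (Fin.castLE_injective hd)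
  obtain ⟨ρ, hρ⟩ := LinearMap.exists_rightInverse_of_surjective g (LinearMap.range_eq_top.2 hg)
  obtain ⟨σ, hσ⟩ := LinearMap.exists_rightInverse_of_surjective L.mkQ (Submodule.range_mkQ L)
  refine ⟨ρ.comp L.mkQ, σ.comp g, fun x => ?_⟩
  rw [← Submodule.Quotient.mk_eq_zero L, ← Submodule.mkQ_apply, map_sub, sub_eq_zero]
  have e1 := LinearMap.congr_fun hρ (L.mkQ x)
  have e2 := LinearMap.congr_fun hσ (L.mkQ x)
  simp only [LinearMap.comp_apply, LinearMap.id_apply] at e1 e2 ⊢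
  rw [e1, e2]

lemma hom_tri (b c : Fin s → MvPolynomial (Fin s) ℚ) (hb : ∀ j, (b j).IsHomogeneous 1)
    (hc : ∀ j, (c j).IsHomogeneous 1) (d : Fin s → ℚ) :
    (b ⬝ᵥ (Hm B c).mulVec (fun j => C (d j))).IsHomogeneous 2 := by
  simp only [dotProduct, Matrix.mulVec, Hm, Matrix.of_apply]
  refine IsHomogeneous.sum _ _ _ fun j _ => ?_
  refine (hb j).mul (n := 1) ?_
  refine IsHomogeneous.sum _ _ _ fun l _ => ?_
  have : (∑ i, (B i j l : MvPolynomial (Fin s) ℚ) * c i).IsHomogeneous 1 := by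
    refine IsHomogeneous.sum _ _ _ fun i _ => ?_
    have e : (B i j l : MvPolynomial (Fin s) ℚ) = C (B i j l : ℚ) := by simp
    rw [e]
    simpa using (isHomogeneous_C (Fin s) (B i j l : ℚ)).mul (hc i)
  simpa using this.mul (isHomogeneous_C (Fin s) (d l))

lemma eval_tri (b c d : Fin s → MvPolynomial (Fin s) ℚ) (x : Fin s → ℚ) :
    eval x (b ⬝ᵥ (Hm B c).mulVec d) =
      (fun j => eval x (b j)) ⬝ᵥ (Hm B (fun j => eval x (c j))).mulVec (fun j => eval x (d j)) := by
  simp [dotProduct, Matrix.mulVec, Hm, Matrix.of_apply]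

lemma Gc_diff' {k : Type*} [Field k] (hB : Sym3 B) (b u : Fin s → k) :
    Gc B (b + u) - Gc B b = 3 * (b ⬝ᵥ (Hm B b).mulVec u) + 3 * (b ⬝ᵥ (Hm B u).mulVec u) +
      u ⬝ᵥ (Hm B u).mulVec u := by
  have ds : ∀ u v w : Fin s → k, v ⬝ᵥ (Hm B u).mulVec w = w ⬝ᵥ (Hm B u).mulVec v := by
    intro u v w
    rw [Matrix.dotProduct_mulVec, ← Matrix.mulVec_transpose, Hm_transpose hB, dotProduct_comm]
  unfold Gc
  have e2 : u ⬝ᵥ (Hm B b).mulVec b = b ⬝ᵥ (Hm B b).mulVec u := ds _ _ _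
  have e1 : b ⬝ᵥ (Hm B u).mulVec b = b ⬝ᵥ (Hm B b).mulVec u := by rw [Hm_comm hB]
  have e3 : u ⬝ᵥ (Hm B b).mulVec u = b ⬝ᵥ (Hm B u).mulVec u := by
    rw [Hm_comm hB, ds]
  have e4 : u ⬝ᵥ (Hm B u).mulVec b = b ⬝ᵥ (Hm B u).mulVec u := ds _ _ _
  simp only [Hm_add, Matrix.add_mulVec, Matrix.mulVec_add, add_dotProduct, dotProduct_add]
  rw [e1, e2, e3, e4]
  ring

lemma hinv_of_vanish (hB : Sym3 B) (P : MvPolynomial (Fin s) ℚ)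
    (hP : ∀ u : Fin s → ℚ, Gc B u = 36 * eval u P)
    (L : Submodule ℚ (Fin s → ℚ)) (hL : s ≤ Module.finrank ℚ L + 4)
    (hv : ∀ v ∈ L, Gc B v = 0) :
    ∃ Lf Qf : Fin 4 → MvPolynomial (Fin s) ℚ, (∀ i, (Lf i).IsHomogeneous 1) ∧
      (∀ i, (Qf i).IsHomogeneous 2) ∧ P = ∑ i, Lf i * Qf i := by
  classical
  obtain ⟨lam, w, hlw⟩ := exists_lam_w L hL
  let Lf : Fin 4 → MvPolynomial (Fin s) ℚ := fun i => ∑ l, C (lam (Pi.single l 1) i) * X l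
  have hLf : ∀ i, (Lf i).IsHomogeneous 1 := fun i =>
    IsHomogeneous.sum _ _ _ fun l _ => by
      simpa using (isHomogeneous_C (Fin s) (lam (Pi.single l 1) i)).mul (isHomogeneous_X ℚ l)
  have eLf : ∀ x i, eval x (Lf i) = lam x i := by
    intro x i
    have h1 : lam x = ∑ l, x l • lam (Pi.single l 1) := by
      conv_lhs => rw [← LinearMap.sum_single_apply (fun _ : Fin s => ℚ) x, map_sum]
      refine Finset.sum_congr rfl fun l _ => ?_
      rw [← map_smul]
      congr 1
      ext t
      by_cases ht : t = l
      · subst ht; simp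
      · simp [ht]
    rw [h1]
    simp [Lf, mul_comm]
  let wv : Fin 4 → Fin s → ℚ := fun i => w (Pi.single i 1)
  have hw : ∀ z : Fin 4 → ℚ, w z = ∑ i, z i • wv i := by
    intro z
    conv_lhs => rw [← LinearMap.sum_single_apply (fun _ : Fin 4 => ℚ) z, map_sum]
    refine Finset.sum_congr rfl fun l _ => ?_
    rw [← map_smul]
    congr 1
    ext t
    by_cases ht : t = l
    · subst ht; simp
    · simp [ht]
  let up : Fin s → MvPolynomial (Fin s) ℚ := fun j => ∑ i, C (wv i j) * Lf i
  let bp : Fin s → MvPolynomial (Fin s) ℚ := fun j => X j - up j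
  have hup : ∀ j, (up j).IsHomogeneous 1 := fun j =>
    IsHomogeneous.sum _ _ _ fun i _ => by
      simpa using (isHomogeneous_C (Fin s) (wv i j)).mul (hLf i)
  have hbp : ∀ j, (bp j).IsHomogeneous 1 := fun j => (isHomogeneous_X ℚ j).sub (hup j)
  have eup : ∀ x, (fun j => eval x (up j)) = w (lam x) := by
    intro x
    rw [hw]
    funext j
    simp [up, eLf, mul_comm]
  have ebp : ∀ x, (fun j => eval x (bp j)) = x - w (lam x) := by
    intro x
    rw [← eup]
    funext j
    simp [bp]
  let Qf : Fin 4 → MvPolynomial (Fin s) ℚ := fun i => C (1 / 36) *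
    (C 3 * (bp ⬝ᵥ (Hm B bp).mulVec (fun j => C (wv i j))) +
     C 3 * (bp ⬝ᵥ (Hm B up).mulVec (fun j => C (wv i j))) +
     up ⬝ᵥ (Hm B up).mulVec (fun j => C (wv i j)))
  have hCm : ∀ (c : ℚ) (p : MvPolynomial (Fin s) ℚ), p.IsHomogeneous 2 → (C c * p).IsHomogeneous 2 := by
    intro c p hp
    simpa using (isHomogeneous_C (Fin s) c).mul hp
  refine ⟨Lf, Qf, hLf, fun i => ?_, ?_⟩
  · exact hCm _ _ (((hCm _ _ (hom_tri bp bp hbp hbp _)).add (hCm _ _ (hom_tri bp up hbp hup _))).add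
      (hom_tri up up hup hup _))
  · apply MvPolynomial.funext
    intro x
    set b := x - w (lam x) with hb
    set u := w (lam x) with hu
    have hx : b + u = x := by rw [hb]; simp
    have h1 := Gc_diff' hB b u
    rw [hx, hv b (hlw x), hP x, sub_zero] at h1
    have hlin : ∀ c d : Fin s → ℚ, c ⬝ᵥ (Hm B d).mulVec u =
        ∑ i, lam x i * (c ⬝ᵥ (Hm B d).mulVec (wv i)) := by
      intro c d
      rw [hu, hw, Matrix.mulVec_sum, dotProduct_sum]
      refine Finset.sum_congr rfl fun i _ => ?_
      rw [Matrix.mulVec_smul, dotProduct_smul, smul_eq_mul]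
    rw [hlin, hlin, hlin] at h1
    rw [map_sum]
    have h2 : ∀ i, eval x (Lf i * Qf i) = 1 / 36 * (3 * (lam x i * (b ⬝ᵥ (Hm B b).mulVec (wv i))) +
        3 * (lam x i * (b ⬝ᵥ (Hm B u).mulVec (wv i))) + lam x i * (u ⬝ᵥ (Hm B u).mulVec (wv i))) := by
      intro i
      simp only [Qf, map_mul, map_add, eval_tri, eLf, eval_C, eup, ebp]
      rw [← hb]
      have : (fun j => wv i j) = wv i := rfl
      rw [this]
      ring
    simp only [h2, ← Finset.mul_sum, Finset.sum_add_distrib]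
    linarith

end Cub

open Matrix MvPolynomial

namespace Cub

lemma hom_of_X_mul {σ : Type*} (i : σ) (G : MvPolynomial σ ℤ) (d : ℕ)
    (h : (X i * G).IsHomogeneous (d + 1)) : G.IsHomogeneous d := by
  intro e he
  have h1 := h (d := Finsupp.single i 1 + e) (by rw [coeff_X_mul]; exact he)
  rw [map_add, Finsupp.weight_single] at h1
  simp at h1
  omega

lemma res0_hom {s : ℕ} (R : MvPolynomial (Fin (s + 1)) ℤ) (d : ℕ) (hR : R.IsHomogeneous d) :
    (res0 R).IsHomogeneous d := by
  have := hR.aeval (n := 1) (Fin.cons 0 X : Fin (s + 1) → MvPolynomial (Fin s) ℤ) (by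
    intro i
    refine Fin.cases ?_ (fun i => ?_) i
    · exact isHomogeneous_zero _ _ _
    · exact isHomogeneous_X _ _)
  simpa [res0] using this

lemma ND_of_hinv {m s : ℕ} (A₁ : Matrix (Fin m) (Fin m) ℤ)
    (q : Fin m → MvPolynomial (Fin (s + 1)) ℤ) (hq : ∀ j, (q j).IsHomogeneous 2)
    (R : MvPolynomial (Fin (s + 1)) ℤ) (hR : R.IsHomogeneous 3)
    (Cpoly : MvPolynomial (Fin m ⊕ Fin (s + 1)) ℤ)
    (hC : Cpoly = X (Sum.inr 0) *
        rename Sum.inl (∑ a, ∑ b, C (A₁ a b) * X a * X b)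
      + ∑ j, X (Sum.inl j) * rename Sum.inr (q j) + rename Sum.inr R)
    (hhinv : ¬ ∃ L Q : Fin 5 → MvPolynomial (Fin m ⊕ Fin (s + 1)) ℚ,
      (∀ i, (L i).IsHomogeneous 1) ∧ (∀ i, (Q i).IsHomogeneous 2) ∧
        MvPolynomial.map (Int.castRingHom ℚ) Cpoly = ∑ i, L i * Q i)
    (hq0 : ∀ j, res0 (q j) = 0) (B : Fin s → Fin s → Fin s → ℤ) (hB : Sym3 B)
    (hBR : ∀ u : Fin s → ℚ, Gc B u = 36 * eval u (MvPolynomial.map (Int.castRingHom ℚ) (res0 R))) :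
    ND B := by
  intro L hL
  by_contra hcon
  push Not at hcon
  obtain ⟨Lf, Qf, hLf, hQf, hP⟩ := hinv_of_vanish hB _ hBR L hL hcon
  apply hhinv
  choose l hl using fun j => split0_aux (q j)
  obtain ⟨Q', hQ'⟩ := split0_aux R
  set G : MvPolynomial (Fin m ⊕ Fin (s + 1)) ℤ :=
    rename Sum.inl (∑ a, ∑ b, C (A₁ a b) * X a * X b) + ∑ j, X (Sum.inl j) * rename Sum.inr (l j)
      + rename Sum.inr Q' with hG
  have hCG : Cpoly = X (Sum.inr 0) * G + rename (Sum.inr ∘ Fin.succ) (res0 R) := by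
    apply MvPolynomial.funext
    intro z
    rw [hC, hG]
    simp only [map_add, map_mul, map_sum, eval_X, eval_rename]
    have hz : (z ∘ Sum.inr ∘ Fin.succ) = Fin.tail (z ∘ Sum.inr) := rfl
    have h1 : ∀ j, eval (z ∘ Sum.inr) (q j) = z (Sum.inr 0) * eval (z ∘ Sum.inr) (l j) := by
      intro j
      rw [hl j, hq0 j]; simp
    rw [hz, hQ']
    simp only [h1]
    have : ∀ j, z (Sum.inl j) * (z (Sum.inr 0) * eval (z ∘ Sum.inr) (l j)) =
      z (Sum.inr 0) * (z (Sum.inl j) * eval (z ∘ Sum.inr) (l j)) := fun j => by ring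
    rw [Finset.sum_congr rfl fun j _ => this j, ← Finset.mul_sum]
    simp only [Function.comp_apply]
    ring
  have hChom : Cpoly.IsHomogeneous 3 := by
    rw [hC]
    refine (IsHomogeneous.add ?_ ?_).add (hR.rename_isHomogeneous)
    · refine (isHomogeneous_X ℤ _).mul (n := 2) (IsHomogeneous.rename_isHomogeneous ?_)
      refine IsHomogeneous.sum _ _ _ fun a _ => IsHomogeneous.sum _ _ _ fun b _ => ?_
      exact ((isHomogeneous_C _ _).mul (isHomogeneous_X _ _)).mul (isHomogeneous_X _ _)
    · exact IsHomogeneous.sum _ _ _ fun j _ =>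
        (isHomogeneous_X ℤ _).mul (n := 2) (hq j).rename_isHomogeneous
  have hGhom : G.IsHomogeneous 2 := by
    apply hom_of_X_mul (Sum.inr 0)
    have : X (Sum.inr 0) * G = Cpoly - rename (Sum.inr ∘ Fin.succ) (res0 R) := by
      rw [hCG]; ring
    rw [this]
    exact hChom.sub (res0_hom R 3 hR).rename_isHomogeneous
  refine ⟨Fin.cons (X (Sum.inr 0)) (fun i => rename (Sum.inr ∘ Fin.succ) (Lf i)),
    Fin.cons (MvPolynomial.map (Int.castRingHom ℚ) G) (fun i => rename (Sum.inr ∘ Fin.succ) (Qf i)),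
    ?_, ?_, ?_⟩
  · intro i
    refine Fin.cases ?_ (fun i => ?_) i
    · exact isHomogeneous_X _ _
    · exact (hLf i).rename_isHomogeneous
  · intro i
    refine Fin.cases ?_ (fun i => ?_) i
    · exact hGhom.map _
    · exact (hQf i).rename_isHomogeneous
  · rw [Fin.sum_univ_succ]
    simp only [Fin.cons_zero, Fin.cons_succ]
    rw [hCG, map_add, map_mul, map_X, map_rename, hP, map_sum]
    simp only [map_mul]

lemma good_main {m s : ℕ} (hm : 0 < m) (A₁ : Matrix (Fin m) (Fin m) ℤ)
    (hrank : 5 ≤ Matrix.rank ((A₁ + A₁ᵀ).map ((↑) : ℤ → ℚ)))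
    (q : Fin m → MvPolynomial (Fin (s + 1)) ℤ) (hq : ∀ j, (q j).IsHomogeneous 2)
    (R : MvPolynomial (Fin (s + 1)) ℤ) (hR : R.IsHomogeneous 3)
    (Cpoly : MvPolynomial (Fin m ⊕ Fin (s + 1)) ℤ)
    (hC : Cpoly = X (Sum.inr 0) *
        rename Sum.inl (∑ a, ∑ b, C (A₁ a b) * X a * X b)
      + ∑ j, X (Sum.inl j) * rename Sum.inr (q j) + rename Sum.inr R)
    (hhinv : ¬ ∃ L Q : Fin 5 → MvPolynomial (Fin m ⊕ Fin (s + 1)) ℚ,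
      (∀ i, (L i).IsHomogeneous 1) ∧ (∀ i, (Q i).IsHomogeneous 2) ∧
        MvPolynomial.map (Int.castRingHom ℚ) Cpoly = ∑ i, L i * Q i) :
    Good s (SgF A₁ q R) := by
  classical
  obtain ⟨W, V, D0, hD0, hW⟩ := int_cert (A₁ + A₁ᵀ) hrank
  by_cases hcase : ∃ j0, ∃ v : Fin s → ℤ, eval (Fin.cons 0 v) (q j0) ≠ 0
  · obtain ⟨j0, v, hv⟩ := hcase
    exact caseA A₁ W V D0 hD0 hW q hq R hR j0 v hv
  · push Not at hcase
    have hq0 : ∀ j, res0 (q j) = 0 := by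
      intro j
      apply MvPolynomial.funext
      intro t
      rw [eval_res0, hcase j t, map_zero]
    have hR0 := res0_hom R 3 hR
    obtain ⟨B, hB, hBR⟩ := exists_B (res0 R) hR0
    have hND := ND_of_hinv A₁ q hq R hR Cpoly hC hhinv hq0 B hB (fun u => hBR ℚ u)
    obtain ⟨v, hv⟩ : ∃ v : Fin s → ℤ, eval v (res0 R) ≠ 0 := by
      by_contra hcon
      push Not at hcon
      have h0 : res0 R = 0 := by
        apply MvPolynomial.funext
        intro t
        rw [hcon t, map_zero]
      obtain ⟨v, _, hv⟩ := hND ⊤ (by rw [finrank_top, Module.finrank_fin_fun]; omega)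
      apply hv
      have := hBR ℚ v
      rw [h0] at this
      simpa [Gc] using this
    obtain ⟨p0, hp0⟩ := count_large hB hND
    refine caseB hm A₁ W V D0 hD0 hW q hq R hR hq0 hR0 v hv (p0 + 7) (fun ℓ hℓ hle => ?_)
    refine (hp0 ℓ hℓ (by omega)).trans (le_of_eq ?_)
    congr 2
    ext t
    simp only [Finset.mem_filter, Finset.mem_univ, true_and]
    rw [hBR (ZMod ℓ) t]
    have h36 : (36 : ZMod ℓ) ≠ 0 := by
      intro h
      have h1 : ((36 : ℕ) : ZMod ℓ) = 0 := by exact_mod_cast h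
      rw [ZMod.natCast_eq_zero_iff] at h1
      have h2 : ℓ ∣ 6 ^ 2 := by norm_num; exact h1
      have h3 := Nat.le_of_dvd (by norm_num) (hℓ.out.dvd_of_dvd_pow h2)
      omega
    simp [h36]

end Cub

/-- For `C(x,y) = y₁F₁(x) + Σ x_j q_j(y) + R(y)` with `F₁` nonsingular
indefinite of rank `r ≥ 5`, `h(C) ≥ 6`, `C` irreducible with nonsingular `p`-adic zeros for
all `p`, the singular series of the fibres satisfy `Σ_{y ∈ 𝒞_h(Y)} 𝔖(F_y) ≫ Y^h / log Y`. -/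
theorem stmt10 (n h m : ℕ) (hh : 0 < h) (hhn : h < n) (hm : m = n - h)
    (A₁ : Matrix (Fin m) (Fin m) ℤ) (r : ℕ) (hr5 : 5 ≤ r)
    (hrank : Matrix.rank ((A₁ + A₁ᵀ).map ((↑) : ℤ → ℚ)) = r)
    (hindef : (∃ u : Fin m → ℝ, 0 < u ⬝ᵥ (A₁.map ((↑) : ℤ → ℝ)).mulVec u) ∧
      (∃ u : Fin m → ℝ, u ⬝ᵥ (A₁.map ((↑) : ℤ → ℝ)).mulVec u < 0))
    (q : Fin m → MvPolynomial (Fin h) ℤ) (hq : ∀ j, (q j).IsHomogeneous 2)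
    (R : MvPolynomial (Fin h) ℤ) (hR : R.IsHomogeneous 3)
    (Cpoly : MvPolynomial (Fin m ⊕ Fin h) ℤ)
    (hC : Cpoly = X (Sum.inr ⟨0, hh⟩) *
        rename Sum.inl (∑ a, ∑ b, C (A₁ a b) * X a * X b)
      + ∑ j, X (Sum.inl j) * rename Sum.inr (q j) + rename Sum.inr R)
    (hhinv : ¬ ∃ L Q : Fin 5 → MvPolynomial (Fin m ⊕ Fin h) ℚ,
      (∀ i, (L i).IsHomogeneous 1) ∧ (∀ i, (Q i).IsHomogeneous 2) ∧
        MvPolynomial.map (Int.castRingHom ℚ) Cpoly = ∑ i, L i * Q i)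
    (hirr : Irreducible (MvPolynomial.map (Int.castRingHom ℚ) Cpoly))
    (hpadic : ∀ (p : ℕ) [Fact p.Prime], ∃ z : (Fin m ⊕ Fin h) → ℚ_[p],
      eval z (MvPolynomial.map (Int.castRingHom ℚ_[p]) Cpoly) = 0 ∧
      ∃ u, eval z (pderiv u (MvPolynomial.map (Int.castRingHom ℚ_[p]) Cpoly)) ≠ 0) :
    ∃ c > (0 : ℝ), ∃ K > (0 : ℝ), ∃ Y₀ : ℝ, ∀ Y : ℝ, Y₀ ≤ Y →
      ∃ 𝒞 : Finset (Fin h → ℤ),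
        (∀ y ∈ 𝒞, ∀ i, (|y i| : ℝ) ≤ K * Y) ∧
        c * Y ^ h / Real.log Y ≤
          ∑ y ∈ 𝒞, (singSeries m fun x => eval (Sum.elim x y) Cpoly).re := by
  obtain ⟨s, rfl⟩ : ∃ s, h = s + 1 := ⟨h - 1, by omega⟩
  obtain ⟨a, ha, c, hc, K, hK, ℓ0, H⟩ :=
    Cub.good_main (by omega : 0 < m) A₁ (by omega) q hq R hR Cpoly hC hhinv
  refine Cub.final_of_primes (s + 1) hh
    (fun y => (singSeries m fun x => eval (Sum.elim x y) Cpoly).re) a ha c hc K hK ℓ0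
    fun ℓ hℓ hle => ?_
  obtain ⟨𝒞, h1, h2⟩ := H ℓ hℓ hle
  refine ⟨𝒞, h1, h2.trans (le_of_eq ?_)⟩
  refine Finset.sum_congr rfl fun y _ => ?_
  unfold Cub.SgF
  congr 2
  funext x
  rw [hC]
  have e1 : (Sum.elim x y) ∘ Sum.inl = x := rfl
  have e2 : (Sum.elim x y) ∘ Sum.inr = y := rfl
  simp only [map_add, map_mul, map_sum, eval_X, eval_rename, e1, e2, Sum.elim_inr, Sum.elim_inl, Cub.qf,
    eval_C, Matrix.smul_apply, smul_eq_mul, Finset.mul_sum, Int.cast_id]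
  congr 2
  · refine Finset.sum_congr rfl fun i _ => Finset.sum_congr rfl fun j _ => ?_
    change y 0 * A₁ i j * x i * x j = y 0 * (A₁ i j * x i * x j)
    ring
  · exact Finset.sum_congr rfl fun j _ => mul_comm _ _
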